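/- arXiv:1507.03099 — 2 statements merged into one kernel-verified Lean document; each statement's English description precedes it below -/
import Mathlib

section
/- For every integer n ≥ 0, B_3(n) = ∑_{d | n+1, d ≡ 1 (mod 3)} ((n+1)/d)² − ∑_{d | n+1, d ≡ 2 (mod 3)} ((n+1)/d)², where both sums range over positive divisors d of n+1 in the indicated residue class modulo 3. -/
/-- The hook length of the cell `(i, j)` in a Young diagram `μ`:
arm length + leg length + 1. -/
def YoungDiagram.hookLength (μ : YoungDiagram) (i j : ℕ) : ℕ :=
  μ.rowLen i + μ.colLen j - i - j - 1

/-- A Young diagram (equivalently, a partition) is a 3-core if none of its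
hook numbers is divisible by 3. -/
def YoungDiagram.IsThreeCore (μ : YoungDiagram) : Prop :=
  ∀ c ∈ μ.cells, ¬ (3 ∣ μ.hookLength c.1 c.2)

/-- `a3 n` is the number of 3-core partitions of `n`. -/
noncomputable def a3 (n : ℕ) : ℕ :=
  Nat.card {μ : YoungDiagram // μ.card = n ∧ μ.IsThreeCore}

/-- `A3 n` is the number of partition pairs of `n` in which each partition is a 3-core. -/
noncomputable def A3 (n : ℕ) : ℕ :=
  Nat.card {p : YoungDiagram × YoungDiagram //
    p.1.card + p.2.card = n ∧ p.1.IsThreeCore ∧ p.2.IsThreeCore}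

/-- `B3 n` is the number of partition triples of `n` in which each partition is a 3-core. -/
noncomputable def B3 (n : ℕ) : ℕ :=
  Nat.card {p : YoungDiagram × YoungDiagram × YoungDiagram //
    p.1.card + p.2.1.card + p.2.2.card = n ∧
    p.1.IsThreeCore ∧ p.2.1.IsThreeCore ∧ p.2.2.IsThreeCore}


namespace B3Proof
open Finset

/-- twice the Kronecker sign -/
def sg (x y : ℤ) : ℤ := x.sign + y.sign

lemma fay (x₁ y₁ x₂ y₂ : ℤ) (h1 : x₁ ≠ 0) (h2 : y₁ ≠ 0) (h3 : x₂ ≠ 0) (h4 : y₂ ≠ 0) :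
    sg x₁ y₁ * sg x₂ y₂ = sg (x₁ - x₂) y₁ * sg x₂ (y₁ + y₂) + sg (x₂ - x₁) y₂ * sg x₁ (y₁ + y₂) := by
  have e : (x₂ - x₁).sign = - (x₁ - x₂).sign := by rw [← Int.sign_neg]; congr 1; ring
  have A : x₁.sign * x₂.sign + (x₁ - x₂).sign * (x₁.sign - x₂.sign) = 1 := by
    rcases lt_or_gt_of_ne h1 with h1 | h1 <;> rcases lt_or_gt_of_ne h3 with h3 | h3
    · simp [Int.sign_eq_neg_one_of_neg h1, Int.sign_eq_neg_one_of_neg h3]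
    · simp [Int.sign_eq_neg_one_of_neg h1, Int.sign_eq_one_of_pos h3,
        Int.sign_eq_neg_one_of_neg (show x₁ - x₂ < 0 by omega)]
    · simp [Int.sign_eq_one_of_pos h1, Int.sign_eq_neg_one_of_neg h3,
        Int.sign_eq_one_of_pos (show 0 < x₁ - x₂ by omega)]
    · simp [Int.sign_eq_one_of_pos h1, Int.sign_eq_one_of_pos h3]
  have B : y₁.sign * y₂.sign + 1 = (y₁ + y₂).sign * (y₁.sign + y₂.sign) := by
    rcases lt_or_gt_of_ne h2 with h1 | h1 <;> rcases lt_or_gt_of_ne h4 with h3 | h3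
    · simp [Int.sign_eq_neg_one_of_neg h1, Int.sign_eq_neg_one_of_neg h3,
        Int.sign_eq_neg_one_of_neg (show y₁ + y₂ < 0 by omega)]
    · simp [Int.sign_eq_neg_one_of_neg h1, Int.sign_eq_one_of_pos h3]
    · simp [Int.sign_eq_one_of_pos h1, Int.sign_eq_neg_one_of_neg h3]
    · simp [Int.sign_eq_one_of_pos h1, Int.sign_eq_one_of_pos h3,
        Int.sign_eq_one_of_pos (show 0 < y₁ + y₂ by omega)]
  unfold sg
  rw [e]
  linear_combination A + B

lemma sg_pos {x y : ℤ} (hx : x ≠ 0) (hy : y ≠ 0) (h : sg x y ≠ 0) : 0 < x * y := by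
  rcases lt_or_gt_of_ne hx with h1 | h1 <;> rcases lt_or_gt_of_ne hy with h3 | h3
  · exact mul_pos_of_neg_of_neg h1 h3
  · simp [sg, Int.sign_eq_neg_one_of_neg h1, Int.sign_eq_one_of_pos h3] at h
  · simp [sg, Int.sign_eq_one_of_pos h1, Int.sign_eq_neg_one_of_neg h3] at h
  · exact mul_pos h1 h3

lemma abs_le_of_mul {x y M : ℤ} (h : 0 < x * y) (hM : x * y ≤ M) : -M ≤ x ∧ x ≤ M ∧ -M ≤ y ∧ y ≤ M := by
  have hx : x ≠ 0 := by rintro rfl; simp at h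
  rcases lt_or_gt_of_ne hx with h1 | h1
  · have : y < 0 := by by_contra hh; nlinarith
    refine ⟨by nlinarith, by nlinarith, by nlinarith, by nlinarith⟩
  · have : 0 < y := by by_contra hh; nlinarith
    refine ⟨by nlinarith, by nlinarith, by nlinarith, by nlinarith⟩

abbrev Z4 := (ℤ × ℤ) × (ℤ × ℤ)

lemma finite_box (M : ℤ) : {p : Z4 | 0 < p.1.1 * p.1.2 ∧ 0 < p.2.1 * p.2.2 ∧
    p.1.1 * p.1.2 + p.2.1 * p.2.2 = M}.Finite := by
  apply Set.Finite.subset (Finset.finite_toSet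
    ((Icc (-M) M ×ˢ Icc (-M) M) ×ˢ (Icc (-M) M ×ˢ Icc (-M) M)))
  rintro ⟨⟨a, b⟩, ⟨c, d⟩⟩ ⟨h1, h2, h3⟩
  simp only at h1 h2 h3
  have := abs_le_of_mul h1 (by omega : a * b ≤ M)
  have := abs_le_of_mul h2 (by omega : c * d ≤ M)
  simp
  omega

lemma conv (f g : ℤ → ℤ → ℤ) (hf : ∀ x y, f x y ≠ 0 → 0 < x * y) (hg : ∀ x y, g x y ≠ 0 → 0 < x * y)
    (M : ℕ) :
    ∑ᶠ p : Z4, (if p.1.1 * p.1.2 + p.2.1 * p.2.2 = (M : ℤ) then f p.1.1 p.1.2 * g p.2.1 p.2.2 else 0)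
     = ∑ km ∈ antidiagonal M, (∑ q ∈ Int.divisorsAntidiag km.1, f q.1 q.2) *
        (∑ q ∈ Int.divisorsAntidiag km.2, g q.1 q.2) := by
  classical
  rw [finsum_eq_sum_of_support_subset (s := (antidiagonal M).biUnion
    (fun km => Int.divisorsAntidiag km.1 ×ˢ Int.divisorsAntidiag km.2))]
  · rw [Finset.sum_biUnion]
    · apply Finset.sum_congr rfl
      rintro ⟨k, m⟩ hkm
      rw [Finset.sum_mul_sum, Finset.sum_product]
      apply Finset.sum_congr rfl
      rintro ⟨a, b⟩ h1
      apply Finset.sum_congr rfl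
      rintro ⟨c, d⟩ h2
      simp at h1 h2 hkm ⊢
      intro h
      exfalso; apply h; rw [h1.1, h2.1]; exact_mod_cast hkm
    · rintro ⟨k, m⟩ h1 ⟨k', m'⟩ h2 hne
      simp only [Function.onFun]
      rw [Finset.disjoint_left]
      rintro ⟨⟨a, b⟩, ⟨c, d⟩⟩ h3 h4
      simp at h3 h4
      apply hne
      have := h3.1.1.symm.trans h4.1.1
      have := h3.2.1.symm.trans h4.2.1
      ext <;> simp <;> omega
  · rintro ⟨⟨a, b⟩, ⟨c, d⟩⟩ h
    simp only [Function.mem_support, ne_eq, ite_eq_right_iff, mul_eq_zero, not_forall, not_or] at h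
    obtain ⟨h, h1, h2⟩ := h
    have h1 := hf _ _ h1
    have h2 := hg _ _ h2
    simp only [coe_biUnion, Set.mem_iUnion, mem_coe, mem_product, Int.mem_divisorsAntidiag]
    refine ⟨((a * b).toNat, (c * d).toNat), ?_, ?_⟩
    · simp; omega
    · simp; omega

/-! ### The first identity -/

def e1 : Z4 ≃ Z4 where
  toFun p := ((p.1.1 - p.2.1 - p.1.2 - p.2.2, p.1.2), (- p.1.2 - p.2.2, - p.2.1 - p.1.2))
  invFun p := ((p.1.1 - p.2.1 - p.1.2 - p.2.2, p.1.2), (- p.1.2 - p.2.2, - p.2.1 - p.1.2))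
  left_inv := by rintro ⟨⟨a, b⟩, ⟨c, d⟩⟩; simp; ring_nf
  right_inv := by rintro ⟨⟨a, b⟩, ⟨c, d⟩⟩; simp; ring_nf

def e2 : Z4 ≃ Z4 where
  toFun p := ((p.2.1, 2 * p.1.2 + p.2.2), (2 * p.2.1 - p.1.1, - p.1.2))
  invFun p := ((2 * p.1.1 - p.2.1, - p.2.2), (p.1.1, p.1.2 + 2 * p.2.2))
  left_inv := by rintro ⟨⟨a, b⟩, ⟨c, d⟩⟩; simp
  right_inv := by rintro ⟨⟨a, b⟩, ⟨c, d⟩⟩; simp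

def eu : Z4 ≃ Z4 where
  toFun p := ((p.1.1 - p.2.1, p.1.2), (p.2.1, p.1.2 + p.2.2))
  invFun p := ((p.1.1 + p.2.1, p.1.2), (p.2.1, p.2.2 - p.1.2))
  left_inv := by rintro ⟨⟨a, b⟩, ⟨c, d⟩⟩; simp
  right_inv := by rintro ⟨⟨a, b⟩, ⟨c, d⟩⟩; simp

lemma fin_u (M : ℤ) (φ : Z4 → ℤ)
    (h : ∀ x₁ y₁ x₂ y₂, φ ((x₁, y₁), (x₂, y₂)) ≠ 0 → 0 < (x₁ - x₂) * y₁ ∧ 0 < x₂ * (y₁ + y₂) ∧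
      x₁ * y₁ + x₂ * y₂ = M) : (Function.support φ).Finite := by
  apply Set.Finite.subset ((finite_box M).preimage (f := eu) eu.injective.injOn)
  rintro ⟨⟨a, b⟩, ⟨c, d⟩⟩ hp
  have := h _ _ _ _ hp
  simp only [eu, Equiv.coe_fn_mk, Set.preimage_ofPred_eq, Set.mem_ofPred_eq]
  refine ⟨this.1, this.2.1, ?_⟩
  linarith [this.2.2]

lemma fin_0 (M : ℤ) (φ : Z4 → ℤ)
    (h : ∀ x₁ y₁ x₂ y₂, φ ((x₁, y₁), (x₂, y₂)) ≠ 0 → 0 < x₁ * y₁ ∧ 0 < x₂ * y₂ ∧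
      x₁ * y₁ + x₂ * y₂ = M) : (Function.support φ).Finite := by
  apply Set.Finite.subset (finite_box M)
  rintro ⟨⟨a, b⟩, ⟨c, d⟩⟩ hp
  exact h _ _ _ _ hp

/-- off-diagonal vanishing, first identity -/
lemma off1 (M : ℤ) :
    ∑ᶠ p : Z4, (if (p.1.1 % 3 = 1 ∧ p.1.2 % 3 = 1 ∧ p.2.1 % 3 = 1 ∧ p.2.2 % 3 = 1 ∧
      p.1.1 * p.1.2 + p.2.1 * p.2.2 = M ∧ p.1.1 ≠ p.2.1) then sg p.1.1 p.1.2 * sg p.2.1 p.2.2 else 0) = 0 := by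
  set φ : Z4 → ℤ := fun p => if (p.1.1 % 3 = 1 ∧ p.1.2 % 3 = 1 ∧ p.2.1 % 3 = 1 ∧ p.2.2 % 3 = 1 ∧
      p.1.1 * p.1.2 + p.2.1 * p.2.2 = M ∧ p.1.1 ≠ p.2.1) then
      sg (p.1.1 - p.2.1) p.1.2 * sg p.2.1 (p.1.2 + p.2.2) else 0 with hφ
  have hfin : (Function.support φ).Finite := by
    apply fin_u M
    intro x₁ y₁ x₂ y₂ h
    simp only [hφ, ne_eq, ite_eq_right_iff, mul_eq_zero, not_forall, not_or] at h
    obtain ⟨⟨a, b, c, d, e, f⟩, g, i⟩ := h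
    exact ⟨sg_pos (by omega) (by omega) g, sg_pos (by omega) (by omega) i, e⟩
  have hz : ∑ᶠ p, φ p = 0 := by
    have h1 : ∑ᶠ p, φ (e1 p) = ∑ᶠ p, φ p := finsum_comp_equiv e1
    have h2 : ∀ p, φ (e1 p) = - φ p := by
      rintro ⟨⟨a, b⟩, ⟨c, d⟩⟩
      simp only [hφ, e1, Equiv.coe_fn_mk]
      have : ((a - c - b - d) % 3 = 1 ∧ b % 3 = 1 ∧ (-b - d) % 3 = 1 ∧ (-c - b) % 3 = 1 ∧
        (a - c - b - d) * b + (-b - d) * (-c - b) = M ∧ (a - c - b - d) ≠ (-b - d)) ↔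
        (a % 3 = 1 ∧ b % 3 = 1 ∧ c % 3 = 1 ∧ d % 3 = 1 ∧ a * b + c * d = M ∧ a ≠ c) := by
        have : (a - c - b - d) * b + (-b - d) * (-c - b) = a * b + c * d := by ring
        rw [this]; omega
      simp only [this]
      split_ifs with h
      · have e1 : (a - c - b - d - (-b - d)) = a - c := by ring
        have e2 : b + (-c - b) = - c := by ring
        have e3 : -b-d = -(b+d) := by ring
        rw [e1, e2, e3]
        unfold sg
        rw [Int.sign_neg, Int.sign_neg]; ring
      · simp
    simp only [h2, finsum_neg_distrib] at h1
    omega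
  have hsw : ∑ᶠ p : Z4, φ p.swap = 0 := by
    rw [← hz]; exact finsum_comp_equiv (Equiv.prodComm _ _)
  have hfin' : (Function.support fun p : Z4 => φ p.swap).Finite :=
    hfin.preimage (f := Prod.swap) (Prod.swap_injective.injOn)
  have := finsum_add_distrib hfin hfin'
  rw [hz, hsw] at this
  refine (finsum_congr ?_).trans (this.trans (add_zero 0))
  rintro ⟨⟨a, b⟩, ⟨c, d⟩⟩
  simp only [hφ, Prod.swap]
  have : (c % 3 = 1 ∧ d % 3 = 1 ∧ a % 3 = 1 ∧ b % 3 = 1 ∧ c * d + a * b = M ∧ c ≠ a) ↔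
      (a % 3 = 1 ∧ b % 3 = 1 ∧ c % 3 = 1 ∧ d % 3 = 1 ∧ a * b + c * d = M ∧ a ≠ c) := by
    omega
  simp only [this]
  split_ifs with h
  · rw [fay a b c d (by omega) (by omega) (by omega) (by omega), add_comm d b]
  · simp

/-- off-diagonal vanishing, second identity -/
lemma off2 (M : ℤ) :
    ∑ᶠ p : Z4, (if (p.1.1 % 3 = 1 ∧ p.1.2 % 3 = 1 ∧ p.2.1 % 3 = 1 ∧ p.2.2 % 3 = 2 ∧
      p.1.1 * p.1.2 + p.2.1 * p.2.2 = M ∧ p.1.1 ≠ p.2.1) then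
      (p.1.2 + p.2.2) * (sg p.1.1 p.1.2 * sg p.2.1 p.2.2) else 0) = 0 := by
  set φ : Z4 → ℤ := fun p => if (p.1.1 % 3 = 1 ∧ p.1.2 % 3 = 1 ∧ p.2.1 % 3 = 1 ∧ p.2.2 % 3 = 2 ∧
      p.1.1 * p.1.2 + p.2.1 * p.2.2 = M ∧ p.1.1 ≠ p.2.1) then
      (p.1.2 + p.2.2) * (sg (p.1.1 - p.2.1) p.1.2 * sg p.2.1 (p.1.2 + p.2.2)) else 0 with hφ
  set ψ : Z4 → ℤ := fun p => if (p.1.1 % 3 = 1 ∧ p.1.2 % 3 = 1 ∧ p.2.1 % 3 = 1 ∧ p.2.2 % 3 = 2 ∧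
      p.1.1 * p.1.2 + p.2.1 * p.2.2 = M ∧ p.1.1 ≠ p.2.1) then
      (p.1.2 + p.2.2) * (sg (p.2.1 - p.1.1) p.2.2 * sg p.1.1 (p.1.2 + p.2.2)) else 0 with hψ
  have hfin : (Function.support φ).Finite := by
    apply fin_u M
    intro x₁ y₁ x₂ y₂ h
    simp only [hφ, ne_eq, ite_eq_right_iff, mul_eq_zero, not_forall, not_or] at h
    obtain ⟨⟨a, b, c, d, e, f⟩, k, g, i⟩ := h
    exact ⟨sg_pos (by omega) (by omega) g, sg_pos (by omega) (by omega) i, e⟩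
  have h2 : ∀ p, ψ (e2 p) = - φ p := by
    rintro ⟨⟨a, b⟩, ⟨c, d⟩⟩
    simp only [hφ, hψ, e2, Equiv.coe_fn_mk]
    have : (c % 3 = 1 ∧ (2 * b + d) % 3 = 1 ∧ (2 * c - a) % 3 = 1 ∧ (-b) % 3 = 2 ∧
      c * (2 * b + d) + (2 * c - a) * (-b) = M ∧ c ≠ (2 * c - a)) ↔
      (a % 3 = 1 ∧ b % 3 = 1 ∧ c % 3 = 1 ∧ d % 3 = 2 ∧ a * b + c * d = M ∧ a ≠ c) := by
      have : c * (2 * b + d) + (2 * c - a) * (-b) = a * b + c * d := by ring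
      rw [this]; omega
    simp only [this]
    split_ifs with h
    · have e1 : (2 * c - a - c) = -(a - c) := by ring
      have e2 : 2 * b + d + -b = b + d := by ring
      rw [e1, e2]
      unfold sg
      rw [Int.sign_neg, Int.sign_neg]; ring
    · simp
  have hfin' : (Function.support ψ).Finite := by
    have : Function.support ψ = e2 '' Function.support φ := by
      ext p
      constructor
      · intro hp
        refine ⟨e2.symm p, ?_, by simp⟩
        have := h2 (e2.symm p)
        simp only [Equiv.apply_symm_apply] at this
        simp only [Function.mem_support] at hp ⊢
        omega
      · rintro ⟨q, hq, rfl⟩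
        have := h2 q
        simp only [Function.mem_support] at hq ⊢
        omega
    rw [this]; exact hfin.image _
  have hz : ∑ᶠ p, φ p + ∑ᶠ p, ψ p = 0 := by
    have h1 : ∑ᶠ p, ψ (e2 p) = ∑ᶠ p, ψ p := finsum_comp_equiv e2
    simp only [h2, finsum_neg_distrib] at h1
    omega
  refine (finsum_congr ?_).trans ((finsum_add_distrib hfin hfin').trans hz)
  rintro ⟨⟨a, b⟩, ⟨c, d⟩⟩
  simp only [hφ, hψ]
  split_ifs with h
  · rw [fay a b c d (by omega) (by omega) (by omega) (by omega)]; ring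
  · simp

end B3Proof

namespace B3Proof
open Finset

def chi (n : ℕ) : ℤ := if n % 3 = 1 then 1 else if n % 3 = 2 then -1 else 0

def gg (n : ℕ) : ℤ := ∑ d ∈ n.divisors, chi d

def f11 (x y : ℤ) : ℤ := if x % 3 = 1 ∧ y % 3 = 1 then sg x y else 0
def f12 (x y : ℤ) : ℤ := if x % 3 = 1 ∧ y % 3 = 2 then sg x y else 0

lemma f11_pos (x y : ℤ) (h : f11 x y ≠ 0) : 0 < x * y := by
  unfold f11 at h
  split_ifs at h with h1
  · exact sg_pos (by omega) (by omega) h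
  · exact absurd rfl h

lemma f12_pos (x y : ℤ) (h : f12 x y ≠ 0) : 0 < x * y := by
  unfold f12 at h
  split_ifs at h with h1
  · exact sg_pos (by omega) (by omega) h
  · exact absurd rfl h

lemma sum_D (n : ℕ) (F : ℤ → ℤ → ℤ) : ∑ q ∈ Int.divisorsAntidiag n, F q.1 q.2 =
    ∑ q ∈ n.divisorsAntidiagonal, (F q.1 q.2 + F (-q.1) (-q.2)) := by
  rw [Int.divisorsAntidiag_natCast, Finset.sum_disjUnion, Finset.sum_map, Finset.sum_map,
    ← Finset.sum_add_distrib]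
  apply Finset.sum_congr rfl
  rintro ⟨a, b⟩ h
  simp

lemma sg_nat {a b : ℕ} (ha : 0 < a) (hb : 0 < b) : sg a b = 2 := by
  unfold sg
  rw [Int.sign_eq_one_of_pos (by omega), Int.sign_eq_one_of_pos (by omega)]; rfl

lemma sg_neg {a b : ℤ} : sg (-a) (-b) = - sg a b := by
  unfold sg
  rw [Int.sign_neg, Int.sign_neg]; ring

lemma mod3_mul (a b : ℕ) : (a % 3 = 0 ∨ a % 3 = 1 ∨ a % 3 = 2) ∧ (b % 3 = 0 ∨ b % 3 = 1 ∨ b % 3 = 2) ∧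
    a * b % 3 = (a % 3) * (b % 3) % 3 := ⟨by omega, by omega, Nat.mul_mod _ _ _⟩

lemma chi_mul (a b : ℕ) : chi (a * b) = chi a * chi b := by
  obtain ⟨h1, h2, h3⟩ := mod3_mul a b
  unfold chi
  rcases h1 with h1 | h1 | h1 <;> rcases h2 with h2 | h2 | h2 <;> simp [h1, h2, h3]

lemma sum_f11 (k : ℕ) : ∑ q ∈ Int.divisorsAntidiag k, f11 q.1 q.2 = if k % 3 = 1 then 2 * gg k else 0 := by
  rw [sum_D]
  have key : ∀ q ∈ k.divisorsAntidiagonal, (f11 q.1 q.2 + f11 (-q.1) (-q.2)) =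
      if k % 3 = 1 then 2 * chi q.1 else 0 := by
    rintro ⟨a, b⟩ h
    simp only [Nat.mem_divisorsAntidiagonal] at h
    obtain ⟨hab, hk⟩ := h
    have ha : 0 < a := by rcases Nat.eq_zero_or_pos a with rfl | h; simp at hab; omega; exact h
    have hb : 0 < b := by rcases Nat.eq_zero_or_pos b with rfl | h; simp at hab; omega; exact h
    obtain ⟨h1, h2, h3⟩ := mod3_mul a b
    rw [hab] at h3
    simp only [f11, sg_neg, sg_nat ha hb, chi]
    rcases h1 with h1 | h1 | h1 <;> rcases h2 with h2 | h2 | h2 <;> rw [h1, h2] at h3 <;>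
      split_ifs <;> omega
  rw [Finset.sum_congr rfl key]
  split_ifs with h
  · rw [← Finset.mul_sum, gg, Nat.sum_divisorsAntidiagonal (fun a _ => chi a)]
  · simp

lemma sum_f12 (k : ℕ) : ∑ q ∈ Int.divisorsAntidiag k, f12 q.1 q.2 = 0 := by
  have key : ∀ q ∈ k.divisorsAntidiagonal, (f12 q.1 q.2 + f12 (-q.1) (-q.2)) =
      (if k % 3 = 2 then chi q.1 - chi q.2 else 0) := by
    rintro ⟨a, b⟩ h
    simp only [Nat.mem_divisorsAntidiagonal] at h
    obtain ⟨hab, hk⟩ := h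
    have ha : 0 < a := by rcases Nat.eq_zero_or_pos a with rfl | h; simp at hab; omega; exact h
    have hb : 0 < b := by rcases Nat.eq_zero_or_pos b with rfl | h; simp at hab; omega; exact h
    obtain ⟨h1, h2, h3⟩ := mod3_mul a b
    rw [hab] at h3
    simp only [f12, sg_neg, sg_nat ha hb, chi]
    rcases h1 with h1 | h1 | h1 <;> rcases h2 with h2 | h2 | h2 <;> rw [h1, h2] at h3 <;>
      split_ifs <;> omega
  rw [sum_D, Finset.sum_congr rfl key]
  split_ifs with h
  · rw [Finset.sum_sub_distrib, Nat.sum_divisorsAntidiagonal (fun a _ => chi a),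
      Nat.sum_divisorsAntidiagonal' (fun _ a => chi a)]; simp
  · simp

lemma sum_yf12 (k : ℕ) : ∑ q ∈ Int.divisorsAntidiag k, q.2 * f12 q.1 q.2 =
    if k % 3 = 2 then 2 * ∑ d ∈ k.divisors, (d : ℤ) else 0 := by
  have key : ∀ q ∈ k.divisorsAntidiagonal, (q.2 * f12 q.1 q.2 + (-q.2) * f12 (-q.1) (-q.2)) =
      (if k % 3 = 2 then 2 * (q.2 : ℤ) else 0) := by
    rintro ⟨a, b⟩ h
    simp only [Nat.mem_divisorsAntidiagonal] at h
    obtain ⟨hab, hk⟩ := h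
    have ha : 0 < a := by rcases Nat.eq_zero_or_pos a with rfl | h; simp at hab; omega; exact h
    have hb : 0 < b := by rcases Nat.eq_zero_or_pos b with rfl | h; simp at hab; omega; exact h
    obtain ⟨h1, h2, h3⟩ := mod3_mul a b
    rw [hab] at h3
    simp only [f12, sg_neg, sg_nat ha hb]
    rcases h1 with h1 | h1 | h1 <;> rcases h2 with h2 | h2 | h2 <;> rw [h1, h2] at h3 <;>
      split_ifs <;> omega
  rw [sum_D k (fun x y => y * f12 x y), Finset.sum_congr rfl key]
  split_ifs with h
  · rw [← Finset.mul_sum, Nat.sum_divisorsAntidiagonal' (fun _ a => (a : ℤ))]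
  · simp

lemma diag (G : ℤ → ℤ → ℤ → ℤ) (hG : ∀ x y z, G x y z ≠ 0 → 0 < x * y ∧ 0 < x * z) (M : ℕ) :
    ∑ᶠ p : Z4, (if p.1.1 = p.2.1 ∧ p.1.1 * p.1.2 + p.2.1 * p.2.2 = (M : ℤ) then G p.1.1 p.1.2 p.2.2 else 0)
    = ∑ q ∈ M.divisorsAntidiagonal, ∑ y ∈ range q.2, (G q.1 y (q.2 - y) + G (-q.1) (-y) (-(q.2 - y))) := by
  classical
  have step : ∑ᶠ p : Z4, (if p.1.1 = p.2.1 ∧ p.1.1 * p.1.2 + p.2.1 * p.2.2 = (M : ℤ) then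
      G p.1.1 p.1.2 p.2.2 else 0) = ∑ q ∈ Int.divisorsAntidiag M, ∑ y ∈ Icc (-M : ℤ) M, G q.1 y (q.2 - y) := by
    rw [finsum_eq_sum_of_support_subset (s := (Int.divisorsAntidiag M ×ˢ Icc (-M : ℤ) M).image
      (fun t => ((t.1.1, t.2), (t.1.1, t.1.2 - t.2))))]
    · rw [Finset.sum_image, Finset.sum_product]
      · apply Finset.sum_congr rfl
        rintro ⟨x, Y⟩ hq
        apply Finset.sum_congr rfl
        intro y hy
        simp at hq
        have : x * y + x * (Y - y) = M := by rw [← hq.1]; ring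
        simp [this]
      · rintro ⟨⟨x, Y⟩, y⟩ _ ⟨⟨x', Y'⟩, y'⟩ _ h
        simp at h ⊢
        omega
    · rintro ⟨⟨a, b⟩, ⟨c, d⟩⟩ h
      simp only [Function.mem_support, ne_eq, ite_eq_right_iff, not_forall] at h
      obtain ⟨⟨rfl, h⟩, h1⟩ := h
      have := hG _ _ _ h1
      have h3 := abs_le_of_mul this.1 (by omega : a * b ≤ M)
      simp only [coe_image, Set.mem_image]
      refine ⟨((a, b + d), b), ?_, ?_⟩
      · simp
        refine ⟨⟨by rw [← h]; ring, by omega⟩, by omega⟩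
      · simp
  rw [step, sum_D M (fun x Y => ∑ y ∈ Icc (-M : ℤ) M, G x y (Y - y))]
  apply Finset.sum_congr rfl
  rintro ⟨d, e⟩ h
  simp only [Nat.mem_divisorsAntidiagonal] at h
  obtain ⟨hab, hk⟩ := h
  have hd : 0 < d := by rcases Nat.eq_zero_or_pos d with rfl | h; simp at hab; omega; exact h
  have heM : e ≤ M := by rw [← hab]; exact Nat.le_mul_of_pos_left _ hd
  rw [Finset.sum_add_distrib]
  congr 1
  · symm
    rw [← Finset.sum_image (s := range e) (g := fun y : ℕ => (y : ℤ)) (f := fun y => G d y (e - y))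
      (by intro a _ b _ h; simpa using h)]
    apply Finset.sum_subset
    · intro y; simp; rintro z hz rfl; omega
    · intro y hy hn
      by_contra hh
      have := hG _ _ _ hh
      have h1 : 0 < y := by by_contra h0; nlinarith
      have h2 : 0 < e - y := by by_contra h0; nlinarith
      apply hn
      simp
      exact ⟨y.toNat, by omega, by omega⟩
  · symm
    have him : ∑ x ∈ range e, G (-d) (-(x:ℤ)) (-((e:ℤ) - x)) =
        ∑ z ∈ (range e).image (fun y : ℕ => -(y : ℤ)), G (-d) z (-(e:ℤ) - z) := by
      rw [Finset.sum_image (by intro a _ b _ h; simpa using h)]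
      apply Finset.sum_congr rfl
      intro x _
      congr 1; ring
    rw [him]
    apply Finset.sum_subset
    · intro y; simp; rintro z hz rfl; omega
    · intro y hy hn
      by_contra hh
      have := hG _ _ _ hh
      have h1 : y < 0 := by by_contra h0; nlinarith
      have h2 : 0 < e + y := by by_contra h0; nlinarith
      apply hn
      simp
      exact ⟨(-y).toNat, by omega, by omega⟩

lemma cnt (t : ℕ) : (∑ y ∈ range (3 * t), (if y % 3 = 1 then (1 : ℤ) else 0)) = t ∧
    (∑ y ∈ range (3 * t), (if y % 3 = 2 then (1 : ℤ) else 0)) = t := by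
  induction t with
  | zero => simp
  | succ t ih =>
    rw [show 3 * (t + 1) = 3 * t + 1 + 1 + 1 by ring]
    simp only [Finset.sum_range_succ, ih]
    have h1 : 3 * t % 3 = 0 := by omega
    have h2 : (3 * t + 1) % 3 = 1 := by omega
    have h3 : (3 * t + 1 + 1) % 3 = 2 := by omega
    simp [h1, h2, h3]

lemma cnt2 (e r : ℕ) : (∑ y ∈ range e, (if y % 3 = r then (1:ℤ) else 0)) =
      (∑ y ∈ range (3 * (e / 3)), (if y % 3 = r then (1:ℤ) else 0)) + (if 0 = r ∧ e % 3 ≠ 0 then 1 else 0)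
         + (if 1 = r ∧ e % 3 = 2 then 1 else 0) := by
  obtain ⟨t, ht⟩ : ∃ t, t = e / 3 := ⟨_, rfl⟩
  rw [← ht]
  have he : e = 3 * t ∨ e = 3 * t + 1 ∨ e = 3 * t + 1 + 1 := by omega
  clear ht
  have h1 : 3 * t % 3 = 0 := by omega
  have h2 : (3 * t + 1) % 3 = 1 := by omega
  have h3 : (3 * t + 1 + 1) % 3 = 2 := by omega
  rcases he with he | he | he
  · rw [he, h1]; simp
  · rw [he, Finset.sum_range_succ, h1, h2]; simp
  · rw [he, Finset.sum_range_succ, Finset.sum_range_succ, h1, h2, h3]; simp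

end B3Proof

namespace B3Proof
open Finset

lemma id1 (M : ℕ) (hM : M % 3 = 2) :
    3 * ∑ km ∈ antidiagonal M, (if km.1 % 3 = 1 then 2 * gg km.1 else 0) * (if km.2 % 3 = 1 then 2 * gg km.2 else 0)
      = 4 * ∑ d ∈ M.divisors, (d : ℤ) := by
  have h0 := conv f11 f11 f11_pos f11_pos M
  simp only [sum_f11] at h0
  rw [← h0]
  set G : ℤ → ℤ → ℤ → ℤ := fun x y z => f11 x y * f11 x z with hG
  have hGp : ∀ x y z, G x y z ≠ 0 → 0 < x * y ∧ 0 < x * z := by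
    intro x y z h
    simp only [hG, ne_eq, mul_eq_zero, not_or] at h
    exact ⟨f11_pos _ _ h.1, f11_pos _ _ h.2⟩
  have h1 := diag G hGp M
  have h2 := off1 M
  have hs : ∑ᶠ p : Z4, (if p.1.1 * p.1.2 + p.2.1 * p.2.2 = (M : ℤ) then f11 p.1.1 p.1.2 * f11 p.2.1 p.2.2 else 0)
      = ∑ q ∈ M.divisorsAntidiagonal, ∑ y ∈ range q.2, (G q.1 y (q.2 - y) + G (-q.1) (-y) (-(q.2 - y))) := by
    have hA : (Function.support (fun p : Z4 => if p.1.1 = p.2.1 ∧ p.1.1 * p.1.2 + p.2.1 * p.2.2 = (M : ℤ)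
        then G p.1.1 p.1.2 p.2.2 else 0)).Finite := by
      apply fin_0 M
      intro x₁ y₁ x₂ y₂ h
      simp only [ne_eq, ite_eq_right_iff, not_forall] at h
      obtain ⟨⟨rfl, h'⟩, h⟩ := h
      exact ⟨(hGp _ _ _ h).1, (hGp _ _ _ h).2, h'⟩
    have hB : (Function.support (fun p : Z4 => if (p.1.1 % 3 = 1 ∧ p.1.2 % 3 = 1 ∧ p.2.1 % 3 = 1 ∧ p.2.2 % 3 = 1 ∧
      p.1.1 * p.1.2 + p.2.1 * p.2.2 = (M:ℤ) ∧ p.1.1 ≠ p.2.1) then sg p.1.1 p.1.2 * sg p.2.1 p.2.2 else 0)).Finite := by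
      apply fin_0 M
      intro x₁ y₁ x₂ y₂ h
      simp only [ne_eq, ite_eq_right_iff, mul_eq_zero, not_forall, not_or] at h
      obtain ⟨⟨a, b, c, d, e, f⟩, g, i⟩ := h
      exact ⟨sg_pos (by omega) (by omega) g, sg_pos (by omega) (by omega) i, e⟩
    have hadd := finsum_add_distrib hA hB
    rw [h1, h2, add_zero] at hadd
    rw [← hadd]
    apply finsum_congr
    rintro ⟨⟨a, b⟩, ⟨c, d⟩⟩
    simp only [hG, f11]
    by_cases hac : a = c
    · subst hac; simp
    · by_cases hm : a * b + c * d = M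
      · simp only [hac, hm, false_and, true_and, if_false, if_true, ne_eq, not_false_eq_true, and_true]
        split_ifs <;> first | (exfalso; tauto) | ring
      · simp [hac, hm]
  rw [hs]
  have key : ∀ q ∈ M.divisorsAntidiagonal, 3 * ∑ y ∈ range q.2, (G q.1 y (q.2 - y) + G (-q.1) (-y) (-(q.2 - y)))
      = 4 * (q.2 : ℤ) - 2 * chi q.2 + 2 * chi q.1 := by
    rintro ⟨d, e⟩ h
    simp only [Nat.mem_divisorsAntidiagonal] at h
    obtain ⟨hab, hk⟩ := h
    have hd : 0 < d := by rcases Nat.eq_zero_or_pos d with rfl | h; simp at hab; omega; exact h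
    obtain ⟨h1, h2, h3⟩ := mod3_mul d e
    rw [hab] at h3
    have hval : ∀ y ∈ range e, (G d y (e - y) + G (-d) (-y) (-(e - y))) =
        4 * (if y % 3 = d % 3 then 1 else 0) := by
      intro y hy
      have hy := Finset.mem_range.1 hy
      by_cases hy0 : y = 0
      · subst hy0
        have : ¬ ((0:ℕ) % 3 = d % 3) := by
          rcases h1 with h1 | h1 | h1 <;> rcases h2 with h2 | h2 | h2 <;> rw [h1, h2] at h3 <;> omega
        simp [this, hG, f11]
      have e1 : ((e : ℤ) - y) = ((e - y : ℕ) : ℤ) := by omega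
      rw [e1]
      simp only [hG, f11, sg_neg, sg_nat hd (Nat.pos_of_ne_zero hy0), sg_nat hd (show 0 < e - y by omega)]
      rcases h1 with h1 | h1 | h1 <;> rcases h2 with h2 | h2 | h2 <;> rw [h1, h2] at h3 <;>
        split_ifs <;> omega
    rw [Finset.sum_congr rfl hval, ← Finset.mul_sum]
    have hdc := cnt (e / 3)
    rw [cnt2]
    simp only [chi]
    rcases h1 with h1 | h1 | h1 <;> rcases h2 with h2 | h2 | h2 <;> rw [h1, h2] at h3 <;>
      simp only [h1, h2, hdc] <;> simp <;> omega
  rw [Finset.mul_sum, Finset.sum_congr rfl key, Finset.sum_add_distrib, Finset.sum_sub_distrib,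
    Nat.sum_divisorsAntidiagonal' (fun _ a => 4 * (a : ℤ)),
    Nat.sum_divisorsAntidiagonal' (fun _ a => 2 * chi a),
    Nat.sum_divisorsAntidiagonal (fun a _ => 2 * chi a), ← Finset.mul_sum]
  simp

end B3Proof

namespace B3Proof
open Finset

set_option maxHeartbeats 1000000 in
lemma id2 (N : ℕ) :
    ∑ km ∈ antidiagonal (3 * N), (if km.1 % 3 = 1 then 2 * gg km.1 else 0) *
      (if km.2 % 3 = 2 then 2 * ∑ d ∈ km.2.divisors, (d : ℤ) else 0)
      = 12 * ∑ d ∈ N.divisors, chi d * ((N / d : ℕ) : ℤ) ^ 2 := by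
  have h0 := conv f11 (fun x y => y * f12 x y) f11_pos (fun x y h => f12_pos _ _ (right_ne_zero_of_mul h)) (3 * N)
  have h0' := conv (fun x y => y * f11 x y) f12 (fun x y h => f11_pos _ _ (right_ne_zero_of_mul h)) f12_pos (3 * N)
  simp only [sum_f11, sum_yf12] at h0
  simp only [sum_f12, mul_zero, Finset.sum_const_zero] at h0'
  rw [← h0]
  obtain ⟨M, hM⟩ : ∃ M, M = 3 * N := ⟨_, rfl⟩
  rw [← hM] at h0' ⊢
  set G : ℤ → ℤ → ℤ → ℤ := fun x y z => (y + z) * (f11 x y * f12 x z) with hG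
  have hGp : ∀ x y z, G x y z ≠ 0 → 0 < x * y ∧ 0 < x * z := by
    intro x y z h
    simp only [hG, ne_eq, mul_eq_zero, not_or] at h
    exact ⟨f11_pos _ _ h.2.1, f12_pos _ _ h.2.2⟩
  have h1 := diag G hGp M
  have h2 := off2 M
  have hs : ∑ᶠ p : Z4, (if p.1.1 * p.1.2 + p.2.1 * p.2.2 = (M : ℤ) then
      f11 p.1.1 p.1.2 * (p.2.2 * f12 p.2.1 p.2.2) else 0)
      = ∑ q ∈ M.divisorsAntidiagonal, ∑ y ∈ range q.2, (G q.1 y (q.2 - y) + G (-q.1) (-y) (-(q.2 - y))) := by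
    have hA : (Function.support (fun p : Z4 => if p.1.1 = p.2.1 ∧ p.1.1 * p.1.2 + p.2.1 * p.2.2 = (M : ℤ)
        then G p.1.1 p.1.2 p.2.2 else 0)).Finite := by
      apply fin_0 M
      intro x₁ y₁ x₂ y₂ h
      simp only [ne_eq, ite_eq_right_iff, not_forall] at h
      obtain ⟨⟨rfl, h'⟩, h⟩ := h
      exact ⟨(hGp _ _ _ h).1, (hGp _ _ _ h).2, h'⟩
    have hB : (Function.support (fun p : Z4 => if (p.1.1 % 3 = 1 ∧ p.1.2 % 3 = 1 ∧ p.2.1 % 3 = 1 ∧ p.2.2 % 3 = 2 ∧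
      p.1.1 * p.1.2 + p.2.1 * p.2.2 = (M:ℤ) ∧ p.1.1 ≠ p.2.1) then
      (p.1.2 + p.2.2) * (sg p.1.1 p.1.2 * sg p.2.1 p.2.2) else 0)).Finite := by
      apply fin_0 M
      intro x₁ y₁ x₂ y₂ h
      simp only [ne_eq, ite_eq_right_iff, mul_eq_zero, not_forall, not_or] at h
      obtain ⟨⟨a, b, c, d, e, f⟩, k, g, i⟩ := h
      exact ⟨sg_pos (by omega) (by omega) g, sg_pos (by omega) (by omega) i, e⟩
    have hC : (Function.support (fun p : Z4 => if p.1.1 * p.1.2 + p.2.1 * p.2.2 = (M : ℤ) then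
      p.1.2 * f11 p.1.1 p.1.2 * f12 p.2.1 p.2.2 else 0)).Finite := by
      apply fin_0 M
      intro x₁ y₁ x₂ y₂ h
      simp only [ne_eq, ite_eq_right_iff, mul_eq_zero, not_forall, not_or] at h
      obtain ⟨h1, h2, h3⟩ := h
      exact ⟨f11_pos _ _ h2.2, f12_pos _ _ h3, h1⟩
    have hD : (Function.support (fun p : Z4 => if p.1.1 * p.1.2 + p.2.1 * p.2.2 = (M : ℤ) then
      f11 p.1.1 p.1.2 * (p.2.2 * f12 p.2.1 p.2.2) else 0)).Finite := by
      apply fin_0 M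
      intro x₁ y₁ x₂ y₂ h
      simp only [ne_eq, ite_eq_right_iff, mul_eq_zero, not_forall, not_or] at h
      obtain ⟨h1, h2, h3⟩ := h
      exact ⟨f11_pos _ _ h2, f12_pos _ _ h3.2, h1⟩
    have hadd := finsum_add_distrib hA hB
    have hadd' := finsum_add_distrib hC hD
    rw [h1, h2, add_zero] at hadd
    rw [h0', zero_add] at hadd'
    rw [← hadd, ← hadd']
    apply finsum_congr
    rintro ⟨⟨a, b⟩, ⟨c, d⟩⟩
    simp only [hG, f11, f12]
    by_cases hac : a = c
    · subst hac; simp only [true_and, ne_eq, not_true_eq_false, and_false, if_false, add_zero]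
      split_ifs <;> ring
    · by_cases hm : a * b + c * d = M
      · simp only [hac, hm, false_and, true_and, if_false, if_true, ne_eq, not_false_eq_true, and_true]
        split_ifs <;> first | (exfalso; tauto) | ring
      · simp [hac, hm]
  rw [hs]
  have key : ∀ q ∈ M.divisorsAntidiagonal, ∑ y ∈ range q.2, (G q.1 y (q.2 - y) + G (-q.1) (-y) (-(q.2 - y)))
      = 12 * (chi q.1 * ((q.2 / 3 : ℕ) : ℤ) ^ 2) := by
    rintro ⟨d, e⟩ h
    simp only [Nat.mem_divisorsAntidiagonal] at h
    obtain ⟨hab, hk⟩ := h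
    have hd : 0 < d := by rcases Nat.eq_zero_or_pos d with rfl | h; simp at hab; omega; exact h
    obtain ⟨h1, h2, h3⟩ := mod3_mul d e
    have hM3 : M % 3 = 0 := by omega
    rw [hab, hM3] at h3
    have hval : ∀ y ∈ range e, (G d y (e - y) + G (-d) (-y) (-(e - y))) =
        4 * e * chi d * (if y % 3 = d % 3 then 1 else 0) := by
      intro y hy
      have hy := Finset.mem_range.1 hy
      by_cases hd0 : d % 3 = 0
      · have a1 : ¬ (d : ℤ) % 3 = 1 := by omega
        have a2 : ¬ (-(d : ℤ)) % 3 = 1 := by omega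
        simp [hG, f11, chi, hd0, a1, a2]
      by_cases hy0 : y = 0
      · subst hy0
        have : ¬ ((0:ℕ) % 3 = d % 3) := by omega
        simp [this, hG, f11]
      have e1 : ((e : ℤ) - y) = ((e - y : ℕ) : ℤ) := by omega
      have e2 : (y : ℤ) + ((e - y : ℕ) : ℤ) = e := by omega
      have e3 : -(y : ℤ) + -((e - y : ℕ) : ℤ) = - e := by omega
      rw [e1]
      simp only [hG, f11, f12, e2, e3, sg_neg, sg_nat hd (Nat.pos_of_ne_zero hy0), sg_nat hd (show 0 < e - y by omega)]
      unfold chi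
      rcases h1 with h1 | h1 | h1 <;> rcases h2 with h2 | h2 | h2 <;> rw [h1, h2] at h3 <;>
        split_ifs <;> first | omega | (simp; ring)
    rw [Finset.sum_congr rfl hval, ← Finset.mul_sum]
    have hdc := cnt (e / 3)
    rcases h1 with h1 | h1 | h1
    · simp [chi, h1]
    · have he : e = 3 * (e / 3) := by rcases h2 with h2 | h2 | h2 <;> rw [h1, h2] at h3 <;> omega
      rw [← he] at hdc
      simp only [h1, hdc.1, chi]
      have : (e : ℤ) = 3 * ((e / 3 : ℕ) : ℤ) := by exact_mod_cast he
      rw [this]; simp; ring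
    · have he : e = 3 * (e / 3) := by rcases h2 with h2 | h2 | h2 <;> rw [h1, h2] at h3 <;> omega
      rw [← he] at hdc
      simp only [h1, hdc.2, chi]
      have : (e : ℤ) = 3 * ((e / 3 : ℕ) : ℤ) := by exact_mod_cast he
      rw [this]; simp; ring
  rw [Finset.sum_congr rfl key, ← Finset.mul_sum]
  congr 1
  rw [Nat.sum_divisorsAntidiagonal (fun a b => chi a * ((b / 3 : ℕ) : ℤ) ^ 2)]
  rcases Nat.eq_zero_or_pos N with rfl | hN
  · simp [hM]
  symm
  have hsub : N.divisors ⊆ M.divisors := Nat.divisors_subset_of_dvd (by omega) ⟨3, by omega⟩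
  rw [← Finset.sum_subset hsub]
  · apply Finset.sum_congr rfl
    intro d hd
    have hd := Nat.dvd_of_mem_divisors hd
    have : M / d / 3 = N / d := by
      rw [Nat.div_div_eq_div_mul, mul_comm, ← Nat.div_div_eq_div_mul]; congr 1; omega
    rw [this]
  · intro d h1 h2
    have h1 := Nat.dvd_of_mem_divisors h1
    have : 3 ∣ d := by
      by_contra h3
      apply h2
      rw [Nat.mem_divisors]
      refine ⟨?_, by omega⟩
      exact ((Nat.Prime.coprime_iff_not_dvd Nat.prime_three).2 h3).symm.dvd_of_dvd_mul_left (hM ▸ h1)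
    have : d % 3 = 0 := by omega
    simp [chi, this]

end B3Proof

namespace B3Proof
open Finset

lemma exists_cube_root (p : ℕ) [Fact p.Prime] (hp : p % 3 = 1) : ∃ t : ZMod p, t ^ 2 - t + 1 = 0 := by
  have hp1 : p ≠ 3 := by rintro rfl; omega
  have : Fact (Nat.Prime 3) := ⟨Nat.prime_three⟩
  obtain ⟨g, hg⟩ := exists_prime_orderOf_dvd_card (G := (ZMod p)ˣ) 3 (by
    rw [ZMod.card_units]
    have := (Fact.out : p.Prime).two_le
    omega)
  have h1 : g ^ 3 = 1 := by rw [← hg]; exact pow_orderOf_eq_one g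
  have h2 : g ≠ 1 := by rintro rfl; simp at hg
  have h3 : (g : ZMod p) ^ 3 = 1 := by rw [← Units.val_pow_eq_pow_val, h1]; rfl
  have h4 : (g : ZMod p) - 1 ≠ 0 := by
    intro h; apply h2; ext; simpa using sub_eq_zero.1 h
  refine ⟨-g, ?_⟩
  apply mul_left_cancel₀ h4
  linear_combination h3

lemma exists_pi (p : ℕ) (hpp : p.Prime) (hp : p % 3 = 1) : ∃ c d : ℤ, c ^ 2 - c * d + d ^ 2 = p := by
  have : Fact p.Prime := ⟨hpp⟩
  obtain ⟨t, ht⟩ := exists_cube_root p hp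
  obtain ⟨k, hk⟩ : ∃ k, k = Nat.sqrt p := ⟨_, rfl⟩
  have hk1 : p < (k + 1) * (k + 1) := by rw [hk]; exact Nat.lt_succ_sqrt p
  have hk2 : k * k < p := by
    rcases lt_or_eq_of_le (hk ▸ Nat.sqrt_le p : k * k ≤ p) with h | h
    · exact h
    · exfalso
      rw [← h] at hpp
      exact Nat.not_prime_mul (by rintro rfl; norm_num at hpp) (by rintro rfl; norm_num at hpp) hpp
  obtain ⟨⟨x, y⟩, ⟨x', y'⟩, hne, heq⟩ := Fintype.exists_ne_map_eq_of_card_lt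
    (fun v : Fin (k+1) × Fin (k+1) => ((v.1 : ℕ) : ZMod p) - t * ((v.2 : ℕ) : ZMod p))
    (by rw [ZMod.card, Fintype.card_prod, Fintype.card_fin]; exact hk1)
  simp only at heq
  obtain ⟨u, hu⟩ : ∃ u : ℤ, u = (x : ℕ) - (x' : ℕ) := ⟨_, rfl⟩
  obtain ⟨v, hv⟩ : ∃ u : ℤ, u = (y : ℕ) - (y' : ℕ) := ⟨_, rfl⟩
  have hx := x.2
  have hx' := x'.2
  have hy := y.2
  have hy' := y'.2
  have huv : ¬ (u = 0 ∧ v = 0) := by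
    rintro ⟨h1, h2⟩
    apply hne
    ext <;> simp <;> omega
  have hm : ((u ^ 2 - u * v + v ^ 2 : ℤ) : ZMod p) = 0 := by
    have h1 : (u : ZMod p) = t * v := by
      rw [hu, hv]; push_cast; linear_combination heq
    push_cast
    rw [h1]
    linear_combination (v : ZMod p) ^ 2 * ht
  rw [ZMod.intCast_zmod_eq_zero_iff_dvd] at hm
  obtain ⟨q, hq⟩ := hm
  have b1 : u ≤ k := by omega
  have b2 : -k ≤ u := by omega
  have b3 : v ≤ k := by omega
  have b4 : -k ≤ v := by omega
  have hk2' : (k : ℤ) * k < p := by exact_mod_cast hk2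
  have hp0 : (0 : ℤ) < p := by exact_mod_cast hpp.pos
  have c1 : u ^ 2 ≤ k * k := by nlinarith
  have c2 : v ^ 2 ≤ k * k := by nlinarith
  have c3 : - (u * v) ≤ k * k := by nlinarith [sq_nonneg (u + v)]
  have q1 : q < 3 := by
    by_contra hh
    have := mul_le_mul_of_nonneg_left (not_lt.1 hh) hp0.le
    linarith
  have pos : 0 < u ^ 2 - u * v + v ^ 2 := by
    by_contra hh
    have e1 : u = 0 := by
      have : u ^ 2 = 0 := by nlinarith [sq_nonneg (2 * v - u), sq_nonneg u]
      simpa using this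
    have e2 : v = 0 := by
      have : v ^ 2 = 0 := by nlinarith [sq_nonneg (2 * v - u), sq_nonneg v, sq_nonneg (2 * u - v)]
      simpa using this
    exact huv ⟨e1, e2⟩
  have q0 : 0 < q := (pos_iff_pos_of_mul_pos (hq ▸ pos)).1 hp0
  have : q = 1 ∨ q = 2 := by omega
  rcases this with rfl | rfl
  · exact ⟨u, v, by rw [hq]; ring⟩
  · exfalso
    have hodd : p % 2 = 1 := by
      rcases hpp.eq_two_or_odd with h | h
      · omega
      · exact h
    rcases Int.even_or_odd' u with ⟨a, rfl | rfl⟩ <;> rcases Int.even_or_odd' v with ⟨b, rfl | rfl⟩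
    · have : (2 * a ^ 2 - 2 * (a * b) + 2 * b ^ 2 : ℤ) = p := by linarith
      omega
    · ring_nf at hq; omega
    · ring_nf at hq; omega
    · ring_nf at hq; omega

end B3Proof

namespace B3Proof
open Finset

def R (m : ℤ) : Set (ℤ × ℤ) := {v | v.1 ^ 2 - v.1 * v.2 + v.2 ^ 2 = m}

lemma mem_R (m a b : ℤ) : (a, b) ∈ R m ↔ a ^ 2 - a * b + b ^ 2 = m := Iff.rfl

lemma R_bound {m a b : ℤ} (h : a ^ 2 - a * b + b ^ 2 = m) : 3 * a ^ 2 ≤ 4 * m ∧ 3 * b ^ 2 ≤ 4 * m := by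
  constructor
  · nlinarith [sq_nonneg (2 * b - a)]
  · nlinarith [sq_nonneg (2 * a - b)]

lemma R_fin (m : ℤ) : (R m).Finite := by
  apply Set.Finite.subset (Finset.finite_toSet (Icc (-(4*m)) (4*m) ×ˢ Icc (-(4*m)) (4*m)))
  rintro ⟨a, b⟩ h
  rw [mem_R] at h
  obtain ⟨h1, h2⟩ := R_bound h
  have h3 := Int.le_self_sq a
  have h4 := Int.le_self_sq (-a)
  have h5 := Int.le_self_sq b
  have h6 := Int.le_self_sq (-b)
  have h7 := sq_nonneg a
  have h8 := sq_nonneg b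
  simp only [coe_product, coe_Icc, Set.mem_prod, Set.mem_Icc]
  rw [neg_sq] at h4 h6
  refine ⟨⟨?_, ?_⟩, ?_, ?_⟩ <;> omega

/-- multiplication by an element of norm p -/
lemma ncard_X (p c d n : ℤ) (hp : Prime p) (hcd : c ^ 2 - c * d + d ^ 2 = p) :
    {v ∈ R (p * n) | p ∣ v.2 * c - v.1 * d}.ncard = (R n).ncard := by
  have : {v ∈ R (p * n) | p ∣ v.2 * c - v.1 * d} =
      (fun v : ℤ × ℤ => (v.1 * c - v.2 * d, v.1 * d + v.2 * c - v.2 * d)) '' R n := by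
    ext ⟨a, b⟩
    simp only [Set.mem_ofPred_eq, Set.mem_image, Prod.exists, Prod.mk.injEq, mem_R]
    constructor
    · rintro ⟨h, y, hy⟩
      have hN : (a * c - a * d + b * d) ^ 2 - (a * c - a * d + b * d) * (p * y) + (p * y) ^ 2 = p * p * n := by
        rw [← hy]
        linear_combination p * h + (a ^ 2 - a * b + b ^ 2) * hcd
      have hx : p ∣ a * c - a * d + b * d := by
        apply hp.dvd_of_dvd_pow (n := 2)
        exact ⟨p * n + (a * c - a * d + b * d) * y - p * y ^ 2, by linear_combination hN⟩
      obtain ⟨x, hx⟩ := hx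
      have hp0 := hp.ne_zero
      refine ⟨x, y, ?_, ?_, ?_⟩
      · rw [hx] at hN
        apply mul_left_cancel₀ (mul_ne_zero hp0 hp0)
        linear_combination hN
      · apply mul_left_cancel₀ hp0
        linear_combination -c * hx + d * hy + a * hcd
      · apply mul_left_cancel₀ hp0
        linear_combination -d * hx - c * hy + d * hy + b * hcd
    · rintro ⟨x, y, h, rfl, rfl⟩
      refine ⟨?_, y, ?_⟩
      · linear_combination p * h + (x ^ 2 - x * y + y ^ 2) * hcd
      · linear_combination y * hcd
  rw [this, Set.ncard_image_of_injective]
  rintro ⟨a, b⟩ ⟨a', b'⟩ h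
  simp only [Prod.mk.injEq] at h ⊢
  obtain ⟨h1, h2⟩ := h
  have hp0 := hp.ne_zero
  constructor
  · apply mul_left_cancel₀ hp0
    linear_combination (c - d) * h1 + d * h2 - (a - a') * hcd
  · apply mul_left_cancel₀ hp0
    linear_combination -d * h1 + c * h2 - (b - b') * hcd

lemma ncard_D (p n : ℤ) (hp : Prime p) :
    {v ∈ R (p * n) | p ∣ v.1 ∧ p ∣ v.2}.ncard = if p ∣ n then (R (n / p)).ncard else 0 := by
  have hp0 := hp.ne_zero
  split_ifs with h
  · obtain ⟨m, rfl⟩ := h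
    rw [Int.mul_ediv_cancel_left _ hp0]
    have : {v ∈ R (p * (p * m)) | p ∣ v.1 ∧ p ∣ v.2} = (fun v : ℤ × ℤ => (p * v.1, p * v.2)) '' R m := by
      ext ⟨a, b⟩
      simp only [Set.mem_ofPred_eq, Set.mem_image, Prod.exists, Prod.mk.injEq, mem_R]
      constructor
      · rintro ⟨h, ⟨x, rfl⟩, ⟨y, rfl⟩⟩
        refine ⟨x, y, ?_, rfl, rfl⟩
        apply mul_left_cancel₀ (mul_ne_zero hp0 hp0)
        linear_combination h
      · rintro ⟨x, y, h, rfl, rfl⟩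
        exact ⟨by linear_combination p ^ 2 * h, Dvd.intro _ rfl, Dvd.intro _ rfl⟩
    rw [this, Set.ncard_image_of_injective]
    rintro ⟨a, b⟩ ⟨a', b'⟩ h
    simpa [hp0] using h
  · have : {v ∈ R (p * n) | p ∣ v.1 ∧ p ∣ v.2} = ∅ := by
      ext ⟨a, b⟩
      simp only [Set.mem_ofPred_eq, mem_R, Set.mem_empty_iff_false, iff_false]
      rintro ⟨h1, ⟨x, rfl⟩, ⟨y, rfl⟩⟩
      apply h
      refine ⟨x ^ 2 - x * y + y ^ 2, ?_⟩
      apply mul_left_cancel₀ hp0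
      linear_combination -h1
    rw [this, Set.ncard_empty]

lemma hecke1 (p : ℕ) (hpp : p.Prime) (hp3 : p % 3 = 1) (n : ℤ) :
    (R (p * n)).ncard + (if (p : ℤ) ∣ n then (R (n / p)).ncard else 0) = 2 * (R n).ncard := by
  obtain ⟨c, d, hcd⟩ := exists_pi p hpp hp3
  have hp : Prime (p : ℤ) := Nat.prime_iff_prime_int.1 hpp
  have hX := ncard_X p c d n hp hcd
  have hY := ncard_X p (c - d) (-d) n hp (by linear_combination hcd)
  have hD := ncard_D p n hp
  have hp0 := hp.ne_zero
  have hU : {v ∈ R (p * n) | (p:ℤ) ∣ v.2 * c - v.1 * d} ∪ {v ∈ R (p * n) | (p:ℤ) ∣ v.2 * (c - d) - v.1 * -d} = R (p * n) := by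
    ext ⟨a, b⟩
    simp only [Set.mem_union, Set.mem_ofPred_eq, mem_R]
    constructor
    · rintro (h | h) <;> exact h.1
    · intro h
      have : (p : ℤ) ∣ (b * c - a * d) * (b * (c - d) - a * -d) :=
        ⟨b ^ 2 - d ^ 2 * n, by linear_combination b ^ 2 * hcd - d ^ 2 * h⟩
      rcases hp.dvd_or_dvd this with h' | h'
      · exact Or.inl ⟨h, h'⟩
      · exact Or.inr ⟨h, h'⟩
  have hd : ¬ (p : ℤ) ∣ d := by
    rintro ⟨y, rfl⟩
    have : (p : ℤ) ∣ c := hp.dvd_of_dvd_pow (n := 2) ⟨1 + c * y - p * y ^ 2, by linear_combination hcd⟩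
    obtain ⟨x, rfl⟩ := this
    apply hp.not_isUnit
    apply IsUnit.of_mul_eq_one (x ^ 2 - x * y + y ^ 2)
    apply mul_left_cancel₀ hp0
    linear_combination hcd
  have hp2 : ¬ (p : ℤ) ∣ 2 := by
    intro h
    have : p ∣ 2 := by exact_mod_cast h
    have := Nat.le_of_dvd (by norm_num) this
    have := hpp.two_le
    omega
  have hp3' : ¬ (p : ℤ) ∣ 3 := by
    intro h
    have : p ∣ 3 := by exact_mod_cast h
    have := (Nat.prime_dvd_prime_iff_eq hpp Nat.prime_three).1 this
    omega
  have h2c : ¬ (p : ℤ) ∣ 2 * c - d := by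
    rintro ⟨x, hx⟩
    have : (p : ℤ) ∣ 3 * d ^ 2 := ⟨4 - (2 * c - d) * x, by
      linear_combination 4 * hcd - (2 * c - d) * hx⟩
    rcases hp.dvd_or_dvd this with h | h
    · exact hp3' h
    · exact hd (hp.dvd_of_dvd_pow h)
  have hI : {v ∈ R (p * n) | (p:ℤ) ∣ v.2 * c - v.1 * d} ∩ {v ∈ R (p * n) | (p:ℤ) ∣ v.2 * (c - d) - v.1 * -d} =
      {v ∈ R (p * n) | (p : ℤ) ∣ v.1 ∧ (p : ℤ) ∣ v.2} := by
    ext ⟨a, b⟩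
    simp only [Set.mem_inter_iff, Set.mem_ofPred_eq, mem_R]
    constructor
    · rintro ⟨⟨h, h1⟩, _, h2⟩
      have e1 : (p : ℤ) ∣ b * (2 * c - d) := by
        have := dvd_add h1 h2
        rwa [show b * c - a * d + (b * (c - d) - a * -d) = b * (2 * c - d) by ring] at this
      have hb : (p : ℤ) ∣ b := (hp.dvd_or_dvd e1).resolve_right h2c
      have e2 : (p : ℤ) ∣ a * d := by
        have := dvd_sub (Dvd.dvd.mul_right hb c) h1
        rwa [show b * c - (b * c - a * d) = a * d by ring] at this
      exact ⟨h, (hp.dvd_or_dvd e2).resolve_right hd, hb⟩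
    · rintro ⟨h, ha, hb⟩
      exact ⟨⟨h, dvd_sub (hb.mul_right _) (ha.mul_right _)⟩, h, dvd_sub (hb.mul_right _) (ha.mul_right _)⟩
  have := Set.ncard_union_add_ncard_inter {v ∈ R (p * n) | (p:ℤ) ∣ v.2 * c - v.1 * d}
    {v ∈ R (p * n) | (p:ℤ) ∣ v.2 * (c - d) - v.1 * -d} ((R_fin _).subset (fun _ h => h.1)) ((R_fin _).subset (fun _ h => h.1))
  rw [hU, hI, hX, hY, hD] at this
  omega

lemma hecke2 (p : ℕ) (hpp : p.Prime) (hp3 : p % 3 = 2) (n : ℤ) :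
    (R (p * n)).ncard = (if (p : ℤ) ∣ n then (R (n / p)).ncard else 0) := by
  have hp : Prime (p : ℤ) := Nat.prime_iff_prime_int.1 hpp
  rw [← ncard_D p n hp]
  congr 1
  ext ⟨a, b⟩
  simp only [Set.mem_ofPred_eq, mem_R]
  refine ⟨fun h => ⟨h, ?_⟩, fun h => h.1⟩
  have : Fact p.Prime := ⟨hpp⟩
  have h1 : (a : ZMod p) ^ 2 - a * b + b ^ 2 = 0 := by
    have : ((a ^ 2 - a * b + b ^ 2 : ℤ) : ZMod p) = 0 := by rw [h]; simp
    simpa using this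
  have h2 : (a : ZMod p) ^ 3 = (-b) ^ 3 := by linear_combination (a + b : ZMod p) * h1
  have hcube : ∀ x : ZMod p, x = (x ^ 3) ^ (2 * (p / 3) + 1) := by
    intro x
    rw [← pow_mul]
    have e : 3 * (2 * (p / 3) + 1) = p + (p - 1) := by omega
    rw [e, pow_add, ZMod.pow_card]
    by_cases hx : x = 0
    · simp [hx]
    · rw [ZMod.pow_card_sub_one_eq_one hx, mul_one]
  have h3 : (a : ZMod p) = -b := by rw [hcube a, h2, ← hcube]
  rw [h3] at h1
  have h4 : (3 : ZMod p) * (b : ZMod p) ^ 2 = 0 := by linear_combination h1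
  have h5 : (3 : ZMod p) ≠ 0 := by
    intro h
    have h' : ((3 : ℕ) : ZMod p) = 0 := by exact_mod_cast h
    rw [ZMod.natCast_eq_zero_iff] at h'
    have := (Nat.prime_dvd_prime_iff_eq hpp Nat.prime_three).1 h'
    omega
  have h6 : (b : ZMod p) = 0 := by
    rcases mul_eq_zero.1 h4 with h | h
    · exact absurd h h5
    · simpa using h
  have h7 : (a : ZMod p) = 0 := by rw [h3, h6, neg_zero]
  exact ⟨(ZMod.intCast_zmod_eq_zero_iff_dvd _ _).1 h7, (ZMod.intCast_zmod_eq_zero_iff_dvd _ _).1 h6⟩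

lemma R_three : (R 3).ncard = 6 := by
  have : R 3 = ((({(1,2),(2,1),(1,-1),(-1,1),(-1,-2),(-2,-1)} : Finset (ℤ × ℤ))) : Set (ℤ × ℤ)) := by
    ext ⟨a, b⟩
    rw [mem_R]
    constructor
    · intro h
      obtain ⟨h1, h2⟩ := R_bound h
      have a1 : a ≤ 2 := by nlinarith
      have a2 : -2 ≤ a := by nlinarith
      have b1 : b ≤ 2 := by nlinarith
      have b2 : -2 ≤ b := by nlinarith
      interval_cases a <;> interval_cases b <;> simp at h ⊢
    · intro h
      simp at h
      rcases h with h | h | h | h | h | h <;> obtain ⟨rfl, rfl⟩ := h <;> norm_num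
  rw [this, Set.ncard_coe_finset]
  decide

lemma gg_rec (p m : ℕ) (hpp : p.Prime) (hm : 0 < m) :
    gg (p * m) + chi p * (if p ∣ m then gg (m / p) else 0) = (1 + chi p) * gg m := by
  have hp0 := hpp.pos
  have hU : (p * m).divisors = m.divisors ∪ m.divisors.image (fun d => p * d) := by
    ext d
    simp only [Nat.mem_divisors, Finset.mem_union, Finset.mem_image]
    constructor
    · rintro ⟨h, _⟩
      by_cases hd : p ∣ d
      · obtain ⟨e, rfl⟩ := hd
        right
        exact ⟨e, ⟨Nat.dvd_of_mul_dvd_mul_left hp0 h, by omega⟩, rfl⟩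
      · left
        exact ⟨(((Nat.Prime.coprime_iff_not_dvd hpp).2 hd).symm).dvd_of_dvd_mul_left h, by omega⟩
    · rintro (h | ⟨e, h, rfl⟩)
      · exact ⟨h.1.mul_left p, by positivity⟩
      · exact ⟨Nat.mul_dvd_mul_left p h.1, by positivity⟩
  have hinj : Set.InjOn (fun d => p * d) (m.divisors : Set ℕ) := fun a _ b _ h => Nat.eq_of_mul_eq_mul_left hp0 h
  have hI : ∑ d ∈ m.divisors ∩ m.divisors.image (fun d => p * d), chi d = chi p * (if p ∣ m then gg (m / p) else 0) := by
    split_ifs with h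
    · obtain ⟨k, rfl⟩ := h
      rw [Nat.mul_div_cancel_left _ hp0]
      have hk : k ≠ 0 := by rintro rfl; simp at hm
      have : (p * k).divisors ∩ (p * k).divisors.image (fun d => p * d) = k.divisors.image (fun d => p * d) := by
        ext d
        simp only [Nat.mem_divisors, Finset.mem_inter, Finset.mem_image]
        constructor
        · rintro ⟨h1, e, h2, rfl⟩
          exact ⟨e, ⟨Nat.dvd_of_mul_dvd_mul_left hp0 h1.1, hk⟩, rfl⟩
        · rintro ⟨e, h2, rfl⟩
          exact ⟨⟨Nat.mul_dvd_mul_left p h2.1, by omega⟩, e, ⟨h2.1.mul_left p, by omega⟩, rfl⟩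
      rw [this, Finset.sum_image (fun a _ b _ h => Nat.eq_of_mul_eq_mul_left hp0 h), gg, Finset.mul_sum]
      exact Finset.sum_congr rfl (fun d _ => chi_mul p d)
    · rw [mul_zero]
      apply Finset.sum_eq_zero
      intro d hd
      simp only [Nat.mem_divisors, Finset.mem_inter, Finset.mem_image] at hd
      obtain ⟨h1, e, h2, rfl⟩ := hd
      exact absurd ((Dvd.intro _ rfl).trans h1.1) h
  have := Finset.sum_union_inter (s₁ := m.divisors) (s₂ := m.divisors.image (fun d => p * d)) (f := chi)
  rw [← hU, hI, Finset.sum_image hinj] at this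
  simp only [chi_mul, ← Finset.mul_sum] at this
  simp only [gg] at this ⊢
  rw [this]; ring

lemma r_eq (m : ℕ) (hm : m % 3 ≠ 0) : ((R (3 * m)).ncard : ℤ) = 6 * gg m := by
  induction m using Nat.strong_induction_on with
  | _ m ih =>
  by_cases h1 : m = 1
  · subst h1
    have := R_three
    simp [gg, chi, this]
  obtain ⟨p, hpp, k, rfl⟩ := Nat.exists_prime_and_dvd h1
  have hk : 0 < k := by rcases Nat.eq_zero_or_pos k with rfl | h; simp at hm; exact h
  have hk3 : k % 3 ≠ 0 := by intro h; apply hm; rw [Nat.mul_mod, h]; simp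
  have hp3 : p % 3 ≠ 0 := by intro h; apply hm; rw [Nat.mul_mod, h]; simp
  have hlt : k < p * k := by
    have := hpp.two_le
    nlinarith
  have ihk := ih k hlt hk3
  have hg := gg_rec p k hpp hk
  have e1 : (3 * ((p * k : ℕ) : ℤ)) = p * (3 * k) := by push_cast; ring
  have hdiv : ((p : ℤ) ∣ 3 * k) ↔ p ∣ k := by
    constructor
    · intro h
      have : p ∣ 3 * k := by exact_mod_cast h
      rcases (Nat.Prime.dvd_mul hpp).1 this with h | h
      · exfalso
        have := (Nat.prime_dvd_prime_iff_eq hpp Nat.prime_three).1 h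
        omega
      · exact h
    · intro h
      exact (Int.natCast_dvd_natCast.2 h).mul_left 3
  have hE : (((if (p : ℤ) ∣ 3 * k then (R (3 * k / p)).ncard else 0 : ℕ)) : ℤ) =
      6 * (if p ∣ k then gg (k / p) else 0) := by
    simp only [hdiv]
    split_ifs with h
    · obtain ⟨l, rfl⟩ := h
      rw [Nat.mul_div_cancel_left _ hpp.pos]
      have : (3 * ((p * l : ℕ) : ℤ)) / p = 3 * l := by
        rw [show (3 * ((p * l : ℕ) : ℤ)) = p * (3 * l) by push_cast; ring]
        exact Int.mul_ediv_cancel_left _ (by exact_mod_cast hpp.ne_zero)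
      rw [this]
      apply ih
      · have : l ≤ p * l := Nat.le_mul_of_pos_left _ hpp.pos
        omega
      · intro h; apply hk3; rw [Nat.mul_mod, h]; simp
    · simp
  rw [e1]
  have hp12 : p % 3 = 1 ∨ p % 3 = 2 := by omega
  rcases hp12 with h | h
  · have hh := hecke1 p hpp h (3 * k)
    have hc : chi p = 1 := by simp [chi, h]
    rw [hc] at hg
    have : ((R (p * (3 * k))).ncard : ℤ) + (((if (p : ℤ) ∣ 3 * k then (R (3 * k / p)).ncard else 0 : ℕ)) : ℤ) =
      2 * ((R (3 * k)).ncard : ℤ) := by exact_mod_cast hh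
    rw [hE, ihk] at this
    linarith
  · have hh := hecke2 p hpp h (3 * k)
    have hc : chi p = -1 := by simp [chi, h]
    rw [hc] at hg
    rw [hh, hE]
    linarith

end B3Proof

namespace B3Proof
open Finset

lemma sq_ne (a n : ℤ) : a ^ 2 ≠ 9 * n + 3 := by
  intro h
  have : (3 : ℤ) ∣ a := Int.prime_three.dvd_of_dvd_pow (n := 2) ⟨3 * n + 1, by linear_combination h⟩
  obtain ⟨k, rfl⟩ := this
  have : 9 * (k ^ 2) = 9 * n + 3 := by linear_combination h
  omega

def PP (n : ℤ) : Set (ℤ × ℤ) := {v ∈ R (9 * n + 3) | 0 < v.2 ∧ v.2 < v.1}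

lemma R_sector (n : ℤ) : (R (9 * n + 3)).ncard = 6 * (PP n).ncard := by
  have hfin := R_fin (9 * n + 3)
  obtain ⟨S, hS⟩ : ∃ S, S = R (9 * n + 3) := ⟨_, rfl⟩
  have mS : ∀ a b : ℤ, (a, b) ∈ S ↔ a ^ 2 - a * b + b ^ 2 = 9 * n + 3 := by
    intro a b; rw [hS]; exact mem_R _ _ _
  have mP : ∀ a b : ℤ, (a, b) ∈ PP n ↔ a ^ 2 - a * b + b ^ 2 = 9 * n + 3 ∧ 0 < b ∧ b < a := by
    intro a b; rfl
  rw [← hS] at hfin ⊢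
  have c1 : ((fun v : ℤ × ℤ => (v.1 - v.2, v.1)) '' PP n).ncard = (PP n).ncard := by
    apply Set.ncard_image_of_injective
    rintro ⟨a, b⟩ ⟨a', b'⟩ h
    simp at h ⊢; omega
  have c2 : ((fun v : ℤ × ℤ => (-v.2, v.1 - v.2)) '' PP n).ncard = (PP n).ncard := by
    apply Set.ncard_image_of_injective
    rintro ⟨a, b⟩ ⟨a', b'⟩ h
    simp at h ⊢; omega
  have c3 : ((fun v : ℤ × ℤ => (-v.1, -v.2)) '' {v ∈ S | 0 < v.2}).ncard = {v ∈ S | 0 < v.2}.ncard := by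
    apply Set.ncard_image_of_injective
    rintro ⟨a, b⟩ ⟨a', b'⟩ h
    simp at h ⊢; omega
  have u1 : S = {v ∈ S | 0 < v.2} ∪ ((fun v : ℤ × ℤ => (-v.1, -v.2)) '' {v ∈ S | 0 < v.2}) := by
    ext ⟨a, b⟩
    simp only [Set.mem_union, Set.mem_image, Set.mem_ofPred_eq, Prod.exists, Prod.mk.injEq, mS]
    constructor
    · intro h
      have hb : b ≠ 0 := by rintro rfl; exact sq_ne a n (by linear_combination h)
      rcases lt_or_gt_of_ne hb with hb | hb
      · right; exact ⟨-a, -b, ⟨by linear_combination h, by omega⟩, by omega, by omega⟩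
      · left; exact ⟨h, hb⟩
    · rintro (h | ⟨x, y, h, rfl, rfl⟩)
      · exact h.1
      · linear_combination h.1
  have u2 : {v ∈ S | 0 < v.2} = PP n ∪ (((fun v : ℤ × ℤ => (v.1 - v.2, v.1)) '' PP n) ∪
      ((fun v : ℤ × ℤ => (-v.2, v.1 - v.2)) '' PP n)) := by
    ext ⟨a, b⟩
    simp only [Set.mem_union, Set.mem_image, Set.mem_ofPred_eq, Prod.exists, Prod.mk.injEq, mS, mP]
    constructor
    · rintro ⟨h, h0⟩
      have ha : a ≠ 0 := by rintro rfl; exact sq_ne b n (by linear_combination h)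
      have hab : a ≠ b := by rintro rfl; exact sq_ne a n (by linear_combination h)
      rcases lt_or_gt_of_ne ha with ha | ha
      · right; right
        exact ⟨b - a, -a, ⟨by linear_combination h, by omega, by omega⟩, by omega, by omega⟩
      · rcases lt_or_gt_of_ne hab with hab | hab
        · right; left
          exact ⟨b, b - a, ⟨by linear_combination h, by omega, by omega⟩, by omega, by omega⟩
        · left; exact ⟨h, h0, hab⟩
    · rintro (h | ⟨x, y, h, rfl, rfl⟩ | ⟨x, y, h, rfl, rfl⟩)
      · exact ⟨h.1, h.2.1⟩
      · exact ⟨by linear_combination h.1, by omega⟩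
      · exact ⟨by linear_combination h.1, by omega⟩
  have f1 : {v ∈ S | 0 < v.2}.Finite := hfin.subset (fun _ h => h.1)
  have f0 : (PP n).Finite := f1.subset (by rw [u2]; exact Set.subset_union_left)
  have n1 : S.ncard = {v ∈ S | 0 < v.2}.ncard + {v ∈ S | 0 < v.2}.ncard := by
    conv_lhs => rw [u1]
    rw [Set.ncard_union_eq _ f1 (f1.image _), c3]
    rw [Set.disjoint_left]
    rintro ⟨a, b⟩ h ⟨⟨x, y⟩, h2, h3⟩
    simp at h h2 h3
    omega
  have n2 : {v ∈ S | 0 < v.2}.ncard = (PP n).ncard + ((PP n).ncard + (PP n).ncard) := by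
    rw [u2, Set.ncard_union_eq _ f0 ((f0.image _).union (f0.image _)), Set.ncard_union_eq _ (f0.image _) (f0.image _), c1, c2]
    · rw [Set.disjoint_left]
      rintro ⟨a, b⟩ ⟨⟨x, y⟩, h2, h3⟩ ⟨⟨x', y'⟩, h2', h3'⟩
      rw [mP] at h2 h2'
      simp at h3 h3'
      omega
    · rw [Set.disjoint_left]
      rintro ⟨a, b⟩ h (⟨⟨x', y'⟩, h2', h3'⟩ | ⟨⟨x', y'⟩, h2', h3'⟩) <;>
      · rw [mP] at h h2'
        simp at h3'
        omega
  omega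

def CC (n : ℕ) : Set (ℕ × ℕ) := {v | v.1 ^ 2 + v.2 ^ 2 + v.2 = n + v.1 * v.2}

lemma CC_PP (n : ℕ) : (CC n).ncard = (PP n).ncard := by
  have himg : PP n = (fun v : ℕ × ℕ => (max (3 * (v.1 : ℤ) + 1) (3 * v.2 + 2), min (3 * (v.1 : ℤ) + 1) (3 * v.2 + 2))) '' CC n := by
    ext ⟨A, B⟩
    simp only [Set.mem_image, Prod.exists, Prod.mk.injEq]
    have mP : (A, B) ∈ PP n ↔ A ^ 2 - A * B + B ^ 2 = 9 * n + 3 ∧ 0 < B ∧ B < A := Iff.rfl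
    have mC : ∀ a b, (a, b) ∈ CC n ↔ (a : ℤ) ^ 2 + b ^ 2 + b = n + a * b := by
      intro a b
      have : (a, b) ∈ CC n ↔ a ^ 2 + b ^ 2 + b = n + a * b := Iff.rfl
      rw [this]
      exact_mod_cast Iff.rfl
    simp only [mP, mC]
    constructor
    · rintro ⟨h, h0, h1⟩
      have h3 : (3 : ℤ) ∣ A + B := Int.prime_three.dvd_of_dvd_pow (n := 2)
        ⟨3 * n + 1 + A * B, by linear_combination h⟩
      have hA : A % 3 ≠ 0 := by
        intro hA
        obtain ⟨x, rfl⟩ : (3 : ℤ) ∣ A := Int.dvd_of_emod_eq_zero hA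
        obtain ⟨y, rfl⟩ : (3 : ℤ) ∣ B := by omega
        have : 9 * (x ^ 2 - x * y + y ^ 2) = 9 * n + 3 := by linear_combination h
        omega
      have : A % 3 = 1 ∧ B % 3 = 2 ∨ A % 3 = 2 ∧ B % 3 = 1 := by omega
      rcases this with ⟨hA1, hB1⟩ | ⟨hA1, hB1⟩
      · obtain ⟨a, ha⟩ : ∃ a : ℕ, A = 3 * a + 1 := ⟨(A / 3).toNat, by omega⟩
        obtain ⟨b, hb⟩ : ∃ b : ℕ, B = 3 * b + 2 := ⟨(B / 3).toNat, by omega⟩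
        refine ⟨a, b, ?_, by omega, by omega⟩
        subst ha hb
        have : 9 * ((a : ℤ) ^ 2 + b ^ 2 + b) = 9 * (n + a * b) := by linear_combination h
        linarith
      · obtain ⟨a, ha⟩ : ∃ a : ℕ, B = 3 * a + 1 := ⟨(B / 3).toNat, by omega⟩
        obtain ⟨b, hb⟩ : ∃ b : ℕ, A = 3 * b + 2 := ⟨(A / 3).toNat, by omega⟩
        refine ⟨a, b, ?_, by omega, by omega⟩
        subst ha hb
        have : 9 * ((a : ℤ) ^ 2 + b ^ 2 + b) = 9 * (n + a * b) := by linear_combination h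
        linarith
    · rintro ⟨a, b, h, h1, h2⟩
      refine ⟨?_, by omega, by omega⟩
      rcases le_total (3 * (a : ℤ) + 1) (3 * b + 2) with hle | hle
      · rw [max_eq_right hle] at h1
        rw [min_eq_left hle] at h2
        subst h1 h2
        linear_combination 9 * h
      · rw [max_eq_left hle] at h1
        rw [min_eq_right hle] at h2
        subst h1 h2
        linear_combination 9 * h
  rw [himg, Set.ncard_image_of_injective]
  rintro ⟨a, b⟩ ⟨a', b'⟩ h
  simp only [Prod.mk.injEq] at h ⊢
  omega

lemma CC_card (n : ℕ) : ((CC n).ncard : ℤ) = gg (3 * n + 1) := by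
  have h1 := r_eq (3 * n + 1) (by omega)
  have h2 := R_sector n
  rw [show (3 * ((3 * n + 1 : ℕ) : ℤ)) = 9 * n + 3 by push_cast; ring, h2, ← CC_PP] at h1
  push_cast at h1
  linarith

end B3Proof

namespace B3Proof
open Finset

def ss (μ : YoungDiagram) (i : ℕ) : ℤ := (μ.rowLen i : ℤ) - i

lemma ss_anti (μ : YoungDiagram) : StrictAnti (ss μ) := by
  apply strictAnti_nat_of_succ_lt
  intro i
  have := μ.rowLen_anti i (i + 1) (by omega)
  unfold ss
  push_cast
  omega

lemma core_closed (μ : YoungDiagram) (h : μ.IsThreeCore) (x : ℤ) (hx : x ∈ Set.range (ss μ)) :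
    x - 3 ∈ Set.range (ss μ) := by
  classical
  obtain ⟨i, rfl⟩ := hx
  by_contra hn
  obtain ⟨w, hw⟩ : ∃ w, w = ss μ i - 3 := ⟨_, rfl⟩
  rw [← hw] at hn
  have hex : ∃ k, ss μ k < w := by
    refine ⟨(μ.rowLen 0 - w + 1).toNat, ?_⟩
    have := μ.rowLen_anti 0 (μ.rowLen 0 - w + 1).toNat (by omega)
    unfold ss
    omega
  have hk := Nat.find_spec hex
  have hmin : ∀ m < Nat.find hex, w < ss μ m := by
    intro m hm
    have h1 := Nat.find_min hex hm
    have h2 : ss μ m ≠ w := fun h => hn ⟨m, h⟩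
    omega
  obtain ⟨k, hkk⟩ : ∃ k, k = Nat.find hex := ⟨_, rfl⟩
  rw [← hkk] at hk hmin
  have hik : i < k := by
    by_contra hh
    have := (ss_anti μ).antitone (not_lt.1 hh)
    omega
  have hk1 := hmin (k - 1) (by omega)
  obtain ⟨j, hj⟩ : ∃ j : ℕ, (j : ℤ) = w + k - 1 := ⟨(w + k - 1).toNat, by unfold ss at hk; omega⟩
  unfold ss at hk hk1 hw
  have c1 : (k - 1, j) ∈ μ := YoungDiagram.mem_iff_lt_rowLen.2 (by omega)
  have c2 : ¬ (k, j) ∈ μ := fun h => by have := YoungDiagram.mem_iff_lt_rowLen.1 h; omega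
  rw [YoungDiagram.mem_iff_lt_colLen] at c1 c2
  have c3 : (i, j) ∈ μ := YoungDiagram.mem_iff_lt_colLen.2 (by omega)
  apply h (i, j) c3
  have : μ.hookLength i j = 3 := by
    unfold YoungDiagram.hookLength
    omega
  simp only [this]
  exact dvd_refl 3

lemma closed_core (μ : YoungDiagram) (h : ∀ x ∈ Set.range (ss μ), x - 3 ∈ Set.range (ss μ)) :
    μ.IsThreeCore := by
  rintro ⟨i, j⟩ hc ⟨m, hm⟩
  have hc : (i, j) ∈ μ := hc
  have hm : μ.hookLength i j = 3 * m := hm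
  have h1 := YoungDiagram.mem_iff_lt_colLen.1 hc
  have h2 := YoungDiagram.mem_iff_lt_rowLen.1 hc
  have hall : ∀ m : ℕ, ss μ i - 3 * m ∈ Set.range (ss μ) := by
    intro m
    induction m with
    | zero => simp
    | succ m ih =>
      have := h _ ih
      convert this using 1
      push_cast; ring
  obtain ⟨k, hk⟩ := hall m
  unfold YoungDiagram.hookLength at hm
  unfold ss at hk
  by_cases hkc : k < μ.colLen j
  · have := YoungDiagram.mem_iff_lt_rowLen.1 (YoungDiagram.mem_iff_lt_colLen.2 hkc)
    omega
  · have : ¬ (k, j) ∈ μ := fun h => hkc (YoungDiagram.mem_iff_lt_colLen.1 h)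
    rw [YoungDiagram.mem_iff_lt_rowLen] at this
    omega

lemma yd_ext (μ ν : YoungDiagram) (h : ∀ i, μ.rowLen i = ν.rowLen i) : μ = ν := by
  ext ⟨i, j⟩
  change (i, j) ∈ μ ↔ (i, j) ∈ ν
  rw [YoungDiagram.mem_iff_lt_rowLen, YoungDiagram.mem_iff_lt_rowLen, h]

def part (a b x : ℕ) : ℕ := if b ≤ a then (if x < 2 * b then x / 2 + 1 else 2 * x + 1 - 3 * b)
  else (if x < 2 * a then x / 2 + 1 else 2 * x + 2 - 3 * a)

def rl (a b i : ℕ) : ℕ := if i < a + b then part a b (a + b - 1 - i) else 0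

lemma rl_anti (a b i j : ℕ) (h : i ≤ j) : rl a b j ≤ rl a b i := by
  unfold rl part
  split_ifs <;> omega

def T (a b : ℕ) : YoungDiagram where
  cells := (range (a + b)).biUnion (fun i => (range (rl a b i)).image (fun j => (i, j)))
  isLowerSet := by
    rintro ⟨i, j⟩ ⟨i', j'⟩ ⟨h1, h2⟩ h
    simp only [coe_biUnion, coe_image, Set.mem_iUnion, Set.mem_image, Finset.mem_coe, Finset.mem_range,
      Prod.mk.injEq] at h ⊢
    simp only at h1 h2
    obtain ⟨_, h3, _, h4, rfl, rfl⟩ := h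
    have := rl_anti a b i' _ h1
    exact ⟨i', by omega, j', by omega, rfl, rfl⟩

lemma T_row (a b i : ℕ) : (T a b).rowLen i = rl a b i := by
  have : ∀ j, j < (T a b).rowLen i ↔ j < rl a b i := by
    intro j
    rw [← YoungDiagram.mem_iff_lt_rowLen]
    change (i, j) ∈ (T a b).cells ↔ _
    simp only [T, Finset.mem_biUnion, Finset.mem_image, Finset.mem_range, Prod.mk.injEq]
    constructor
    · rintro ⟨_, _, _, h, rfl, rfl⟩; exact h
    · intro h
      refine ⟨i, ?_, j, h, rfl, rfl⟩
      by_contra hh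
      simp [rl, hh] at h
  have h1 := this (rl a b i)
  have h2 := this ((T a b).rowLen i)
  omega

lemma sum_half (b : ℕ) : ∑ x ∈ range (2 * b), (x / 2 + 1) = b * (b + 1) := by
  induction b with
  | zero => simp
  | succ b ih =>
    rw [show 2 * (b + 1) = 2 * b + 1 + 1 by ring, Finset.sum_range_succ, Finset.sum_range_succ, ih,
      show 2 * b / 2 = b by omega, show (2 * b + 1) / 2 = b by omega]
    ring

lemma sum_lin (c t : ℕ) : ∑ x ∈ range t, (c + 1 + 2 * x) = t * (c + t) := by
  induction t with
  | zero => simp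
  | succ t ih => rw [Finset.sum_range_succ, ih]; ring

lemma sum_part (a b : ℕ) : (∑ x ∈ range (a + b), part a b x) + a * b = a ^ 2 + b ^ 2 + b := by
  by_cases h : b ≤ a
  · obtain ⟨t, rfl⟩ := Nat.exists_eq_add_of_le h
    rw [show b + t + b = 2 * b + t by ring, Finset.sum_range_add]
    have e1 : ∑ x ∈ range (2 * b), part (b + t) b x = b * (b + 1) := by
      rw [← sum_half]
      apply Finset.sum_congr rfl
      intro x hx
      have := Finset.mem_range.1 hx
      simp [part, this]
    have e2 : ∑ x ∈ range t, part (b + t) b (2 * b + x) = t * (b + t) := by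
      rw [← sum_lin]
      apply Finset.sum_congr rfl
      intro x hx
      unfold part
      split_ifs <;> omega
    rw [e1, e2]; ring
  · obtain ⟨t, rfl⟩ := Nat.exists_eq_add_of_le (not_le.1 h).le
    rw [show a + (a + t) = 2 * a + t by ring, Finset.sum_range_add]
    have e1 : ∑ x ∈ range (2 * a), part a (a + t) x = a * (a + 1) := by
      rw [← sum_half]
      apply Finset.sum_congr rfl
      intro x hx
      have := Finset.mem_range.1 hx
      simp only [part, if_neg h, if_pos this]
    have e2 : ∑ x ∈ range t, part a (a + t) (2 * a + x) = t * (a + 1 + t) := by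
      rw [← sum_lin]
      apply Finset.sum_congr rfl
      intro x hx
      unfold part
      split_ifs <;> omega
    rw [e1, e2]; ring

lemma T_card (a b : ℕ) : (T a b).card + a * b = a ^ 2 + b ^ 2 + b := by
  rw [← sum_part]
  congr 1
  change (T a b).cells.card = _
  rw [T, Finset.card_biUnion]
  · rw [← Finset.sum_range_reflect]
    apply Finset.sum_congr rfl
    intro i hi
    rw [Finset.card_image_of_injective _ (by intro x y h; simpa using h), Finset.card_range]
    have := Finset.mem_range.1 hi
    unfold rl
    rw [if_pos (by omega)]
    congr 1
    omega
  · intro i _ j _ hij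
    rw [Function.onFun, Finset.disjoint_left]
    rintro ⟨x, y⟩ h1 h2
    simp at h1 h2
    omega

def EE (a b : ℕ) (y : ℤ) : Prop := (y % 3 = 0 ∧ y < 0) ∨ (y % 3 = 1 ∧ y < 3 * a) ∨ (y % 3 = 2 ∧ y < 3 * b)

lemma T_range (a b : ℕ) (x : ℤ) : x ∈ Set.range (ss (T a b)) ↔ EE a b (x + (a + b) - 1) := by
  constructor
  · rintro ⟨i, rfl⟩
    unfold ss EE
    rw [T_row]
    unfold rl part
    split_ifs <;> omega
  · intro h
    have key : ∀ i : ℕ, (rl a b i : ℤ) - i = x → x ∈ Set.range (ss (T a b)) := by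
      intro i hi
      refine ⟨i, ?_⟩
      unfold ss
      rw [T_row, hi]
    obtain ⟨y, hy⟩ : ∃ y, y = x + (a + b) - 1 := ⟨_, rfl⟩
    rw [← hy] at h
    by_cases hneg : y < 0
    · apply key (a + b - 1 - y).toNat
      unfold rl
      split_ifs <;> omega
    · have : (∃ t : ℕ, t < a ∧ y = 3 * t + 1) ∨ (∃ t : ℕ, t < b ∧ y = 3 * t + 2) := by
        unfold EE at h
        rcases h with h | h | h
        · omega
        · left; exact ⟨(y / 3).toNat, by omega, by omega⟩
        · right; exact ⟨(y / 3).toNat, by omega, by omega⟩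
      rcases this with ⟨t, h1, h2⟩ | ⟨t, h1, h2⟩
      · by_cases htb : t < b
        · apply key (a + b - 1 - 2 * t)
          unfold rl part
          split_ifs <;> omega
        · apply key (a + b - 1 - (t + b))
          unfold rl part
          split_ifs <;> omega
      · by_cases htb : t < a
        · apply key (a + b - 1 - (2 * t + 1))
          unfold rl part
          split_ifs <;> omega
        · apply key (a + b - 1 - (t + a))
          unfold rl part
          split_ifs <;> omega

lemma T_core (a b : ℕ) : (T a b).IsThreeCore := by
  apply closed_core
  intro x hx
  rw [T_range] at hx ⊢
  unfold EE at hx ⊢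
  omega

lemma rl_pos (a b i : ℕ) : 0 < rl a b i ↔ i < a + b := by
  unfold rl part
  split_ifs <;> omega

lemma T_inj (a b a' b' : ℕ) (h : T a b = T a' b') : a = a' ∧ b = b' := by
  have hr : ∀ i, rl a b i = rl a' b' i := by
    intro i; rw [← T_row, ← T_row, h]
  have hs : a + b = a' + b' := by
    have h1 := hr (a + b)
    have h2 := hr (a' + b')
    have k1 := rl_pos a b (a + b)
    have k2 := rl_pos a b (a' + b')
    have k3 := rl_pos a' b' (a + b)
    have k4 := rl_pos a' b' (a' + b')
    omega
  have hE : ∀ y, EE a b y ↔ EE a' b' y := by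
    intro y
    have h1 := T_range a b (y - (a + b) + 1)
    have h2 := T_range a' b' (y - (a + b) + 1)
    rw [h] at h1
    have h3 := h1.symm.trans h2
    have e1 : y - ((a : ℤ) + b) + 1 + (a + b) - 1 = y := by ring
    have e2 : y - ((a : ℤ) + b) + 1 + (a' + b') - 1 = y := by omega
    rwa [e1, e2] at h3
  have e : ∀ a b : ℕ, ∀ t : ℕ, EE a b (3 * t + 1) ↔ t < a := by
    intro a b t
    unfold EE
    omega
  have h1 := hE (3 * a + 1)
  have h2 := hE (3 * a' + 1)
  rw [e, e] at h1 h2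
  omega

lemma ss_tail (μ : YoungDiagram) (i : ℕ) (h : μ.colLen 0 ≤ i) : ss μ i = -i := by
  have : ¬ (i, 0) ∈ μ := fun h' => by have := YoungDiagram.mem_iff_lt_colLen.1 h'; omega
  rw [YoungDiagram.mem_iff_lt_rowLen] at this
  unfold ss
  omega

lemma ss_head (μ : YoungDiagram) (i : ℕ) (h : i < μ.colLen 0) : 1 - (i : ℤ) ≤ ss μ i := by
  have := YoungDiagram.mem_iff_lt_rowLen.1 (YoungDiagram.mem_iff_lt_colLen.2 h)
  unfold ss
  omega

lemma down (S : Set ℤ) (h : ∀ x ∈ S, x - 3 ∈ S) (x : ℤ) (hx : x ∈ S) (m : ℕ) : x - 3 * m ∈ S := by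
  induction m with
  | zero => simpa
  | succ m ih =>
    have := h _ ih
    convert this using 1
    push_cast; ring

lemma T_surj (μ : YoungDiagram) (h : μ.IsThreeCore) : ∃ a b, T a b = μ := by
  classical
  obtain ⟨r, hr⟩ : ∃ r, r = μ.colLen 0 := ⟨_, rfl⟩
  obtain ⟨S, hS⟩ : ∃ S : Set ℤ, S = {y : ℤ | y - r + 1 ∈ Set.range (ss μ)} := ⟨_, rfl⟩
  have mS : ∀ y, y ∈ S ↔ y - r + 1 ∈ Set.range (ss μ) := by intro y; rw [hS]; rfl
  have hcl : ∀ y ∈ S, y - 3 ∈ S := by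
    intro y hy
    rw [mS] at hy ⊢
    have := core_closed μ h _ hy
    convert this using 1
    ring
  have hneg : ∀ y : ℤ, y < 0 → y ∈ S := by
    intro y hy
    rw [mS]
    refine ⟨(r - y - 1).toNat, ?_⟩
    rw [ss_tail μ _ (by omega)]
    omega
  have h0 : (0 : ℤ) ∉ S := by
    rw [mS]
    rintro ⟨i, hi⟩
    by_cases hir : i < r
    · have := ss_head μ i (by omega)
      omega
    · have := ss_tail μ i (by omega)
      omega
  have hbd : ∀ y ∈ S, y ≤ μ.rowLen 0 + r := by
    intro y hy
    rw [mS] at hy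
    obtain ⟨i, hi⟩ := hy
    have := (ss_anti μ).antitone (Nat.zero_le i)
    rw [hi] at this
    unfold ss at this
    omega
  have hc : ∀ c : ℤ, (0 < c) → c < 3 → ∃ a : ℕ, ∀ y, y % 3 = c % 3 → (y ∈ S ↔ y < 3 * a + c) := by
    intro c hc0 hc3
    have hex : ∃ a : ℕ, 3 * (a : ℤ) + c ∉ S := by
      refine ⟨(μ.rowLen 0 + r), fun hh => ?_⟩
      have := hbd _ hh
      push_cast at this
      omega
    have h1 := Nat.find_spec hex
    have h2 : ∀ m < Nat.find hex, 3 * (m : ℤ) + c ∈ S := fun m hm => by simpa using Nat.find_min hex hm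
    refine ⟨Nat.find hex, fun y hy => ?_⟩
    generalize Nat.find hex = a at h1 h2
    constructor
    · intro hyS
      by_contra hh
      have := down S hcl y hyS ((y - c - 3 * a) / 3).toNat
      apply h1
      convert this using 1
      omega
    · intro hlt
      by_cases hyc : y < c
      · exact hneg y (by omega)
      · have := h2 ((y - c) / 3).toNat (by omega)
        convert this using 1
        omega
  obtain ⟨a, ha⟩ := hc 1 (by norm_num) (by norm_num)
  obtain ⟨b, hb⟩ := hc 2 (by norm_num) (by norm_num)
  have hSE : ∀ y, y ∈ S ↔ EE a b y := by
    intro y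
    have h3 : y % 3 = 0 ∨ y % 3 = 1 ∨ y % 3 = 2 := by omega
    rcases h3 with h3 | h3 | h3
    · have : y ∈ S ↔ y < 0 := by
        constructor
        · intro hy
          by_contra hh
          have := down S hcl y hy (y / 3).toNat
          apply h0
          convert this using 1
          omega
        · exact hneg y
      rw [this]; unfold EE; omega
    · rw [ha y (by omega)]; unfold EE; omega
    · rw [hb y (by omega)]; unfold EE; omega
  have hfg : (fun i => -(ss μ i + r - 1)) = (fun i => -(ss (T a b) i + (a + b) - 1)) := by
    rw [← StrictMono.range_inj]
    · ext z
      have e1 : z ∈ Set.range (fun i => -(ss μ i + r - 1)) ↔ -z ∈ S := by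
        rw [mS]
        constructor
        · rintro ⟨i, rfl⟩; exact ⟨i, by ring⟩
        · rintro ⟨i, hi⟩; exact ⟨i, by simp only; rw [hi]; ring⟩
      have e2 : z ∈ Set.range (fun i => -(ss (T a b) i + (a + b) - 1)) ↔ EE a b (-z) := by
        have := T_range a b (-z - (a + b) + 1)
        rw [show -z - ((a : ℤ) + b) + 1 + (a + b) - 1 = -z by ring] at this
        rw [← this]
        constructor
        · rintro ⟨i, rfl⟩; exact ⟨i, by ring⟩
        · rintro ⟨i, hi⟩; exact ⟨i, by simp only; rw [hi]; ring⟩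
      rw [e1, e2, hSE]
    · intro i j hij
      have := ss_anti μ hij
      simp only; omega
    · intro i j hij
      have := ss_anti (T a b) hij
      simp only; omega
  have hp : ∀ i, ss μ i + r = ss (T a b) i + (a + b) := by
    intro i
    have : -(ss μ i + r - 1) = -(ss (T a b) i + (a + b) - 1) := congrFun hfg i
    omega
  have hrab : (r : ℤ) = a + b := by
    have h1 := hp (μ.colLen 0 + (T a b).colLen 0)
    rw [ss_tail μ _ (by omega), ss_tail (T a b) _ (by omega)] at h1
    omega
  refine ⟨a, b, yd_ext _ _ fun i => ?_⟩
  have := hp i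
  unfold ss at this
  omega

end B3Proof

namespace B3Proof
open Finset

lemma pair_count {α β : Type*} (f : α → ℕ) (g : β → ℕ) (hf : ∀ k, {x | f x = k}.Finite)
    (hg : ∀ k, {x | g x = k}.Finite) (n : ℕ) :
    {p : α × β | f p.1 + g p.2 = n}.Finite ∧ {p : α × β | f p.1 + g p.2 = n}.ncard =
      ∑ ij ∈ antidiagonal n, {x | f x = ij.1}.ncard * {x | g x = ij.2}.ncard := by
  classical
  have h : {p : α × β | f p.1 + g p.2 = n} =
      (((antidiagonal n).biUnion (fun ij => (hf ij.1).toFinset ×ˢ (hg ij.2).toFinset) : Finset (α × β)) : Set (α × β)) := by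
    ext ⟨x, y⟩
    simp
  rw [h]
  refine ⟨Finset.finite_toSet _, ?_⟩
  rw [Set.ncard_coe_finset, Finset.card_biUnion]
  · apply Finset.sum_congr rfl
    intro ij _
    rw [Finset.card_product, Set.ncard_eq_toFinset_card _ (hf _), Set.ncard_eq_toFinset_card _ (hg _)]
  · rintro ⟨i, j⟩ _ ⟨i', j'⟩ _ hne
    rw [Function.onFun, Finset.disjoint_left]
    rintro ⟨x, y⟩ h1 h2
    simp at h1 h2
    apply hne
    ext <;> simp <;> omega

def qq (v : ℕ × ℕ) : ℕ := (T v.1 v.2).card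

lemma qq_set (k : ℕ) : {v | qq v = k} = CC k := by
  ext ⟨a, b⟩
  have := T_card a b
  change (T a b).card = k ↔ a ^ 2 + b ^ 2 + b = k + a * b
  omega

lemma qq_fin (k : ℕ) : {v | qq v = k}.Finite := by
  apply Set.Finite.subset (Finset.finite_toSet (range (4 * k + 4) ×ˢ range (4 * k + 4)))
  rintro ⟨a, b⟩ h
  have h : (T a b).card = k := h
  have h1 := T_card a b
  rw [h] at h1
  simp only [coe_product, coe_range, Set.mem_prod, Set.mem_Iio]
  zify at h1 ⊢
  constructor
  · nlinarith [sq_nonneg ((a : ℤ) - 2 * b), sq_nonneg ((a : ℤ) - 2)]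
  · nlinarith [sq_nonneg (2 * (a : ℤ) - b)]

lemma B3_eq (n : ℕ) : B3 n = {p : (ℕ × ℕ) × ((ℕ × ℕ) × (ℕ × ℕ)) | qq p.1 + (qq p.2.1 + qq p.2.2) = n}.ncard := by
  rw [← Nat.card_coe_set_eq]
  unfold B3
  symm
  apply Nat.card_congr
  refine Equiv.ofBijective (fun p => ⟨(T p.1.1.1 p.1.1.2, T p.1.2.1.1 p.1.2.1.2, T p.1.2.2.1 p.1.2.2.2), ?_, T_core _ _,
    T_core _ _, T_core _ _⟩) ⟨?_, ?_⟩
  · have : qq p.1.1 + (qq p.1.2.1 + qq p.1.2.2) = n := p.2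
    unfold qq at this
    simp only
    omega
  · rintro ⟨⟨⟨a, b⟩, ⟨c, d⟩, ⟨e, f⟩⟩, h⟩ ⟨⟨⟨a', b'⟩, ⟨c', d'⟩, ⟨e', f'⟩⟩, h'⟩ heq
    simp only [Subtype.mk.injEq, Prod.mk.injEq] at heq ⊢
    exact ⟨T_inj _ _ _ _ heq.1, T_inj _ _ _ _ heq.2.1, T_inj _ _ _ _ heq.2.2⟩
  · rintro ⟨⟨μ, ν, κ⟩, h, h1, h2, h3⟩
    obtain ⟨a, b, rfl⟩ := T_surj μ h1
    obtain ⟨c, d, rfl⟩ := T_surj ν h2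
    obtain ⟨e, f, rfl⟩ := T_surj κ h3
    refine ⟨⟨((a, b), (c, d), (e, f)), ?_⟩, rfl⟩
    change (T a b).card + ((T c d).card + (T e f).card) = n
    simp only at h
    omega

lemma B3_sum (n : ℕ) : (B3 n : ℤ) = ∑ x ∈ antidiagonal n, gg (3 * x.1 + 1) *
    ∑ y ∈ antidiagonal x.2, gg (3 * y.1 + 1) * gg (3 * y.2 + 1) := by
  rw [B3_eq, (pair_count qq (fun p : (ℕ × ℕ) × (ℕ × ℕ) => qq p.1 + qq p.2) qq_fin
    (fun k => (pair_count qq qq qq_fin qq_fin k).1) n).2]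
  push_cast
  apply Finset.sum_congr rfl
  intro x _
  rw [(pair_count qq qq qq_fin qq_fin x.2).2]
  push_cast
  simp only [qq_set, CC_card]

lemma conv1 (l : ℕ) : 3 * ∑ y ∈ antidiagonal l, gg (3 * y.1 + 1) * gg (3 * y.2 + 1) =
    ∑ d ∈ (3 * l + 2).divisors, (d : ℤ) := by
  have h := id1 (3 * l + 2) (by omega)
  have e : ∑ km ∈ antidiagonal (3 * l + 2), (if km.1 % 3 = 1 then 2 * gg km.1 else 0) * (if km.2 % 3 = 1 then 2 * gg km.2 else 0)
      = ∑ y ∈ antidiagonal l, 4 * (gg (3 * y.1 + 1) * gg (3 * y.2 + 1)) := by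
    symm
    apply Finset.sum_of_injOn (fun y => (3 * y.1 + 1, 3 * y.2 + 1))
    · rintro ⟨a, b⟩ _ ⟨a', b'⟩ _ h
      simp at h ⊢; omega
    · rintro ⟨a, b⟩ h
      simp at h ⊢; omega
    · rintro ⟨a, b⟩ h1 h2
      simp only [Set.mem_image, Finset.mem_coe, HasAntidiagonal.mem_antidiagonal, Prod.mk.injEq, Prod.exists] at h1 h2
      simp only
      by_cases ha : a % 3 = 1
      · by_cases hb : b % 3 = 1
        · exact absurd ⟨a / 3, b / 3, by omega, by omega, by omega⟩ h2
        · simp [hb]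
      · simp [ha]
    · rintro ⟨a, b⟩ h
      have h1 : (3 * a + 1) % 3 = 1 := by omega
      have h2 : (3 * b + 1) % 3 = 1 := by omega
      simp only [h1, h2, if_true]; ring
  rw [e, ← Finset.mul_sum] at h
  linarith

lemma conv2 (n : ℕ) : ∑ x ∈ antidiagonal n, gg (3 * x.1 + 1) * ∑ d ∈ (3 * x.2 + 2).divisors, (d : ℤ) =
    3 * ∑ d ∈ (n + 1).divisors, chi d * (((n + 1) / d : ℕ) : ℤ) ^ 2 := by
  have h := id2 (n + 1)
  have e : ∑ km ∈ antidiagonal (3 * (n + 1)), (if km.1 % 3 = 1 then 2 * gg km.1 else 0) *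
      (if km.2 % 3 = 2 then 2 * ∑ d ∈ km.2.divisors, (d : ℤ) else 0)
      = ∑ x ∈ antidiagonal n, 4 * (gg (3 * x.1 + 1) * ∑ d ∈ (3 * x.2 + 2).divisors, (d : ℤ)) := by
    symm
    apply Finset.sum_of_injOn (fun y => (3 * y.1 + 1, 3 * y.2 + 2))
    · rintro ⟨a, b⟩ _ ⟨a', b'⟩ _ h
      simp at h ⊢; omega
    · rintro ⟨a, b⟩ h
      simp at h ⊢; omega
    · rintro ⟨a, b⟩ h1 h2
      simp only [Set.mem_image, Finset.mem_coe, HasAntidiagonal.mem_antidiagonal, Prod.mk.injEq, Prod.exists] at h1 h2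
      simp only
      by_cases ha : a % 3 = 1
      · by_cases hb : b % 3 = 2
        · exact absurd ⟨a / 3, b / 3, by omega, by omega, by omega⟩ h2
        · simp [hb]
      · simp [ha]
    · rintro ⟨a, b⟩ h
      have h1 : (3 * a + 1) % 3 = 1 := by omega
      have h2 : (3 * b + 2) % 3 = 2 := by omega
      simp only [h1, h2, if_true]; ring
  rw [e, ← Finset.mul_sum] at h
  linarith

lemma final (n : ℕ) : (B3 n : ℤ) = ∑ d ∈ (n + 1).divisors, chi d * (((n + 1) / d : ℕ) : ℤ) ^ 2 := by
  have h2 := conv2 n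
  simp only [← conv1] at h2
  rw [B3_sum]
  have : ∑ x ∈ antidiagonal n, gg (3 * x.1 + 1) * (3 * ∑ y ∈ antidiagonal x.2, gg (3 * y.1 + 1) * gg (3 * y.2 + 1))
    = 3 * ∑ x ∈ antidiagonal n, gg (3 * x.1 + 1) * ∑ y ∈ antidiagonal x.2, gg (3 * y.1 + 1) * gg (3 * y.2 + 1) := by
    rw [Finset.mul_sum]
    exact Finset.sum_congr rfl (fun x _ => by ring)
  rw [this] at h2
  linarith

end B3Proof

/-- B₃(n) = ∑_{d ∣ n+1, d ≡ 1 (3)} ((n+1)/d)² − ∑_{d ∣ n+1, d ≡ 2 (3)} ((n+1)/d)². -/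
theorem B3_explicit_sum (n : ℕ) :
    (B3 n : ℤ) =
      (∑ d ∈ (n + 1).divisors.filter (fun d => d % 3 = 1), (((n + 1) / d : ℕ) : ℤ) ^ 2) -
      (∑ d ∈ (n + 1).divisors.filter (fun d => d % 3 = 2), (((n + 1) / d : ℕ) : ℤ) ^ 2) := by
  rw [B3Proof.final, Finset.sum_filter, Finset.sum_filter, ← Finset.sum_sub_distrib]
  apply Finset.sum_congr rfl
  intro d _
  unfold B3Proof.chi
  split_ifs <;> first | omega | ring
end

section
/- Let n ≥ 0 be an integer and write n+1 = 3^α · ∏_{i} p_i^{α_i} · ∏_{j} q_j^{β_j} as its prime factorization, where the p_i are the distinct primes ≡ 1 (mod 3) dividing n+1 with exponents α_i ≥ 1, and the q_j are the distinct primes ≡ 2 (mod 3) dividing n+1 with exponents β_j ≥ 1, and α ≥ 0. Then B_3(n)·∏_i (p_i² − 1)·∏_j (q_j² + 1) = 3^{2α}·∏_i (p_i^{2(α_i+1)} − 1)·∏_j (q_j^{2β_j+2} + (−1)^{β_j}). -/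
section
namespace B3P
open Filter Topology

/-- Lambert type term. -/
noncomputable def lam (q : ℝ) (j i : ℕ) (n : ℤ) : ℝ := q ^ ((j : ℤ) * n) / (1 - q ^ (3 * n + 1)) ^ i

lemma den_ne {q : ℝ} (h0 : 0 < q) (h1 : q < 1) (n : ℤ) : 1 - q ^ (3 * n + 1) ≠ 0 := by
  intro h
  have h2 : q ^ (3 * n + 1) = q ^ (0 : ℤ) := by simp; linarith
  have := (zpow_right_injective₀ h0 h1.ne) h2
  omega

lemma tden_ne {q : ℝ} (h0 : 0 < q) (h1 : q < 1) {k : ℤ} (hk : k ≠ 0) : 1 - q ^ (3 * k) ≠ 0 := by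
  intro h
  have h2 : q ^ (3 * k) = q ^ (0 : ℤ) := by simp; linarith
  have := (zpow_right_injective₀ h0 h1.ne) h2
  omega

lemma lam_nat (q : ℝ) (j i n : ℕ) : lam q j i n = (q ^ j) ^ n / (1 - q ^ (3 * n + 1)) ^ i := by
  unfold lam
  rw [← pow_mul]
  norm_cast

lemma lam_neg {q : ℝ} (h0 : 0 < q) (h1 : q < 1) (j i n : ℕ) (h : j < 3 * i) :
    lam q j i (-((n : ℤ) + 1)) =
      (-1) ^ i * q ^ (2 * (i : ℤ) - j) * (q ^ (3 * i - j)) ^ n / (1 - q ^ (3 * n + 2)) ^ i := by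
  have hne : (1 - q ^ (3 * n + 2)) ≠ 0 := by
    have : q ^ (3 * n + 2) < 1 := pow_lt_one₀ h0.le h1 (by omega)
    linarith
  have hne' := hne
  have e1 : (1 : ℝ) - q ^ (3 * (-((n : ℤ) + 1)) + 1) = - (1 - q ^ (3 * n + 2)) * q ^ (-(3 * (n : ℤ) + 2)) := by
    have : q ^ (3 * n + 2) * q ^ (-(3 * (n : ℤ) + 2)) = 1 := by
      rw [← zpow_natCast, ← zpow_add₀ h0.ne']
      push_cast
      simp
    have h3 : 3 * (-((n : ℤ) + 1)) + 1 = -(3 * (n : ℤ) + 2) := by ring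
    rw [h3]
    linear_combination -this
  unfold lam
  rw [e1, mul_pow, neg_pow, div_eq_div_iff (by positivity) (by positivity)]
  have e2 : q ^ ((j : ℤ) * (-((n : ℤ) + 1))) =
      q ^ (2 * (i : ℤ) - j) * (q ^ (3 * i - j)) ^ n * (q ^ (-(3 * (n : ℤ) + 2))) ^ i := by
    rw [← zpow_natCast (q ^ (-(3 * (n : ℤ) + 2))), ← zpow_mul, ← pow_mul, ← zpow_natCast q, ← zpow_add₀ h0.ne',
      ← zpow_add₀ h0.ne']
    congr 1
    push_cast [h.le]
    ring
  rw [e2]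
  have e3 : ((-1 : ℝ) ^ i) * (-1) ^ i = 1 := by rw [← mul_pow]; simp
  linear_combination (-(q ^ (2 * (i : ℤ) - j) * (q ^ (3 * i - j)) ^ n * (q ^ (-(3 * (n : ℤ) + 2))) ^ i) *
    (1 - q ^ (3 * n + 2)) ^ i) * e3

lemma lam_summable {q : ℝ} (h0 : 0 < q) (h1 : q < 1) {j i : ℕ} (hj : 0 < j) (h : j < 3 * i) :
    Summable (lam q j i) := by
  have hb : ∀ m : ℕ, m ≠ 0 → 1 - q ≤ 1 - q ^ m := by
    intro m hm
    have := pow_le_of_le_one h0.le h1.le hm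
    linarith
  have hq : 0 < 1 - q := by linarith
  apply Summable.of_nat_of_neg_add_one
  · have hs : Summable fun n : ℕ => (q ^ j) ^ n / (1 - q) ^ i :=
      (summable_geometric_of_lt_one (by positivity) (pow_lt_one₀ h0.le h1 hj.ne')).div_const _
    refine Summable.of_norm_bounded hs ?_
    intro n
    have h2 := hb (3 * n + 1) (by omega)
    rw [lam_nat, Real.norm_of_nonneg (div_nonneg (by positivity) (pow_nonneg (by linarith) _))]
    gcongr
  · have hs : Summable fun n : ℕ => q ^ (2 * (i : ℤ) - j) * (q ^ (3 * i - j)) ^ n / (1 - q) ^ i :=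
      ((summable_geometric_of_lt_one (by positivity)
        (pow_lt_one₀ h0.le h1 (by omega))).mul_left _).div_const _
    refine Summable.of_norm_bounded hs ?_
    intro n
    have h2 := hb (3 * n + 2) (by omega)
    rw [lam_neg h0 h1 _ _ _ h, mul_assoc, mul_div_assoc, norm_mul, norm_pow, norm_neg, norm_one, one_pow, one_mul,
      Real.norm_of_nonneg (div_nonneg (by positivity) (pow_nonneg (by linarith) _))]
    gcongr

lemma lam21 {q : ℝ} (h0 : 0 < q) (h1 : q < 1) : ∑' n, lam q 2 1 n = 0 := by
  have hs := lam_summable h0 h1 (j := 2) (i := 1) (by norm_num) (by norm_num)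
  have hs' : (Summable fun n : ℕ => lam q 2 1 (n : ℤ)) ∧ Summable fun n : ℕ => lam q 2 1 (-((n : ℤ) + 1)) :=
    ⟨hs.comp_injective Nat.cast_injective, hs.comp_injective (i := fun n : ℕ => -((n : ℤ) + 1)) (fun a b h => by simpa using h)⟩
  rw [tsum_of_nat_of_neg_add_one hs'.1 hs'.2]
  let f : ℕ → ℕ → ℝ := fun n m => q ^ (2 * n + (3 * n + 1) * m)
  have hf : Summable (Function.uncurry f) := by
    have hg : Summable fun n : ℕ => q ^ n := summable_geometric_of_lt_one h0.le h1
    have := summable_mul_of_summable_norm hg.norm hg.norm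
    refine Summable.of_nonneg_of_le (fun x => ?_) (fun x => ?_) this
    · simp only [Function.uncurry, f]; positivity
    · simp only [Function.uncurry, f]
      rw [← pow_add]
      apply pow_le_pow_of_le_one h0.le h1.le
      nlinarith [Nat.zero_le (x.1 * x.2)]
  have e1 : ∀ n : ℕ, lam q 2 1 (n : ℤ) = ∑' m, f n m := by
    intro n
    rw [lam_nat]
    have : ∀ m, f n m = q ^ (2 * n) * (q ^ (3 * n + 1)) ^ m := by
      intro m
      simp only [f, ← pow_mul, ← pow_add]
    simp only [this]
    rw [tsum_mul_left, tsum_geometric_of_lt_one (by positivity) (pow_lt_one₀ h0.le h1 (by omega))]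
    rw [← pow_mul, pow_one]; rfl
  have e2 : ∀ n : ℕ, lam q 2 1 (-((n : ℤ) + 1)) = - ∑' m, f m n := by
    intro n
    rw [lam_neg h0 h1 _ _ _ (by norm_num)]
    have : ∀ m, f m n = q ^ n * (q ^ (3 * n + 2)) ^ m := by
      intro m
      simp only [f, ← pow_mul, ← pow_add]
      congr 1; ring
    simp only [this]
    rw [tsum_mul_left, tsum_geometric_of_lt_one (by positivity) (pow_lt_one₀ h0.le h1 (by omega))]
    simp [div_eq_mul_inv]
  simp only [e1, e2]
  rw [tsum_neg, hf.tsum_comm]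
  ring

lemma tsum_shift (f : ℤ → ℝ) (k : ℤ) : ∑' n, f (n + k) = ∑' n, f n :=
  (Equiv.addRight k).tsum_eq f

lemma summable_shift {f : ℤ → ℝ} (hf : Summable f) (k : ℤ) : Summable fun n => f (n + k) :=
  hf.comp_injective (i := fun n => n + k) (add_left_injective k)

lemma alg1 {x y q A B T : ℝ} (hA : A = 1 - x ^ 3 * q) (hB : B = 1 - x ^ 3 * y ^ 3 * q) (hT : T = 1 - y ^ 3)
    (a : A ≠ 0) (b : B ≠ 0) (t : T ≠ 0) :
    x / A ^ 1 * (x * y / B ^ 1) = y / T * (x ^ 2 / A ^ 1) - y ^ 2 / T * ((x * y) ^ 2 / B ^ 1) := by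
  field_simp
  rw [hA, hB, hT]
  ring

lemma alg2 {x y q A B T : ℝ} (hA : A = 1 - x ^ 3 * q) (hB : B = 1 - x ^ 3 * y ^ 3 * q) (hT : T = 1 - y ^ 3)
    (a : A ≠ 0) (b : B ≠ 0) (t : T ≠ 0) :
    x ^ 1 / A ^ 1 * ((x * y) ^ 2 / B ^ 2) + q * (x ^ 4 / A ^ 2 * ((x * y) ^ 2 / B ^ 1)) =
      y ^ 2 / T * (x ^ 3 / A ^ 2) - y ^ 2 / T * ((x * y) ^ 3 / B ^ 2) := by
  field_simp
  rw [hA, hB, hT]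
  ring

/-- shear -/
def shear : ℤ × ℤ ≃ ℤ × ℤ where
  toFun x := (x.2, x.2 + x.1)
  invFun x := (x.2 - x.1, x.1)
  left_inv x := by simp
  right_inv x := by simp

lemma diag_sum (v : ℤ × ℤ → ℝ) (hv : Summable v) (h : ∀ k ≠ 0, ∑' n, v (n, n + k) = 0) :
    ∑' x, v x = ∑' n, v (n, n) := by
  rw [← shear.tsum_eq v]
  have : Summable fun x => v (shear x) := shear.summable_iff.2 hv
  rw [this.tsum_prod, tsum_eq_single 0]
  · simp [shear]
  · intro k hk
    exact h k hk

lemma lam_sq {q : ℝ} (h0 : 0 < q) (h1 : q < 1) :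
    (∑' n, lam q 1 1 n) ^ 2 = ∑' n, lam q 2 2 n := by
  have hs := lam_summable h0 h1 (j := 1) (i := 1) (by norm_num) (by norm_num)
  have hs2 := lam_summable h0 h1 (j := 2) (i := 1) (by norm_num) (by norm_num)
  rw [sq, tsum_mul_tsum_of_summable_norm hs.norm hs.norm,
    diag_sum _ (summable_mul_of_summable_norm hs.norm hs.norm)]
  · apply tsum_congr
    intro n
    simp only [lam]
    rw [div_mul_div_comm, ← zpow_add₀ h0.ne']
    congr 1
    · congr 1; push_cast; ring
    · ring
  · intro k hk
    have key : ∀ n : ℤ, lam q 1 1 n * lam q 1 1 (n + k) =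
        q ^ k / (1 - q ^ (3 * k)) * lam q 2 1 n - q ^ (2 * k) / (1 - q ^ (3 * k)) * lam q 2 1 (n + k) := by
      intro n
      have d1 := den_ne h0 h1 n
      have d2 := den_ne h0 h1 (n + k)
      have d3 := tden_ne h0 h1 hk
      simp only [lam]
      have e1 : q ^ (3 * (n + k) + 1) = (q ^ n) ^ 3 * (q ^ k) ^ 3 * q := by
        rw [← zpow_natCast, ← zpow_natCast (q ^ k), ← zpow_mul, ← zpow_mul, ← zpow_add₀ h0.ne', ← zpow_add_one₀ h0.ne']
        congr 1; push_cast; ring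
      have e2 : q ^ (3 * n + 1) = (q ^ n) ^ 3 * q := by
        rw [← zpow_natCast, ← zpow_mul, ← zpow_add_one₀ h0.ne']
        congr 1; push_cast; ring
      have e3 : q ^ (3 * k) = (q ^ k) ^ 3 := by
        rw [← zpow_natCast, ← zpow_mul]
        congr 1; push_cast; ring
      have e4 : q ^ (2 * k) = (q ^ k) ^ 2 := by
        rw [← zpow_natCast, ← zpow_mul]
        congr 1; push_cast; ring
      have e5 : q ^ (((2 : ℕ) : ℤ) * n) = (q ^ n) ^ 2 := by
        rw [← zpow_natCast, ← zpow_mul]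
        congr 1; push_cast; ring
      have e6 : q ^ (((2 : ℕ) : ℤ) * (n + k)) = (q ^ n * q ^ k) ^ 2 := by
        rw [← zpow_add₀ h0.ne', ← zpow_natCast, ← zpow_mul]
        congr 1; push_cast; ring
      have e7 : q ^ (((1 : ℕ) : ℤ) * n) = (q ^ n) := by simp
      have e8 : q ^ (((1 : ℕ) : ℤ) * (n + k)) = (q ^ n * q ^ k) := by
        rw [← zpow_add₀ h0.ne']; simp
      rw [e1] at d2
      rw [e2] at d1
      rw [e3] at d3
      rw [e1, e2, e3, e4, e5, e6, e7, e8]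
      exact alg1 rfl rfl rfl d1 d2 d3
    simp only [key]
    have hs2' : Summable fun n => lam q 2 1 (n + k) := summable_shift hs2 k
    rw [(hs2.mul_left _).tsum_sub (hs2'.mul_left _), tsum_mul_left, tsum_mul_left,
      tsum_shift (lam q 2 1) k, lam21 h0 h1]
    simp

lemma lam_cube {q : ℝ} (h0 : 0 < q) (h1 : q < 1) :
    (∑' n, lam q 1 1 n) ^ 3 = ∑' n, (lam q 3 3 n + q * lam q 6 3 n) := by
  have hs := lam_summable h0 h1 (j := 1) (i := 1) (by norm_num) (by norm_num)
  have hs2 := lam_summable h0 h1 (j := 2) (i := 1) (by norm_num) (by norm_num)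
  have hs3 := lam_summable h0 h1 (j := 2) (i := 2) (by norm_num) (by norm_num)
  have hs4 := lam_summable h0 h1 (j := 4) (i := 2) (by norm_num) (by norm_num)
  have hs5 := lam_summable h0 h1 (j := 3) (i := 2) (by norm_num) (by norm_num)
  let v : ℤ × ℤ → ℝ := fun x => lam q 1 1 x.1 * lam q 2 2 x.2 + q * (lam q 4 2 x.1 * lam q 2 1 x.2)
  have hv1 := summable_mul_of_summable_norm hs.norm hs3.norm
  have hv2 := summable_mul_of_summable_norm hs4.norm hs2.norm
  have hv : Summable v := hv1.add (hv2.mul_left q)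
  have e : (∑' n, lam q 1 1 n) ^ 3 = ∑' x, v x := by
    simp only [v]
    rw [hv1.tsum_add (hv2.mul_left q), tsum_mul_left, ← tsum_mul_tsum_of_summable_norm hs.norm hs3.norm,
      ← tsum_mul_tsum_of_summable_norm hs4.norm hs2.norm, lam21 h0 h1, ← lam_sq h0 h1]
    ring
  rw [e, diag_sum v hv]
  · apply tsum_congr
    intro n
    have d1 := den_ne h0 h1 n
    have e2 : q ^ (3 * n + 1) = (q ^ n) ^ 3 * q := by
      rw [← zpow_natCast, ← zpow_mul, ← zpow_add_one₀ h0.ne']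
      congr 1; push_cast; ring
    have e5 : ∀ j : ℕ, q ^ ((j : ℤ) * n) = (q ^ n) ^ j := by
      intro j
      rw [← zpow_natCast, ← zpow_mul]
      congr 1; ring
    simp only [v, lam, e5]
    rw [e2] at d1 ⊢
    have p1 : q ^ n ≠ 0 := by positivity
    generalize q ^ n = x at *
    field_simp
  · intro k hk
    have key : ∀ n : ℤ, v (n, n + k) =
        q ^ (2 * k) / (1 - q ^ (3 * k)) * lam q 3 2 n - q ^ (2 * k) / (1 - q ^ (3 * k)) * lam q 3 2 (n + k) := by
      intro n
      have d1 := den_ne h0 h1 n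
      have d2 := den_ne h0 h1 (n + k)
      have d3 := tden_ne h0 h1 hk
      have e1 : q ^ (3 * (n + k) + 1) = (q ^ n) ^ 3 * (q ^ k) ^ 3 * q := by
        rw [← zpow_natCast, ← zpow_natCast (q ^ k), ← zpow_mul, ← zpow_mul, ← zpow_add₀ h0.ne', ← zpow_add_one₀ h0.ne']
        congr 1; push_cast; ring
      have e2 : q ^ (3 * n + 1) = (q ^ n) ^ 3 * q := by
        rw [← zpow_natCast, ← zpow_mul, ← zpow_add_one₀ h0.ne']
        congr 1; push_cast; ring
      have e3 : q ^ (3 * k) = (q ^ k) ^ 3 := by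
        rw [← zpow_natCast, ← zpow_mul]
        congr 1; push_cast; ring
      have e4 : q ^ (2 * k) = (q ^ k) ^ 2 := by
        rw [← zpow_natCast, ← zpow_mul]
        congr 1; push_cast; ring
      have e5 : ∀ j : ℕ, q ^ ((j : ℤ) * n) = (q ^ n) ^ j := by
        intro j
        rw [← zpow_natCast, ← zpow_mul]
        congr 1; ring
      have e6 : ∀ j : ℕ, q ^ ((j : ℤ) * (n + k)) = (q ^ n * q ^ k) ^ j := by
        intro j
        rw [← zpow_add₀ h0.ne', ← zpow_natCast, ← zpow_mul]
        congr 1; ring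
      simp only [v, lam, e5, e6]
      rw [e1] at d2
      rw [e2] at d1
      rw [e3] at d3
      rw [e1, e2, e3, e4]
      exact alg2 rfl rfl rfl d1 d2 d3
    simp only [key]
    have hs5' : Summable fun n => lam q 3 2 (n + k) := summable_shift hs5 k
    rw [(hs5.mul_left _).tsum_sub (hs5'.mul_left _), tsum_mul_left, tsum_mul_left,
      tsum_shift (lam q 3 2) k]
    simp
end B3P
end

section
namespace B3P
open Filter Topology

lemma coeff_zero_aux (d : ℕ → ℝ) (hs : ∀ q : ℝ, 0 < q → q < 1 → Summable fun n => d n * q ^ n)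
    (h : ∀ q : ℝ, 0 < q → q < 1 → ∑' n, d n * q ^ n = 0) : d 0 = 0 := by
  have ht : Tendsto (fun j : ℕ => ∑' n, d n * ((1 / 2 : ℝ) ^ (j + 1)) ^ n) atTop
      (𝓝 (∑' n, d n * (0 : ℝ) ^ n)) := by
    apply tendsto_tsum_of_dominated_convergence (hs (1 / 2) (by norm_num) (by norm_num)).norm
    · intro n
      apply Tendsto.const_mul
      apply Tendsto.pow
      exact (tendsto_pow_atTop_nhds_zero_of_lt_one (by norm_num : (0 : ℝ) ≤ 1 / 2)
        (by norm_num)).comp (tendsto_add_atTop_nat 1)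
    · filter_upwards with j n
      rw [norm_mul, norm_mul]
      refine mul_le_mul_of_nonneg_left ?_ (norm_nonneg _)
      rw [Real.norm_of_nonneg (by positivity), Real.norm_of_nonneg (by positivity)]
      refine pow_le_pow_left₀ (by positivity) ?_ n
      apply pow_le_of_le_one (by norm_num) (by norm_num) (by omega)
  have h0 : (fun j : ℕ => ∑' n, d n * ((1 / 2 : ℝ) ^ (j + 1)) ^ n) = fun _ => 0 := by
    funext j
    exact h _ (by positivity) (pow_lt_one₀ (by norm_num) (by norm_num) (by omega))
  rw [h0] at ht
  have := tendsto_nhds_unique ht tendsto_const_nhds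
  rw [tsum_eq_single 0] at this
  · simpa using this
  · intro n hn
    simp [hn]

lemma coeff_unique (d : ℕ → ℝ) (hs : ∀ q : ℝ, 0 < q → q < 1 → Summable fun n => d n * q ^ n)
    (h : ∀ q : ℝ, 0 < q → q < 1 → ∑' n, d n * q ^ n = 0) (n : ℕ) : d n = 0 := by
  induction n generalizing d with
  | zero => exact coeff_zero_aux d hs h
  | succ n ih =>
    have h00 := coeff_zero_aux d hs h
    have hs' : ∀ q : ℝ, 0 < q → q < 1 → Summable fun n => d (n + 1) * q ^ n := by
      intro q h0 h1
      have := (summable_nat_add_iff 1).2 (hs q h0 h1)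
      have := this.mul_right q⁻¹
      refine this.congr ?_
      intro b
      rw [pow_succ]; field_simp
    apply ih (fun n => d (n + 1)) hs'
    intro q h0 h1
    have h2 := h q h0 h1
    rw [(hs q h0 h1).tsum_eq_zero_add] at h2
    simp only [h00, zero_mul, zero_add, pow_succ, ← mul_assoc] at h2
    rw [tsum_mul_right] at h2
    exact (mul_eq_zero.1 h2).resolve_right h0.ne'

/-- group a double sum by value -/
lemma tsum_fiber {α : Type*} (w : α → ℕ) (f : α → ℝ) (hf : Summable f) :
    (Summable fun n => ∑' x : {x // w x = n}, f x) ∧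
    ∑' x, f x = ∑' n, ∑' x : {x // w x = n}, f x := by
  have h := (Equiv.sigmaFiberEquiv w).summable_iff.2 hf
  refine ⟨h.sigma, ?_⟩
  rw [← (Equiv.sigmaFiberEquiv w).tsum_eq f]
  exact h.tsum_sigma

lemma tsum_sq_geom {r : ℝ} (h0 : 0 < r) (h1 : r < 1) :
    HasSum (fun m : ℕ => (m : ℝ) ^ 2 * r ^ m) (r * (1 + r) / (1 - r) ^ 3) := by
  have hr : ‖r‖ < 1 := by rwa [Real.norm_of_nonneg h0.le]
  have a := hasSum_choose_mul_geometric_of_norm_lt_one 2 hr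
  have b := hasSum_choose_mul_geometric_of_norm_lt_one 1 hr
  have c := hasSum_choose_mul_geometric_of_norm_lt_one 0 hr
  have := ((a.mul_left 2).sub (b.mul_left 3)).add c
  have hne : 1 - r ≠ 0 := by linarith
  have hv : r * (1 + r) / (1 - r) ^ 3 =
      2 * (1 / (1 - r) ^ (2 + 1)) - 3 * (1 / (1 - r) ^ (1 + 1)) + 1 / (1 - r) ^ (0 + 1) := by
    field_simp
    ring
  rw [hv]
  refine this.congr_fun ?_
  · intro m
    have : (((m + 2).choose 2 : ℕ) : ℝ) = (m + 2) * (m + 1) / 2 := by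
      rw [Nat.cast_choose_two]; push_cast; ring
    rw [this]
    simp
    ring

/-- the character mod 3 -/
def chi (n : ℕ) : ℤ := if n % 3 = 1 then 1 else if n % 3 = 2 then -1 else 0

/-- the divisor sum -/
def tt (n : ℕ) : ℤ := ∑ x ∈ n.divisorsAntidiagonal, chi x.1 * (x.2 : ℤ) ^ 2

lemma chi_abs (n : ℕ) : |(chi n : ℝ)| ≤ 1 := by
  unfold chi; split_ifs <;> simp

lemma dsum_summable {q : ℝ} (h0 : 0 < q) (h1 : q < 1) :
    Summable fun x : ℕ × ℕ => (chi x.1 : ℝ) * ((x.2 : ℝ) ^ 2 * q ^ (x.1 * x.2)) := by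
  have hg : Summable fun n : ℕ => q ^ n := summable_geometric_of_lt_one h0.le h1
  have hg2 := (tsum_sq_geom h0 h1).summable
  have := (summable_mul_of_summable_norm hg.norm hg2.norm).mul_left q⁻¹
  refine Summable.of_norm_bounded this ?_
  rintro ⟨e, m⟩
  rcases Nat.eq_zero_or_pos e with rfl | he
  · simp [chi]; positivity
  rcases Nat.eq_zero_or_pos m with rfl | hm
  · simp
  rw [norm_mul, Real.norm_of_nonneg (show 0 ≤ (m : ℝ) ^ 2 * q ^ (e * m) by positivity)]
  have h2 : q ^ (e * m) ≤ q⁻¹ * (q ^ e * q ^ m) := by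
    rw [← pow_add, ← div_eq_inv_mul, le_div_iff₀ h0, ← pow_succ]
    apply pow_le_pow_of_le_one h0.le h1.le
    nlinarith
  calc ‖(chi e : ℝ)‖ * ((m : ℝ) ^ 2 * q ^ (e * m)) ≤ 1 * ((m : ℝ) ^ 2 * (q⁻¹ * (q ^ e * q ^ m))) := by
        gcongr
        exact chi_abs e
    _ = _ := by ring

lemma lam_div {q : ℝ} (h0 : 0 < q) (h1 : q < 1) :
    (Summable fun n => (tt n : ℝ) * q ^ n) ∧
    q * ∑' n, (lam q 3 3 n + q * lam q 6 3 n) = ∑' n, (tt n : ℝ) * q ^ n := by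
  have hs := dsum_summable h0 h1
  obtain ⟨hf1, hf2⟩ := tsum_fiber (fun x : ℕ × ℕ => x.1 * x.2) _ hs
  have hfib : ∀ n, ∑' x : {x : ℕ × ℕ // x.1 * x.2 = n},
      (chi x.1.1 : ℝ) * ((x.1.2 : ℝ) ^ 2 * q ^ (x.1.1 * x.1.2)) = (tt n : ℝ) * q ^ n := by
    intro n
    rcases Nat.eq_zero_or_pos n with rfl | hn
    · simp only [tt, Nat.divisorsAntidiagonal_zero, Finset.sum_empty, Int.cast_zero, zero_mul]
      convert tsum_zero with x
      obtain ⟨⟨a, b⟩, hx⟩ := x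
      rcases Nat.mul_eq_zero.1 hx with h | h
      · simp only at h; simp [h, chi]
      · simp only at h; simp [h]
    · unfold tt
      push_cast
      rw [Finset.sum_mul, ← Finset.tsum_subtype]
      let e : {x : ℕ × ℕ // x.1 * x.2 = n} ≃ {x // x ∈ n.divisorsAntidiagonal} :=
        Equiv.subtypeEquivRight (fun x => by simp [Nat.mem_divisorsAntidiagonal, hn.ne'])
      rw [← e.tsum_eq]
      apply tsum_congr
      rintro ⟨⟨a, b⟩, hx⟩
      simp only [e, Equiv.subtypeEquivRight_apply_coe]
      simp only at hx
      rw [hx]; ring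
  simp only [hfib] at hf1 hf2
  refine ⟨hf1, ?_⟩
  rw [← hf2, hs.tsum_prod]
  simp only [tsum_mul_left]
  let f : ℕ → ℝ := fun e => (chi e : ℝ) * ∑' m : ℕ, (m : ℝ) ^ 2 * q ^ (e * m)
  have hL : ∀ e : ℕ, e ≠ 0 → ∑' m : ℕ, (m : ℝ) ^ 2 * q ^ (e * m) = q ^ e * (1 + q ^ e) / (1 - q ^ e) ^ 3 := by
    intro e he
    simp only [pow_mul]
    exact (tsum_sq_geom (by positivity) (pow_lt_one₀ h0.le h1 he)).tsum_eq
  have hinj : Function.Injective fun n : ℤ => (3 * n + 1).natAbs := by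
    intro a b h
    simp only at h
    omega
  have hsup : Function.support f ⊆ Set.range fun n : ℤ => (3 * n + 1).natAbs := by
    intro e he
    simp only [Function.mem_support, f] at he
    have hc : (chi e : ℝ) ≠ 0 := left_ne_zero_of_mul he
    unfold chi at hc
    split_ifs at hc with h2 h3
    · exact ⟨(e / 3 : ℕ), by simp only; omega⟩
    · exact ⟨-((e / 3 : ℕ) + 1 : ℤ), by simp only; omega⟩
    · simp at hc
  rw [← tsum_mul_left]
  change _ = ∑' e, f e
  rw [← hinj.tsum_eq hsup]
  apply tsum_congr
  intro n
  obtain ⟨k, rfl | rfl⟩ : ∃ k : ℕ, n = k ∨ n = -((k : ℤ) + 1) := by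
    rcases le_or_gt 0 n with h | h
    · exact ⟨n.toNat, Or.inl (by omega)⟩
    · exact ⟨(-n - 1).toNat, Or.inr (by omega)⟩
  · have e1 : (3 * (k : ℤ) + 1).natAbs = 3 * k + 1 := by omega
    have e2 : chi (3 * k + 1) = 1 := by unfold chi; rw [if_pos (by omega)]
    simp only [f, e1, e2]
    rw [hL _ (by omega), lam_nat, lam_nat]
    push_cast
    ring
  · have e1 : (3 * (-((k : ℤ) + 1)) + 1).natAbs = 3 * k + 2 := by omega
    have e2 : chi (3 * k + 2) = -1 := by unfold chi; rw [if_neg (by omega), if_pos (by omega)]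
    simp only [f, e1, e2]
    rw [hL _ (by omega), lam_neg h0 h1 _ _ _ (by norm_num), lam_neg h0 h1 _ _ _ (by norm_num)]
    have z : (2 * ((3 : ℕ) : ℤ) - ((3 : ℕ) : ℤ)) = ((3 : ℕ) : ℤ) := by norm_num
    have z2 : (2 * ((3 : ℕ) : ℤ) - ((6 : ℕ) : ℤ)) = ((0 : ℕ) : ℤ) := by norm_num
    rw [z, z2, zpow_natCast, zpow_natCast]
    push_cast
    ring
end B3P
end

section
namespace B3P
open Filter Topology

/-- finite q-Pochhammer symbol -/
noncomputable def poc (z Q : ℝ) (n : ℕ) : ℝ := ∏ l ∈ Finset.range n, (1 - z * Q ^ l)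

/-- infinite q-Pochhammer symbol -/
noncomputable def pocI (z Q : ℝ) : ℝ := ∏' l : ℕ, (1 - z * Q ^ l)

lemma poc_zero (z Q : ℝ) : poc z Q 0 = 1 := by simp [poc]
lemma poc_succ (z Q : ℝ) (n : ℕ) : poc z Q (n + 1) = poc z Q n * (1 - z * Q ^ n) := by
  simp [poc, Finset.prod_range_succ]

lemma fac_pos {z Q : ℝ} (hz : 0 < z) (hz1 : z < 1) (hQ : 0 < Q) (hQ1 : Q < 1) (n : ℕ) :
    0 < 1 - z * Q ^ n ∧ 1 - z * Q ^ n ≤ 1 := by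
  have h1 : Q ^ n ≤ 1 := pow_le_one₀ hQ.le hQ1.le
  have h2 : 0 < Q ^ n := by positivity
  constructor <;> nlinarith

lemma poc_pos {z Q : ℝ} (hz : 0 < z) (hz1 : z < 1) (hQ : 0 < Q) (hQ1 : Q < 1) (n : ℕ) :
    0 < poc z Q n := Finset.prod_pos fun l _ => (fac_pos hz hz1 hQ hQ1 l).1

lemma poc_le_one {z Q : ℝ} (hz : 0 < z) (hz1 : z < 1) (hQ : 0 < Q) (hQ1 : Q < 1) (n : ℕ) :
    poc z Q n ≤ 1 := Finset.prod_le_one (fun l _ => (fac_pos hz hz1 hQ hQ1 l).1.le)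
      fun l _ => (fac_pos hz hz1 hQ hQ1 l).2

lemma poc_anti {z Q : ℝ} (hz : 0 < z) (hz1 : z < 1) (hQ : 0 < Q) (hQ1 : Q < 1) :
    Antitone (poc z Q) := by
  apply antitone_nat_of_succ_le
  intro n
  rw [poc_succ]
  exact mul_le_of_le_one_right (poc_pos hz hz1 hQ hQ1 n).le (fac_pos hz hz1 hQ hQ1 n).2

lemma poc_tendsto {z Q : ℝ} (hQ : 0 < Q) (hQ1 : Q < 1) :
    Tendsto (poc z Q) atTop (𝓝 (pocI z Q)) := by
  have hs : Summable fun l : ℕ => ‖-(z * Q ^ l)‖ :=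
    (((summable_geometric_of_lt_one hQ.le hQ1).mul_left z).neg).norm
  have hm : Multipliable fun l : ℕ => (1 + -(z * Q ^ l)) := multipliable_one_add_of_summable hs
  have := hm.tendsto_prod_tprod_nat
  simp only [← sub_eq_add_neg] at this
  exact this

lemma pocI_le {z Q : ℝ} (hz : 0 < z) (hz1 : z < 1) (hQ : 0 < Q) (hQ1 : Q < 1) (n : ℕ) :
    pocI z Q ≤ poc z Q n := (poc_anti hz hz1 hQ hQ1).le_of_tendsto (poc_tendsto hQ hQ1) n

lemma pocI_pos {z Q : ℝ} (hz : 0 < z) (hz1 : z < 1) (hQ : 0 < Q) (hQ1 : Q < 1) : 0 < pocI z Q := by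
  have h : 0 ≤ pocI z Q := ge_of_tendsto' (poc_tendsto hQ hQ1) fun n => (poc_pos hz hz1 hQ hQ1 n).le
  refine lt_of_le_of_ne h (Ne.symm ?_)
  have hs : Summable fun l : ℕ => ‖-(z * Q ^ l)‖ :=
    (((summable_geometric_of_lt_one hQ.le hQ1).mul_left z).neg).norm
  have := tprod_one_add_ne_zero_of_summable (f := fun l : ℕ => -(z * Q ^ l))
    (fun l => by have := (fac_pos hz hz1 hQ hQ1 l).1; rw [← sub_eq_add_neg]; exact this.ne') hs
  simpa [pocI, sub_eq_add_neg] using this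

/-- partial fraction coefficient -/
noncomputable def pfc (y u Q : ℝ) (M i : ℕ) : ℝ :=
  y ^ i * poc y Q (M - i) * poc u Q i / (poc Q Q (M - i) * poc Q Q i)

lemma pf_alg {x y Q A B D : ℝ} (hA : 1 - x * A ≠ 0) (hB : 1 - x * (A * B) ≠ 0) (hC : 1 - B ≠ 0) (hC0 : B ≠ 0)
    (hD : D * Q = B) (hQ : Q ≠ 0) :
    1 / (1 - x * A) * ((1 - x * y * (A * D)) / (1 - x * (A * B))) =
     (1 - y * D) / (1 - B) / (1 - x * A) + (1 - y / Q) * (1 / (1 - B⁻¹)) / (1 - x * (A * B)) := by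
  have h2 : 1 - B⁻¹ ≠ 0 := by
    intro h
    apply hC
    have : B * (1 - B⁻¹) = 0 := by rw [h]; simp
    rw [mul_sub, mul_inv_cancel₀ hC0] at this
    linarith
  have h3 : 1 / (1 - B⁻¹) = - B / (1 - B) := by
    rw [div_eq_div_iff h2 hC]
    field_simp
    ring
  rw [h3]
  have : D = B / Q := by field_simp; linarith
  subst this
  have hB' : 1 - x * A * B ≠ 0 := by rwa [mul_assoc]
  field_simp
  ring

lemma pf {y u Q : ℝ} (hQ : 0 < Q) (hQ1 : Q < 1) (hy : y ≠ 0) (hyu : y * u = Q) (M : ℕ) :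
    ∀ x : ℝ, (∀ i ≤ M, 1 - x * Q ^ i ≠ 0) →
    ∑ i ∈ Finset.range (M + 1), pfc y u Q M i * (1 / (1 - x * Q ^ i)) =
      poc (x * y) Q M / poc x Q (M + 1) := by
  induction M with
  | zero => intro x hx; simp [pfc, poc]
  | succ M ih =>
    intro x hx
    have hpQ : ∀ n, poc Q Q n ≠ 0 := fun n => (poc_pos hQ hQ1 hQ hQ1 n).ne'
    have hfQ : ∀ n, 1 - Q * Q ^ n ≠ 0 := fun n => (fac_pos hQ hQ1 hQ hQ1 n).1.ne'
    have hI := ih x (fun i hi => hx i (by omega))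
    have hne : ∀ i ≤ M, 1 - (Q ^ (M + 1))⁻¹ * Q ^ i ≠ 0 := by
      intro i hi h
      obtain ⟨m, rfl⟩ := Nat.exists_eq_add_of_le hi
      apply hfQ m
      have h3 : Q * Q ^ m = 1 := by
        have h4 : (Q ^ (i + m + 1))⁻¹ * Q ^ i = 1 := by linarith
        field_simp at h4
        have : Q ^ i * (Q * Q ^ m) = Q ^ i * 1 := by rw [mul_one]; nth_rewrite 2 [h4]; ring
        exact mul_left_cancel₀ (by positivity) this
      linarith
    have hJ := ih (Q ^ (M + 1))⁻¹ hne
    have hr : poc (x * y) Q (M + 1) / poc x Q (M + 1 + 1) =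
        poc (x * y) Q M / poc x Q (M + 1) * ((1 - x * y * Q ^ M) / (1 - x * Q ^ (M + 1))) := by
      rw [poc_succ, poc_succ x]
      rw [div_mul_div_comm]
    rw [hr, ← hI, Finset.sum_range_succ, Finset.sum_mul]
    have hlast : pfc y u Q (M + 1) (M + 1) = (1 - y / Q) * ∑ i ∈ Finset.range (M + 1),
        pfc y u Q M i * (1 / (1 - (Q ^ (M + 1))⁻¹ * Q ^ i)) := by
      rw [hJ]
      clear hJ hr hI hne hx ih
      simp only [pfc, Nat.sub_self, poc_zero]
      have h1 : (1 - y / Q) * poc ((Q ^ (M + 1))⁻¹ * y) Q M = ∏ m ∈ Finset.range (M + 1), (1 - y * (Q ^ (m + 1))⁻¹) := by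
        rw [Finset.prod_range_succ']
        rw [mul_comm]
        congr 1
        · unfold poc
          rw [← Finset.prod_range_reflect]
          apply Finset.prod_congr rfl
          intro j hj
          rw [Finset.mem_range] at hj
          obtain ⟨k, rfl⟩ := Nat.exists_eq_add_of_lt hj
          have : j + k + 1 - 1 - j = k := by omega
          rw [this]
          field_simp
          ring
        · simp [div_eq_mul_inv]
      have h2 : poc (Q ^ (M + 1))⁻¹ Q (M + 1) = ∏ m ∈ Finset.range (M + 1), (1 - (Q ^ (m + 1))⁻¹) := by
          unfold poc
          rw [← Finset.prod_range_reflect]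
          apply Finset.prod_congr rfl
          intro j hj
          rw [Finset.mem_range] at hj
          obtain ⟨k, hk⟩ := Nat.exists_eq_add_of_lt hj
          have : M + 1 - 1 - j = k := by omega
          rw [this, hk]
          field_simp
          ring
      rw [← mul_div_assoc, h1, h2, ← Finset.prod_div_distrib]
      unfold poc
      rw [mul_one, one_mul, mul_div_assoc, ← Finset.prod_div_distrib]
      have : y ^ (M + 1) = ∏ m ∈ Finset.range (M + 1), y := by simp
      rw [this, ← Finset.prod_mul_distrib]
      apply Finset.prod_congr rfl
      intro m _
      have hq := hfQ m
      have h5 : (1 - (Q ^ (m + 1))⁻¹) ≠ 0 := by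
        intro h
        apply hq
        field_simp at h
        rw [← pow_succ']; linarith
      rw [← mul_div_assoc, div_eq_div_iff hq h5]
      field_simp
      rw [pow_succ]
      linear_combination (-Q ^ m * (Q ^ m * Q - 1)) * hyu
    have hstep : ∀ i ∈ Finset.range (M + 1), pfc y u Q M i * (1 / (1 - x * Q ^ i)) *
        ((1 - x * y * Q ^ M) / (1 - x * Q ^ (M + 1))) =
        pfc y u Q (M + 1) i * (1 / (1 - x * Q ^ i)) +
        (1 - y / Q) * (pfc y u Q M i * (1 / (1 - (Q ^ (M + 1))⁻¹ * Q ^ i))) * (1 / (1 - x * Q ^ (M + 1))) := by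
      intro i hi
      rw [Finset.mem_range] at hi
      obtain ⟨m, rfl⟩ := Nat.exists_eq_add_of_le (Nat.lt_succ_iff.1 hi)
      have e1 : i + m + 1 - i = m + 1 := by omega
      have e2 : i + m - i = m := by omega
      have hA := hx i (by omega)
      have hB := hx (i + m + 1) (by omega)
      have eB : Q ^ (i + m + 1) = Q ^ i * (Q * Q ^ m) := by ring
      have eD : Q ^ (i + m) = Q ^ i * Q ^ m := by ring
      have eI : (Q ^ (i + m + 1))⁻¹ * Q ^ i = (Q * Q ^ m)⁻¹ := by
        rw [eB]; field_simp
      have hc : pfc y u Q (i + m + 1) i = pfc y u Q (i + m) i * ((1 - y * Q ^ m) / (1 - Q * Q ^ m)) := by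
        unfold pfc
        rw [e1, e2, poc_succ, poc_succ, div_mul_div_comm]
        congr 1 <;> ring
      rw [hc, eI]
      rw [eB] at hB ⊢
      rw [eD]
      have := pf_alg (x := x) (y := y) (Q := Q) (A := Q ^ i) (B := Q * Q ^ m) (D := Q ^ m) hA hB (hfQ m)
        (by positivity) (by ring) hQ.ne'
      rw [mul_assoc, this]
      ring
    rw [Finset.sum_congr rfl hstep, Finset.sum_add_distrib, hlast, ← Finset.sum_mul, ← Finset.mul_sum]
end B3P
end

section
namespace B3P
open Filter Topology

lemma cprod_term {q : ℝ} (h0 : 0 < q) (h1 : q < 1) (N : ℕ) :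
    poc (q * (q ^ (3 * N))⁻¹ * q) (q ^ 3) (2 * N) / poc (q * (q ^ (3 * N))⁻¹) (q ^ 3) (2 * N + 1) =
      q ^ N / (1 - q ^ (3 * N + 1)) := by
  have hQ : 0 < q ^ 3 := by positivity
  have hQ1 : q ^ 3 < 1 := pow_lt_one₀ h0.le h1 (by norm_num)
  have h2 : q ^ 2 < 1 := pow_lt_one₀ h0.le h1 (by norm_num)
  have hA : poc (q * (q ^ (3 * N))⁻¹ * q) (q ^ 3) (2 * N) =
      (∏ m ∈ Finset.range N, (-(q ^ (3 * m + 1))⁻¹ * (1 - q * (q ^ 3) ^ m))) * poc (q ^ 2) (q ^ 3) N := by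
    unfold poc
    rw [two_mul, Finset.prod_range_add]
    congr 1
    · rw [← Finset.prod_range_reflect]
      apply Finset.prod_congr rfl
      intro j hj
      rw [Finset.mem_range] at hj
      obtain ⟨k, rfl⟩ := Nat.exists_eq_add_of_lt hj
      have : j + k + 1 - 1 - j = k := by omega
      rw [this]
      field_simp
      ring
    · apply Finset.prod_congr rfl
      intro j _
      field_simp
      ring
  have hB : poc (q * (q ^ (3 * N))⁻¹) (q ^ 3) (2 * N + 1) =
      (∏ m ∈ Finset.range N, (-(q ^ (3 * m + 2))⁻¹ * (1 - q ^ 2 * (q ^ 3) ^ m))) * (poc q (q ^ 3) N * (1 - q * (q ^ 3) ^ N)) := by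
    rw [← poc_succ]
    unfold poc
    rw [two_mul, add_assoc, Finset.prod_range_add]
    congr 1
    · rw [← Finset.prod_range_reflect]
      apply Finset.prod_congr rfl
      intro j hj
      rw [Finset.mem_range] at hj
      obtain ⟨k, rfl⟩ := Nat.exists_eq_add_of_lt hj
      have : j + k + 1 - 1 - j = k := by omega
      rw [this]
      field_simp
      ring
    · apply Finset.prod_congr rfl
      intro j _
      field_simp
      ring
  have hC : ∏ m ∈ Finset.range N, (-(q ^ (3 * m + 1))⁻¹ * (1 - q * (q ^ 3) ^ m)) =
     q ^ N * (∏ m ∈ Finset.range N, (-(q ^ (3 * m + 2))⁻¹)) * poc q (q ^ 3) N := by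
    have : q ^ N = ∏ m ∈ Finset.range N, q := by simp
    unfold poc
    rw [this, ← Finset.prod_mul_distrib, ← Finset.prod_mul_distrib]
    apply Finset.prod_congr rfl
    intro m _
    congr 1
    field_simp
    ring
  rw [hA, hB, hC, Finset.prod_mul_distrib]
  change _ / ((∏ m ∈ Finset.range N, (-(q ^ (3 * m + 2))⁻¹)) * poc (q ^ 2) (q ^ 3) N * _) = _
  have hp : (∏ m ∈ Finset.range N, (-(q ^ (3 * m + 2))⁻¹)) ≠ 0 := by
    rw [Finset.prod_ne_zero_iff]
    intro m _
    have : 0 < q ^ (3 * m + 2) := by positivity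
    simp [this.ne']
  have a1 := (poc_pos (z := q) h0 h1 hQ hQ1 N).ne'
  have a2 := (poc_pos (z := q ^ 2) (by positivity) h2 hQ hQ1 N).ne'
  have a3 := (fac_pos (z := q) h0 h1 hQ hQ1 N).1.ne'
  have e : q ^ (3 * N + 1) = q * (q ^ 3) ^ N := by ring
  rw [e, div_eq_div_iff (by positivity) a3]
  ring

/-- weights in the finite identity -/
noncomputable def wt (q : ℝ) (N : ℕ) (k : ℤ) : ℝ :=
  if k.natAbs ≤ N then poc q (q ^ 3) (N - k).toNat * poc (q ^ 2) (q ^ 3) (N + k).toNat /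
    (poc (q ^ 3) (q ^ 3) (N - k).toNat * poc (q ^ 3) (q ^ 3) (N + k).toNat) else 0

lemma finite_c {q : ℝ} (h0 : 0 < q) (h1 : q < 1) (N : ℕ) :
    ∑' k : ℤ, wt q N k * lam q 1 1 k = 1 / (1 - q ^ (3 * N + 1)) := by
  have hQ : 0 < q ^ 3 := by positivity
  have hQ1 : q ^ 3 < 1 := pow_lt_one₀ h0.le h1 (by norm_num)
  have hx : ∀ i : ℕ, q * (q ^ (3 * N))⁻¹ * (q ^ 3) ^ i = q ^ (3 * ((i : ℤ) - N) + 1) := by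
    intro i
    rw [zpow_add₀ h0.ne', mul_sub, zpow_sub₀ h0.ne']
    norm_cast
    field_simp
    ring
  have := pf (y := q) (u := q ^ 2) hQ hQ1 h0.ne' (by ring) (2 * N) (q * (q ^ (3 * N))⁻¹) (by
    intro i hi
    rw [hx]
    exact den_ne h0 h1 _)
  rw [cprod_term h0 h1] at this
  have hqN : q ^ N ≠ 0 := by positivity
  apply mul_left_cancel₀ hqN
  rw [mul_one_div, ← this]
  rw [tsum_eq_sum (s := (Finset.range (2 * N + 1)).image
    (fun i : ℕ => (i : ℤ) - N))]
  · rw [Finset.sum_image (by intro a _ b _ h; simp only at h; omega), Finset.mul_sum]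
    apply Finset.sum_congr rfl
    intro i hi
    rw [Finset.mem_range] at hi
    simp only [wt, lam]
    rw [if_pos (by omega), hx]
    have e1 : ((N : ℤ) - (i - N)).toNat = 2 * N - i := by omega
    have e2 : ((N : ℤ) + (i - N)).toNat = i := by omega
    rw [e1, e2]
    unfold pfc
    have : q ^ i = q ^ N * q ^ (((1 : ℕ) : ℤ) * ((i : ℤ) - N)) := by
      rw [← zpow_natCast, ← zpow_natCast, ← zpow_add₀ h0.ne']
      congr 1
      push_cast; ring
    rw [this]
    ring
  · intro k hk
    have : ¬ k.natAbs ≤ N := by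
      intro h
      apply hk
      simp only [Finset.mem_image, Finset.mem_range]
      exact ⟨(k + N).toNat, by omega, by omega⟩
    simp [wt, this]

lemma toNat_tendsto (k : ℤ) : Tendsto (fun N : ℕ => ((N : ℤ) + k).toNat) atTop atTop := by
  rw [tendsto_atTop]
  intro b
  filter_upwards [eventually_ge_atTop (b + k.natAbs)] with N hN
  omega

theorem c_prod {q : ℝ} (h0 : 0 < q) (h1 : q < 1) :
    (∑' k, lam q 1 1 k) * (pocI q (q ^ 3) * pocI (q ^ 2) (q ^ 3)) = pocI (q ^ 3) (q ^ 3) ^ 2 := by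
  have hQ : 0 < q ^ 3 := by positivity
  have hQ1 : q ^ 3 < 1 := pow_lt_one₀ h0.le h1 (by norm_num)
  have h2 : q ^ 2 < 1 := pow_lt_one₀ h0.le h1 (by norm_num)
  have h20 : 0 < q ^ 2 := by positivity
  have hE := pocI_pos hQ hQ1 hQ hQ1
  have hw : ∀ k, Tendsto (fun N => wt q N k) atTop
      (𝓝 (pocI q (q ^ 3) * pocI (q ^ 2) (q ^ 3) / (pocI (q ^ 3) (q ^ 3) * pocI (q ^ 3) (q ^ 3)))) := by
    intro k
    have t1 := toNat_tendsto (-k)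
    simp only [← sub_eq_add_neg] at t1
    have t2 := toNat_tendsto k
    have : Tendsto (fun N : ℕ => poc q (q ^ 3) (N - k).toNat * poc (q ^ 2) (q ^ 3) (N + k).toNat /
        (poc (q ^ 3) (q ^ 3) (N - k).toNat * poc (q ^ 3) (q ^ 3) (N + k).toNat)) atTop
      (𝓝 (pocI q (q ^ 3) * pocI (q ^ 2) (q ^ 3) / (pocI (q ^ 3) (q ^ 3) * pocI (q ^ 3) (q ^ 3)))) :=
      (((poc_tendsto hQ hQ1).comp t1).mul ((poc_tendsto hQ hQ1).comp t2)).div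
        (((poc_tendsto hQ hQ1).comp t1).mul ((poc_tendsto hQ hQ1).comp t2)) (by positivity)
    refine this.congr' ?_
    filter_upwards [eventually_ge_atTop k.natAbs] with N hN
    rw [wt, if_pos hN]
  have hs := lam_summable h0 h1 (j := 1) (i := 1) (by norm_num) (by norm_num)
  have hlim : Tendsto (fun N : ℕ => ∑' k : ℤ, wt q N k * lam q 1 1 k) atTop
    (𝓝 (∑' k, (pocI q (q ^ 3) * pocI (q ^ 2) (q ^ 3) / (pocI (q ^ 3) (q ^ 3) * pocI (q ^ 3) (q ^ 3))) * lam q 1 1 k)) := by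
    apply tendsto_tsum_of_dominated_convergence
      (bound := fun k => 1 / (pocI (q ^ 3) (q ^ 3) * pocI (q ^ 3) (q ^ 3)) * ‖lam q 1 1 k‖) (hs.norm.mul_left _)
    · intro k
      exact (hw k).mul_const _
    · filter_upwards with N k
      rw [norm_mul]
      refine mul_le_mul_of_nonneg_right ?_ (norm_nonneg _)
      unfold wt
      split_ifs
      · rw [Real.norm_of_nonneg (div_nonneg (mul_nonneg (poc_pos h0 h1 hQ hQ1 _).le (poc_pos h20 h2 hQ hQ1 _).le)
          (mul_nonneg (poc_pos hQ hQ1 hQ hQ1 _).le (poc_pos hQ hQ1 hQ hQ1 _).le))]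
        apply div_le_div₀ (by norm_num) _ (by positivity)
        · exact mul_le_mul (pocI_le hQ hQ1 hQ hQ1 _) (pocI_le hQ hQ1 hQ hQ1 _) hE.le (poc_pos hQ hQ1 hQ hQ1 _).le
        · exact mul_le_one₀ (poc_le_one h0 h1 hQ hQ1 _) (poc_pos h20 h2 hQ hQ1 _).le (poc_le_one h20 h2 hQ hQ1 _)
      · simp; positivity
  have hlim2 : Tendsto (fun N : ℕ => ∑' k : ℤ, wt q N k * lam q 1 1 k) atTop (𝓝 (1 / (1 - 0))) := by
    simp only [finite_c h0 h1]
    apply Tendsto.div tendsto_const_nhds _ (by norm_num)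
    apply Tendsto.sub tendsto_const_nhds
    exact (tendsto_pow_atTop_nhds_zero_of_lt_one h0.le h1).comp
      (tendsto_atTop_mono (fun n => by omega : ∀ n : ℕ, n ≤ 3 * n + 1) tendsto_id)
  have := tendsto_nhds_unique hlim hlim2
  rw [tsum_mul_left, div_mul_eq_mul_div, div_eq_iff (by positivity)] at this
  linarith
end B3P
end

section
namespace B3P
open Filter Topology Polynomial

/-- the polynomial of the q-binomial theorem -/
noncomputable def PP (z q : ℝ) (M : ℕ) : ℝ[X] := ∏ i ∈ Finset.range M, (1 + C (z * q ^ i) * X)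

lemma PP_succ (z q : ℝ) (M : ℕ) : PP z q (M + 1) = PP z q M * (1 + C (z * q ^ M) * X) := by
  simp [PP, Finset.prod_range_succ]

lemma PP_coeff_succ (z q : ℝ) (M k : ℕ) :
    (PP z q (M + 1)).coeff (k + 1) = (PP z q M).coeff (k + 1) + z * q ^ M * (PP z q M).coeff k := by
  rw [PP_succ, mul_add, mul_one, ← mul_assoc, coeff_add, coeff_mul_X, coeff_mul_C]
  ring

lemma PP_coeff_zero (z q : ℝ) (M : ℕ) : (PP z q M).coeff 0 = 1 := by
  induction M with
  | zero => simp [PP]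
  | succ M ih => rw [PP_succ, mul_coeff_zero, ih]; simp

lemma PP_coeff_large (z q : ℝ) (M : ℕ) : ∀ k, M < k → (PP z q M).coeff k = 0 := by
  induction M with
  | zero => intro k hk; simp [PP, coeff_one]; omega
  | succ M ih =>
    intro k hk
    obtain ⟨k, rfl⟩ : ∃ l, k = l + 1 := ⟨k - 1, by omega⟩
    rw [PP_coeff_succ, ih _ (by omega), ih _ (by omega)]; simp

lemma PP_coeff (z : ℝ) {q : ℝ} (h0 : 0 < q) (h1 : q < 1) (M : ℕ) : ∀ k m, k + m = M →
    (PP z q M).coeff k * (poc q q k * poc q q m) = z ^ k * q ^ (k.choose 2) * poc q q M := by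
  induction M with
  | zero =>
    intro k m h
    obtain ⟨rfl, rfl⟩ : k = 0 ∧ m = 0 := by omega
    simp [PP, poc]
  | succ M ih =>
    intro k m h
    rcases k with _ | k
    · obtain rfl : m = M + 1 := by omega
      rw [PP_coeff_zero]; simp [poc_zero]
    · rw [PP_coeff_succ]
      have hc : (k + 1).choose 2 = k + k.choose 2 := by
        rw [Nat.choose_succ_succ' k 1]; simp
      rcases m with _ | m
      · obtain rfl : k = M := by omega
        rw [PP_coeff_large _ _ _ _ (by omega)]
        have := ih k 0 (by omega)
        rw [poc_zero, mul_one] at this ⊢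
        rw [poc_succ, hc, pow_add]
        linear_combination (z * q ^ k * (1 - q * q ^ k)) * this
      · have i1 := ih (k + 1) m (by omega)
        have i2 := ih k (m + 1) (by omega)
        have hM : M = k + m + 1 := by omega
        have e2 : q ^ M = q ^ k * (q * q ^ m) := by rw [hM]; ring
        rw [poc_succ q q M]
        rw [poc_succ q q m] at i2 ⊢
        rw [poc_succ q q k] at i1 ⊢
        rw [hc, pow_add] at i1 ⊢
        rw [e2]
        linear_combination (1 - q * q ^ m) * i1 + z * q ^ k * (q * q ^ m) * (1 - q * q ^ k) * i2

lemma PP_three (q : ℝ) (L : ℕ) :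
    PP 1 q (3 * L) = PP 1 (q ^ 3) L * (PP q (q ^ 3) L * PP (q ^ 2) (q ^ 3) L) := by
  induction L with
  | zero => simp [PP]
  | succ L ih =>
    rw [show 3 * (L + 1) = 3 * L + 1 + 1 + 1 by ring, PP_succ, PP_succ, PP_succ, ih, PP_succ, PP_succ, PP_succ]
    have e1 : 1 * q ^ (3 * L) = 1 * (q ^ 3) ^ L := by ring
    have e2 : 1 * q ^ (3 * L + 1) = q * (q ^ 3) ^ L := by ring
    have e3 : 1 * q ^ (3 * L + 1 + 1) = q ^ 2 * (q ^ 3) ^ L := by ring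
    rw [e1, e2, e3]
    ring

lemma poc_three (q : ℝ) (L : ℕ) :
    poc q q (3 * L) = poc q (q ^ 3) L * poc (q ^ 2) (q ^ 3) L * poc (q ^ 3) (q ^ 3) L := by
  induction L with
  | zero => simp [poc]
  | succ L ih =>
    rw [show 3 * (L + 1) = 3 * L + 1 + 1 + 1 by ring, poc_succ, poc_succ, poc_succ, ih, poc_succ, poc_succ, poc_succ]
    ring

lemma coeff3 (A B D : ℝ[X]) (n : ℕ) : (A * (B * D)).coeff n =
    ∑ p ∈ Finset.range (n + 1) ×ˢ Finset.range (n + 1),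
      if p.1 + p.2 ≤ n then A.coeff p.1 * (B.coeff p.2 * D.coeff (n - p.1 - p.2)) else 0 := by
  rw [Finset.sum_product, coeff_mul, Finset.Nat.sum_antidiagonal_eq_sum_range_succ_mk]
  apply Finset.sum_congr rfl
  intro i hi
  rw [Finset.mem_range] at hi
  simp only
  rw [coeff_mul, Finset.Nat.sum_antidiagonal_eq_sum_range_succ_mk, Finset.mul_sum, ← Finset.sum_filter]
  apply Finset.sum_congr
  · ext j
    simp only [Finset.mem_range, Finset.mem_filter]
    omega
  · intro j _
    rfl

/-- the quadratic form giving the size of a 3-core -/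
def Qf (a b : ℤ) : ℤ := 3 * (a ^ 2 + a * b + b ^ 2) - 2 * a - b

/-- weights for the finite lattice sum -/
noncomputable def wL (Q : ℝ) (N : ℕ) (a b : ℤ) : ℝ :=
  if a.natAbs ≤ N ∧ b.natAbs ≤ N ∧ (a + b).natAbs ≤ N then
    poc Q Q (2 * N) ^ 3 / ((poc Q Q (N + a).toNat * poc Q Q (N - a).toNat) *
      (poc Q Q (N + b).toNat * poc Q Q (N - b).toNat) *
      (poc Q Q (N + (a + b)).toNat * poc Q Q (N - (a + b)).toNat)) else 0

lemma choose_two_int (n : ℕ) : 2 * ((n.choose 2 : ℕ) : ℤ) = n * (n - 1) := by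
  induction n with
  | zero => simp
  | succ n ih =>
    rw [Nat.choose_succ_succ' n 1]
    push_cast
    rw [mul_add, ih]
    simp
    ring

lemma finite_L {q : ℝ} (h0 : 0 < q) (h1 : q < 1) (N : ℕ) :
    ∑' x : ℤ × ℤ, wL (q ^ 3) N x.1 x.2 * q ^ (Qf x.1 x.2) =
      poc q q (6 * N) / (poc q q (3 * N) * poc q q (3 * N)) := by
  have hQ : 0 < q ^ 3 := by positivity
  have hQ1 : q ^ 3 < 1 := pow_lt_one₀ h0.le h1 (by norm_num)
  have hp : ∀ n, 0 < poc q q n := poc_pos h0 h1 h0 h1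
  have hP : ∀ n, 0 < poc (q ^ 3) (q ^ 3) n := poc_pos hQ hQ1 hQ hQ1
  have hz : q ^ ((3 * N).choose 2) ≠ 0 := by positivity
  have hcf : ∀ z : ℝ, ∀ k ≤ 2 * N, (PP z (q ^ 3) (2 * N)).coeff k =
      z ^ k * (q ^ 3) ^ (k.choose 2) * (poc (q ^ 3) (q ^ 3) (2 * N) /
        (poc (q ^ 3) (q ^ 3) k * poc (q ^ 3) (q ^ 3) (2 * N - k))) := by
    intro z k hk
    rw [← mul_div_assoc, eq_div_iff (mul_pos (hP _) (hP _)).ne']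
    exact PP_coeff z hQ hQ1 (2 * N) k (2 * N - k) (by omega)
  have hmain : (PP 1 q (6 * N)).coeff (3 * N) =
      q ^ ((3 * N).choose 2) * (poc q q (6 * N) / (poc q q (3 * N) * poc q q (3 * N))) := by
    rw [← mul_div_assoc, eq_div_iff (mul_pos (hp _) (hp _)).ne']
    have := PP_coeff 1 h0 h1 (6 * N) (3 * N) (3 * N) (by omega)
    rw [one_pow, one_mul] at this
    exact this
  apply mul_left_cancel₀ hz
  rw [← hmain, show 6 * N = 3 * (2 * N) by ring, PP_three, coeff3]
  rw [tsum_eq_sum (s := (Finset.range (3 * N + 1) ×ˢ Finset.range (3 * N + 1)).image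
    (fun p : ℕ × ℕ => ((p.1 : ℤ) - N, (p.2 : ℤ) - N)))]
  · rw [Finset.sum_image (by
      rintro ⟨a, b⟩ _ ⟨c, d⟩ _ h
      simp only [Prod.mk.injEq] at h
      ext <;> simp only <;> omega), Finset.mul_sum]
    apply Finset.sum_congr rfl
    rintro ⟨i, j⟩ hij
    simp only [Finset.mem_product, Finset.mem_range] at hij ⊢
    by_cases hc : i ≤ 2 * N ∧ j ≤ 2 * N ∧ i + j ≤ 3 * N ∧ 3 * N - i - j ≤ 2 * N
    · obtain ⟨c1, c2, c3, c4⟩ := hc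
      rw [if_pos c3, wL, if_pos (by omega), hcf _ _ c1, hcf _ _ c2, hcf _ _ c4]
      have t1 : ((N : ℤ) + (i - N)).toNat = i := by omega
      have t2 : ((N : ℤ) - (i - N)).toNat = 2 * N - i := by omega
      have t3 : ((N : ℤ) + (j - N)).toNat = j := by omega
      have t4 : ((N : ℤ) - (j - N)).toNat = 2 * N - j := by omega
      obtain ⟨k, hk⟩ : ∃ k, 3 * N - i - j = k := ⟨_, rfl⟩
      have t5 : ((N : ℤ) + ((i - N) + (j - N))).toNat = 2 * N - k := by omega
      have t6 : ((N : ℤ) - ((i - N) + (j - N))).toNat = k := by omega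
      rw [t1, t2, t3, t4, t5, t6, hk]
      have hk' : (k : ℤ) = 3 * N - i - j := by omega
      have hexp : q ^ ((3 * N).choose 2) * q ^ (Qf ((i : ℤ) - N) (j - N)) =
          (1 ^ i * (q ^ 3) ^ i.choose 2) * ((q ^ j * (q ^ 3) ^ j.choose 2) * ((q ^ 2) ^ k * (q ^ 3) ^ k.choose 2)) := by
        rw [one_pow, one_mul]
        simp only [← pow_mul, ← pow_add]
        rw [← zpow_natCast q, ← zpow_natCast q, ← zpow_add₀ h0.ne']
        congr 1
        have c1 := choose_two_int (3 * N)
        have c2 := choose_two_int i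
        have c3 := choose_two_int j
        have c4 := choose_two_int k
        rw [hk'] at c4
        unfold Qf
        push_cast at c1 ⊢
        rw [hk']
        apply mul_left_cancel₀ (two_ne_zero (α := ℤ))
        linear_combination c1 - 3 * c2 - 3 * c3 - 3 * c4
      generalize q ^ (Qf ((i : ℤ) - N) (j - N)) = X1 at hexp ⊢
      rw [mul_left_comm, hexp]
      have p1 := (hP i).ne'
      have p2 := (hP j).ne'
      have p3 := (hP k).ne'
      have p4 := (hP (2 * N - i)).ne'
      have p5 := (hP (2 * N - j)).ne'
      have p6 := (hP (2 * N - k)).ne'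
      generalize poc (q ^ 3) (q ^ 3) i = A1 at *
      generalize poc (q ^ 3) (q ^ 3) j = A2 at *
      generalize poc (q ^ 3) (q ^ 3) k = A3 at *
      generalize poc (q ^ 3) (q ^ 3) (2 * N - i) = A4 at *
      generalize poc (q ^ 3) (q ^ 3) (2 * N - j) = A5 at *
      generalize poc (q ^ 3) (q ^ 3) (2 * N - k) = A6 at *
      generalize 1 ^ i * (q ^ 3) ^ i.choose 2 = B1
      generalize q ^ j * (q ^ 3) ^ j.choose 2 = B2
      generalize (q ^ 2) ^ k * (q ^ 3) ^ k.choose 2 = B3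
      field_simp
    · rw [wL, if_neg (by omega), zero_mul, mul_zero]
      split_ifs with c3
      · by_cases c1 : i ≤ 2 * N
        · by_cases c2 : j ≤ 2 * N
          · rw [PP_coeff_large (q ^ 2) _ _ _ (by omega)]; simp
          · rw [PP_coeff_large q _ _ _ (by omega)]; simp
        · rw [PP_coeff_large 1 _ _ _ (by omega)]; simp
      · rfl
  · rintro ⟨a, b⟩ hk
    simp only
    rw [wL, if_neg, zero_mul]
    intro h
    apply hk
    simp only [Finset.mem_image, Finset.mem_product, Finset.mem_range, Prod.mk.injEq, Prod.exists]
    exact ⟨(a + N).toNat, (b + N).toNat, by omega, by omega, by omega⟩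

lemma abs_summable {q : ℝ} (h0 : 0 < q) (h1 : q < 1) : Summable fun a : ℤ => q ^ a.natAbs := by
  have := summable_geometric_of_lt_one h0.le h1
  apply Summable.of_nat_of_neg
  · simpa using this
  · simpa using this

lemma Qf_lower (a b : ℤ) : (a.natAbs : ℤ) + b.natAbs - 3 ≤ Qf a b := by
  unfold Qf
  rw [Int.natCast_natAbs, Int.natCast_natAbs]
  rcases abs_cases a with ⟨h, _⟩ | ⟨h, _⟩ <;> rcases abs_cases b with ⟨h', _⟩ | ⟨h', _⟩ <;> rw [h, h'] <;>
    nlinarith [sq_nonneg (a + b), sq_nonneg (a - 1), sq_nonneg (b - 1), sq_nonneg (a + 1), sq_nonneg (b + 1)]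

lemma L_summable {q : ℝ} (h0 : 0 < q) (h1 : q < 1) : Summable fun x : ℤ × ℤ => q ^ (Qf x.1 x.2) := by
  have ha := abs_summable h0 h1
  have := (summable_mul_of_summable_norm ha.norm ha.norm).mul_left (q ^ (-3 : ℤ))
  refine Summable.of_nonneg_of_le (fun x => by positivity) ?_ this
  rintro ⟨a, b⟩
  simp only
  rw [← zpow_natCast, ← zpow_natCast, ← zpow_add₀ h0.ne', ← zpow_add₀ h0.ne']
  apply zpow_le_zpow_right_of_le_one₀ h0 h1.le
  have := Qf_lower a b
  omega

theorem L_prod {q : ℝ} (h0 : 0 < q) (h1 : q < 1) :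
    (∑' x : ℤ × ℤ, q ^ (Qf x.1 x.2)) * pocI q q = pocI (q ^ 3) (q ^ 3) ^ 3 := by
  have hQ : 0 < q ^ 3 := by positivity
  have hQ1 : q ^ 3 < 1 := pow_lt_one₀ h0.le h1 (by norm_num)
  have hE := pocI_pos hQ hQ1 hQ hQ1
  have he := pocI_pos h0 h1 h0 h1
  set E := pocI (q ^ 3) (q ^ 3) with hEdef
  have hT : Tendsto (poc (q ^ 3) (q ^ 3)) atTop (𝓝 E) := poc_tendsto hQ hQ1
  have hmulN : ∀ c : ℕ, 0 < c → Tendsto (fun N : ℕ => c * N) atTop atTop := fun c hc =>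
    tendsto_atTop_mono (fun n => Nat.le_mul_of_pos_left n hc) tendsto_id
  have hw : ∀ x : ℤ × ℤ, Tendsto (fun N => wL (q ^ 3) N x.1 x.2) atTop
      (𝓝 (E ^ 3 / ((E * E) * (E * E) * (E * E)))) := by
    rintro ⟨a, b⟩
    have tm : ∀ a : ℤ, Tendsto (fun N : ℕ => ((N : ℤ) - a).toNat) atTop atTop := by
      intro a
      have t1 := toNat_tendsto (-a)
      simpa only [← sub_eq_add_neg] using t1
    have hh : ∀ a : ℤ, Tendsto (fun N : ℕ => poc (q ^ 3) (q ^ 3) (N + a).toNat * poc (q ^ 3) (q ^ 3) (N - a).toNat)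
        atTop (𝓝 (E * E)) := fun a => (hT.comp (toNat_tendsto a)).mul (hT.comp (tm a))
    have := ((hT.comp (hmulN 2 (by norm_num))).pow 3).div (((hh a).mul (hh b)).mul (hh (a + b))) (by positivity)
    refine this.congr' ?_
    filter_upwards [eventually_ge_atTop (a.natAbs + b.natAbs)] with N hN
    rw [wL, if_pos (by omega)]
    rfl
  have hs := L_summable h0 h1
  have hlim : Tendsto (fun N : ℕ => ∑' x : ℤ × ℤ, wL (q ^ 3) N x.1 x.2 * q ^ (Qf x.1 x.2)) atTop
    (𝓝 (∑' x : ℤ × ℤ, (E ^ 3 / ((E * E) * (E * E) * (E * E))) * q ^ (Qf x.1 x.2))) := by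
    apply tendsto_tsum_of_dominated_convergence
      (bound := fun x : ℤ × ℤ => 1 / ((E * E) * (E * E) * (E * E)) * q ^ (Qf x.1 x.2)) (hs.mul_left _)
    · intro x
      exact (hw x).mul_const _
    · filter_upwards with N x
      rw [norm_mul, Real.norm_of_nonneg (show 0 ≤ q ^ (Qf x.1 x.2) by positivity)]
      refine mul_le_mul_of_nonneg_right ?_ (by positivity)
      unfold wL
      have hP : ∀ n, 0 < poc (q ^ 3) (q ^ 3) n := poc_pos hQ hQ1 hQ hQ1
      have hL : ∀ n, E ≤ poc (q ^ 3) (q ^ 3) n := pocI_le hQ hQ1 hQ hQ1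
      have hEE : ∀ m n, E * E ≤ poc (q ^ 3) (q ^ 3) m * poc (q ^ 3) (q ^ 3) n := fun m n =>
        mul_le_mul (hL m) (hL n) hE.le (hP m).le
      have hPP : ∀ m n, 0 < poc (q ^ 3) (q ^ 3) m * poc (q ^ 3) (q ^ 3) n := fun m n => mul_pos (hP m) (hP n)
      split_ifs
      · rw [Real.norm_of_nonneg (div_nonneg (pow_nonneg (hP _).le _)
          (mul_pos (mul_pos (hPP _ _) (hPP _ _)) (hPP _ _)).le)]
        apply div_le_div₀ (by norm_num) _ (by positivity)
        · apply mul_le_mul (mul_le_mul (hEE _ _) (hEE _ _) (by positivity) (hPP _ _).le) (hEE _ _) (by positivity)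
          exact (mul_pos (hPP _ _) (hPP _ _)).le
        · exact pow_le_one₀ (hP _).le (poc_le_one hQ hQ1 hQ hQ1 _)
      · rw [norm_zero]; positivity
  have hlim2 : Tendsto (fun N : ℕ => ∑' x : ℤ × ℤ, wL (q ^ 3) N x.1 x.2 * q ^ (Qf x.1 x.2)) atTop
      (𝓝 (pocI q q / (pocI q q * pocI q q))) := by
    simp only [finite_L h0 h1]
    have ht := poc_tendsto (z := q) h0 h1
    exact (ht.comp (hmulN 6 (by norm_num))).div ((ht.comp (hmulN 3 (by norm_num))).mul
      (ht.comp (hmulN 3 (by norm_num)))) (by positivity)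
  have := tendsto_nhds_unique hlim hlim2
  rw [tsum_mul_left] at this
  field_simp at this
  linarith

lemma pocI_three {q : ℝ} (h0 : 0 < q) (h1 : q < 1) :
    pocI q q = pocI q (q ^ 3) * pocI (q ^ 2) (q ^ 3) * pocI (q ^ 3) (q ^ 3) := by
  have hQ : 0 < q ^ 3 := by positivity
  have hQ1 : q ^ 3 < 1 := pow_lt_one₀ h0.le h1 (by norm_num)
  have a := (poc_tendsto (z := q) h0 h1).comp
    (tendsto_atTop_mono (fun n => by omega : ∀ n : ℕ, n ≤ 3 * n) tendsto_id)
  have b := ((poc_tendsto (z := q) hQ hQ1).mul (poc_tendsto (z := q ^ 2) hQ hQ1)).mul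
    (poc_tendsto (z := q ^ 3) hQ hQ1)
  refine tendsto_nhds_unique a (b.congr ?_)
  intro n
  exact (poc_three q n).symm

theorem L_eq_c {q : ℝ} (h0 : 0 < q) (h1 : q < 1) :
    ∑' x : ℤ × ℤ, q ^ (Qf x.1 x.2) = ∑' k, lam q 1 1 k := by
  have hQ : 0 < q ^ 3 := by positivity
  have hQ1 : q ^ 3 < 1 := pow_lt_one₀ h0.le h1 (by norm_num)
  have h2 : q ^ 2 < 1 := pow_lt_one₀ h0.le h1 (by norm_num)
  have a := L_prod h0 h1
  have b := c_prod h0 h1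
  have p1 := pocI_pos h0 h1 hQ hQ1
  have p2 := pocI_pos (by positivity) h2 hQ hQ1
  have p3 := pocI_pos hQ hQ1 hQ hQ1
  rw [pocI_three h0 h1] at a
  apply mul_right_cancel₀ (mul_pos (mul_pos p1 p2) p3).ne'
  rw [a]
  linear_combination (-pocI (q ^ 3) (q ^ 3)) * b
end B3P
end

section
namespace B3P

/-- beta numbers -/
def bet (μ : YoungDiagram) (i : ℕ) : ℤ := μ.rowLen i - i - 1

lemma bet_strictAnti (μ : YoungDiagram) : StrictAnti (bet μ) := by
  intro i j h
  have := μ.rowLen_anti i j h.le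
  unfold bet
  omega

lemma rowLen_zero (μ : YoungDiagram) {i : ℕ} (h : μ.colLen 0 ≤ i) : μ.rowLen i = 0 := by
  by_contra hne
  have : (i, 0) ∈ μ := YoungDiagram.mem_iff_lt_rowLen.2 (Nat.pos_of_ne_zero hne)
  have := YoungDiagram.mem_iff_lt_colLen.1 this
  omega

lemma bet_ne (μ : YoungDiagram) (i j : ℕ) : bet μ i ≠ j - μ.colLen j := by
  unfold bet
  by_cases h : (i, j) ∈ μ
  · have h1 := YoungDiagram.mem_iff_lt_rowLen.1 h
    have h2 := YoungDiagram.mem_iff_lt_colLen.1 h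
    omega
  · have h1 := mt YoungDiagram.mem_iff_lt_rowLen.2 h
    have h2 := mt YoungDiagram.mem_iff_lt_colLen.2 h
    omega

lemma bet_compl (μ : YoungDiagram) (v : ℤ) (hv : v ∉ Set.range (bet μ)) :
    ∃ j : ℕ, v = j - μ.colLen j := by
  classical
  have hex : ∃ i, bet μ i < v := by
    refine ⟨μ.colLen 0 + v.natAbs, ?_⟩
    have := rowLen_zero μ (i := μ.colLen 0 + v.natAbs) (by omega)
    unfold bet
    omega
  obtain ⟨i, hi⟩ : ∃ i, i = Nat.find hex := ⟨_, rfl⟩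
  have h1 : bet μ i < v := hi ▸ Nat.find_spec hex
  have h1' := h1
  unfold bet at h1
  refine ⟨(v + i).toNat, ?_⟩
  have hle : μ.colLen (v + i).toNat ≤ i := by
    by_contra hlt
    have : (i, (v + i).toNat) ∈ μ := YoungDiagram.mem_iff_lt_colLen.2 (by omega)
    have := YoungDiagram.mem_iff_lt_rowLen.1 this
    omega
  have hge : i ≤ μ.colLen (v + i).toNat := by
    rcases Nat.eq_zero_or_pos i with h0 | hpos
    · omega
    · have h2 : ¬ bet μ (i - 1) < v := Nat.find_min hex (by omega)
      have h3 : bet μ (i - 1) ≠ v := fun h => hv ⟨_, h⟩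
      unfold bet at h2 h3
      have : (i - 1, (v + i).toNat) ∈ μ := YoungDiagram.mem_iff_lt_rowLen.2 (by omega)
      have := YoungDiagram.mem_iff_lt_colLen.1 this
      omega
  omega

lemma core_iff (μ : YoungDiagram) :
    μ.IsThreeCore ↔ ∀ v ∈ Set.range (bet μ), v - 3 ∈ Set.range (bet μ) := by
  constructor
  · rintro h _ ⟨i, rfl⟩
    by_contra hn
    obtain ⟨j, hj⟩ := bet_compl μ _ hn
    have hm : (i, j) ∈ μ := by
      by_contra hm
      have h1 := mt YoungDiagram.mem_iff_lt_rowLen.2 hm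
      have h2 := mt YoungDiagram.mem_iff_lt_colLen.2 hm
      unfold bet at hj
      omega
    apply h (i, j) ((YoungDiagram.mem_cells _).2 hm)
    unfold bet at hj
    unfold YoungDiagram.hookLength
    simp only
    have : μ.rowLen i + μ.colLen j - i - j - 1 = 3 := by omega
    rw [this]
  · rintro h ⟨i, j⟩ hm ⟨m, hd⟩
    rw [YoungDiagram.mem_cells] at hm
    have h1 := YoungDiagram.mem_iff_lt_rowLen.1 hm
    have h2 := YoungDiagram.mem_iff_lt_colLen.1 hm
    unfold YoungDiagram.hookLength at hd
    simp only at hd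
    have key : ∀ m : ℕ, bet μ i - 3 * m ∈ Set.range (bet μ) := by
      intro m
      induction m with
      | zero => exact ⟨i, by simp⟩
      | succ m ih =>
        have := h _ ih
        push_cast
        rwa [show bet μ i - 3 * ((m : ℤ) + 1) = bet μ i - 3 * m - 3 by ring]
    obtain ⟨i', hi'⟩ := key m
    apply bet_ne μ i' j
    rw [hi']
    unfold bet
    omega

lemma card_eq_sum (μ : YoungDiagram) (m : ℕ) (hm : μ.colLen 0 ≤ m) :
    μ.card = ∑ i ∈ Finset.range m, μ.rowLen i := by
  unfold YoungDiagram.card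
  rw [Finset.card_eq_sum_card_fiberwise (f := Prod.fst) (t := Finset.range m)]
  · apply Finset.sum_congr rfl
    intro i _
    rw [YoungDiagram.rowLen_eq_card]
    rfl
  · rintro ⟨i, j⟩ h
    simp only [Finset.coe_range, Set.mem_Iio]
    by_contra hn
    have h1 := YoungDiagram.mem_iff_lt_rowLen.1 ((YoungDiagram.mem_cells _).1 h)
    rw [rowLen_zero μ (by omega)] at h1
    omega

lemma bet_inj {μ ν : YoungDiagram} (h : Set.range (bet μ) = Set.range (bet ν)) : μ = ν := by
  have e : (fun i => - bet μ i) = fun i => - bet ν i := by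
    have h1 : StrictMono fun i => - bet μ i := fun i j hij => neg_lt_neg (bet_strictAnti μ hij)
    have h2 : StrictMono fun i => - bet ν i := fun i j hij => neg_lt_neg (bet_strictAnti ν hij)
    apply (StrictMono.range_inj h1 h2).1
    have hh : ∀ ρ : YoungDiagram, (Set.range fun i => - bet ρ i) = Neg.neg '' Set.range (bet ρ) := by
      intro ρ; rw [← Set.range_comp]; rfl
    rw [hh, hh, h]
  ext ⟨i, j⟩
  rw [YoungDiagram.mem_cells, YoungDiagram.mem_cells, YoungDiagram.mem_iff_lt_rowLen, YoungDiagram.mem_iff_lt_rowLen]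
  have := congrFun e i
  simp only [bet] at this
  omega

/-- abacus set -/
def SA (A : ℕ → ℤ) : Set ℤ := {v | v / 3 < A (v % 3).toNat}

lemma W_sum (A : ℕ → ℤ) (M : ℤ) (W : Finset ℤ) (hW : ∀ v, v ∈ W ↔ -(3 * M) ≤ v ∧ v ∈ SA A) (f : ℤ → ℤ) :
    ∑ v ∈ W, f v = ∑ r ∈ Finset.range 3, ∑ u ∈ Finset.Ico (-M) (A r), f (3 * u + r) := by
  rw [Finset.sum_sigma']
  symm
  apply Finset.sum_bij (fun (x : (_ : ℕ) × ℤ) _ => 3 * x.2 + (x.1 : ℤ))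
  · rintro ⟨r, u⟩ h
    simp only [Finset.mem_sigma, Finset.mem_range, Finset.mem_Ico] at h
    rw [hW]
    refine ⟨by simp only; omega, ?_⟩
    unfold SA
    simp only [Set.mem_ofPred_eq]
    have e1 : (3 * u + (r : ℤ)) / 3 = u := by omega
    have e2 : ((3 * u + (r : ℤ)) % 3).toNat = r := by omega
    rw [e1, e2]
    exact h.2.2
  · rintro ⟨r, u⟩ h ⟨r', u'⟩ h' he
    simp only [Finset.mem_sigma, Finset.mem_range, Finset.mem_Ico] at h h' he
    obtain rfl : r = r' := by omega
    obtain rfl : u = u' := by omega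
    rfl
  · intro v hv
    rw [hW] at hv
    refine ⟨⟨(v % 3).toNat, v / 3⟩, ?_, ?_⟩
    · simp only [Finset.mem_sigma, Finset.mem_range, Finset.mem_Ico]
      exact ⟨by omega, by omega, hv.2⟩
    · simp only; omega
  · rintro ⟨r, u⟩ _
    rfl

lemma Ico_sum (M a : ℤ) (h : -M ≤ a) : 2 * ∑ u ∈ Finset.Ico (-M) a, u = a * (a - 1) - M * (M + 1) := by
  induction a, h using Int.leInduction with
  | base => simp; ring
  | succ n hn ih =>
    have : Finset.Ico (-M) (n + 1) = insert n (Finset.Ico (-M) n) := by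
      ext x; simp only [Finset.mem_Ico, Finset.mem_insert]; omega
    rw [this, Finset.sum_insert (by simp), mul_add, ih]
    ring

lemma W_card (A : ℕ → ℤ) (M : ℤ) (W : Finset ℤ) (hW : ∀ v, v ∈ W ↔ -(3 * M) ≤ v ∧ v ∈ SA A)
    (hM : ∀ r < 3, -M ≤ A r) : (W.card : ℤ) = A 0 + A 1 + A 2 + 3 * M := by
  have h := W_sum A M W hW (fun _ => 1)
  simp only [Finset.sum_const, Finset.sum_range_succ, Finset.sum_range_zero, Int.card_Ico, smul_eq_mul,
    nsmul_eq_mul, mul_one] at h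
  have h0 := hM 0 (by norm_num)
  have h1 := hM 1 (by norm_num)
  have h2 := hM 2 (by norm_num)
  rw [h]
  omega

lemma W_id (A : ℕ → ℤ) (M : ℤ) (W : Finset ℤ) (hW : ∀ v, v ∈ W ↔ -(3 * M) ≤ v ∧ v ∈ SA A)
    (hM : ∀ r < 3, -M ≤ A r) : 2 * ∑ v ∈ W, v =
    3 * (A 0 * (A 0 - 1) + A 1 * (A 1 - 1) + A 2 * (A 2 - 1)) - 9 * M * (M + 1) + 2 * (A 1 + M) + 4 * (A 2 + M) := by
  have h := W_sum A M W hW (fun v => v)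
  have h0 := Ico_sum M _ (hM 0 (by norm_num))
  have h1 := Ico_sum M _ (hM 1 (by norm_num))
  have h2 := Ico_sum M _ (hM 2 (by norm_num))
  simp only [Finset.sum_add_distrib, ← Finset.mul_sum, Finset.sum_const, Finset.sum_range_succ, Finset.sum_range_zero,
    Int.card_Ico, nsmul_eq_mul] at h
  have e1 : (((A 1 - -M).toNat : ℕ) : ℤ) = A 1 + M := by have := hM 1 (by norm_num); omega
  have e2 : (((A 2 - -M).toNat : ℕ) : ℤ) = A 2 + M := by have := hM 2 (by norm_num); omega
  rw [h, e1, e2, ← Finset.mul_sum, ← Finset.mul_sum, ← Finset.mul_sum]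
  push_cast
  linear_combination 3 * h0 + 3 * h1 + 3 * h2

lemma gauss (m : ℕ) : 2 * ∑ i ∈ Finset.range m, ((i : ℤ) + 1) = m * (m + 1) := by
  induction m with
  | zero => simp
  | succ m ih => rw [Finset.sum_range_succ, mul_add, ih]; push_cast; ring

lemma core_card (μ : YoungDiagram) (A : ℕ → ℤ) (h : Set.range (bet μ) = SA A) :
    A 0 + A 1 + A 2 = 0 ∧ 2 * (μ.card : ℤ) = 3 * (A 0 ^ 2 + A 1 ^ 2 + A 2 ^ 2) + 2 * A 1 + 4 * A 2 := by
  classical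
  obtain ⟨M, hM⟩ : ∃ M : ℕ, M = μ.colLen 0 + (A 0).natAbs + (A 1).natAbs + (A 2).natAbs := ⟨_, rfl⟩
  have hinj : Function.Injective (bet μ) := (bet_strictAnti μ).injective
  obtain ⟨W, hWd⟩ : ∃ W, W = (Finset.range (3 * M)).image (bet μ) := ⟨_, rfl⟩
  have hW : ∀ v, v ∈ W ↔ -(3 * (M : ℤ)) ≤ v ∧ v ∈ SA A := by
    intro v
    rw [hWd, ← h]
    simp only [Finset.mem_image, Finset.mem_range, Set.mem_range]
    constructor
    · rintro ⟨i, hi, rfl⟩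
      exact ⟨by unfold bet; omega, i, rfl⟩
    · rintro ⟨hv, i, rfl⟩
      refine ⟨i, ?_, rfl⟩
      by_contra hn
      have := rowLen_zero μ (i := i) (by omega)
      unfold bet at hv
      omega
  have hMA : ∀ r < 3, -(M : ℤ) ≤ A r := by
    intro r hr
    interval_cases r <;> omega
  have c1 := W_card A M W hW hMA
  have c2 := W_id A M W hW hMA
  have c3 : W.card = 3 * M := by
    rw [hWd, Finset.card_image_of_injective _ hinj, Finset.card_range]
  have c4 : ∑ v ∈ W, v = ∑ i ∈ Finset.range (3 * M), bet μ i := by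
    rw [hWd, Finset.sum_image (fun a _ b _ hab => hinj hab)]
  have c5 : (μ.card : ℤ) = ∑ i ∈ Finset.range (3 * M), bet μ i + ∑ i ∈ Finset.range (3 * M), ((i : ℤ) + 1) := by
    rw [card_eq_sum μ (3 * M) (by omega), ← Finset.sum_add_distrib]
    push_cast
    apply Finset.sum_congr rfl
    intro i _
    unfold bet
    ring
  have c6 := gauss (3 * M)
  rw [c3] at c1
  push_cast at c1 c6
  have hz : A 0 + A 1 + A 2 = 0 := by linarith
  refine ⟨hz, ?_⟩
  rw [c5, mul_add, c6, ← c4, c2]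
  linear_combination (-3) * hz

/-- charge vector -/
def AA (a b : ℤ) (r : ℕ) : ℤ := if r = 0 then a else if r = 1 then b else -a - b

lemma AA0 (a b : ℤ) : AA a b 0 = a := rfl
lemma AA1 (a b : ℤ) : AA a b 1 = b := rfl
lemma AA2 (a b : ℤ) : AA a b 2 = -a - b := rfl

lemma SA_congr {A B : ℕ → ℤ} (h : ∀ r < 3, A r = B r) : SA A = SA B := by
  ext v
  unfold SA
  simp only [Set.mem_ofPred_eq]
  rw [h _ (by omega)]

lemma SA_inj {A B : ℕ → ℤ} (h : SA A = SA B) (r : ℕ) (hr : r < 3) : A r = B r := by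
  have key : ∀ A : ℕ → ℤ, ∀ u : ℤ, (3 * u + r) ∈ SA A ↔ u < A r := by
    intro A u
    unfold SA
    simp only [Set.mem_ofPred_eq]
    have e1 : (3 * u + (r : ℤ)) / 3 = u := by omega
    have e2 : ((3 * u + (r : ℤ)) % 3).toNat = r := by omega
    rw [e1, e2]
  have h1 := key A (A r)
  have h2 := key A (B r)
  rw [h, key B] at h1 h2
  omega

lemma core_exists (μ : YoungDiagram) (hμ : μ.IsThreeCore) :
    ∃ x : ℤ × ℤ, Set.range (bet μ) = SA (AA x.1 x.2) ∧ (μ.card : ℤ) = Qf x.1 x.2 := by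
  rw [core_iff] at hμ
  have hex : ∀ r : ℕ, ∃ a : ℤ, r < 3 → ∀ u : ℤ, (3 * u + r) ∈ Set.range (bet μ) ↔ u < a := by
    intro r
    by_cases hr : r < 3
    swap
    · exact ⟨0, fun h => absurd h hr⟩
    have hdown : ∀ u : ℤ, ∀ k : ℕ, 3 * u + r ∈ Set.range (bet μ) → 3 * (u - k) + r ∈ Set.range (bet μ) := by
      intro u k hu
      induction k with
      | zero => simpa using hu
      | succ k ih =>
        have := hμ _ ih
        push_cast
        rwa [show 3 * (u - ((k : ℤ) + 1)) + r = 3 * (u - k) + r - 3 by ring]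
    have hbdd : ∀ u : ℤ, 3 * u + r ∈ Set.range (bet μ) → u ≤ μ.rowLen 0 := by
      rintro u ⟨i, hi⟩
      have := μ.rowLen_anti 0 i (by omega)
      unfold bet at hi
      omega
    have hne : 3 * (-(μ.colLen 0 : ℤ) - 1) + r ∈ Set.range (bet μ) := by
      refine ⟨3 * μ.colLen 0 + 2 - r, ?_⟩
      have := rowLen_zero μ (i := 3 * μ.colLen 0 + 2 - r) (by omega)
      unfold bet
      omega
    obtain ⟨ub, h1, h2⟩ := Int.exists_greatest_of_bdd (P := fun u => 3 * u + r ∈ Set.range (bet μ))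
      ⟨_, hbdd⟩ ⟨_, hne⟩
    refine ⟨ub + 1, fun _ u => ⟨fun h => ?_, fun h => ?_⟩⟩
    · have := h2 u h
      omega
    · have := hdown ub (ub - u).toNat h1
      rwa [show ub - (((ub - u).toNat : ℕ) : ℤ) = u by omega] at this
  choose A hA using hex
  have hS : Set.range (bet μ) = SA A := by
    ext v
    unfold SA
    simp only [Set.mem_ofPred_eq]
    rw [← hA (v % 3).toNat (by omega)]
    rw [show 3 * (v / 3) + (((v % 3).toNat : ℕ) : ℤ) = v by omega]
  obtain ⟨c1, c2⟩ := core_card μ A hS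
  refine ⟨(A 0, A 1), ?_, ?_⟩
  · rw [hS]
    apply SA_congr
    intro r hr
    interval_cases r
    · rfl
    · rfl
    · simp only [AA2]; omega
  · simp only [Qf]
    have h2 : A 2 = -A 0 - A 1 := by omega
    rw [h2] at c2
    apply mul_left_cancel₀ (two_ne_zero (α := ℤ))
    rw [c2]
    ring
end B3P
end

section
namespace B3P

lemma core_surj (a b : ℤ) : ∃ μ : YoungDiagram, Set.range (bet μ) = SA (AA a b) := by
  classical
  obtain ⟨K, hK⟩ : ∃ K : ℕ, K = a.natAbs + b.natAbs := ⟨_, rfl⟩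
  have hub : ∀ r : ℕ, -(K : ℤ) ≤ AA a b r ∧ AA a b r ≤ K := by
    intro r
    unfold AA
    split_ifs <;> omega
  have htop : ∀ v ∈ SA (AA a b), v < 3 * K := by
    intro v hv
    have h1 : v / 3 < AA a b (v % 3).toNat := hv
    have h2 := (hub (v % 3).toNat).2
    omega
  have hbot : ∀ v : ℤ, v < -(3 * K) → v ∈ SA (AA a b) := by
    intro v hv
    have h2 := (hub (v % 3).toNat).1
    change v / 3 < AA a b (v % 3).toNat
    omega
  let p : ℕ → Prop := fun n => (3 * K - n : ℤ) ∈ SA (AA a b)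
  have hinf : (Set.ofPred p).Infinite := by
    apply Set.infinite_of_forall_exists_gt
    intro n
    refine ⟨n + 6 * K + 1, ?_, by omega⟩
    apply hbot
    push_cast
    omega
  let s : ℕ → ℤ := fun i => 3 * K - (Nat.nth p i : ℤ)
  have hs : StrictAnti s := by
    intro i j hij
    have := Nat.nth_strictMono hinf hij
    simp only [s]
    omega
  have hrange : Set.range s = SA (AA a b) := by
    ext v
    constructor
    · rintro ⟨i, rfl⟩
      exact Nat.nth_mem_of_infinite hinf i
    · intro hv
      have h1 := htop v hv
      have h2 : (3 * K - v).toNat ∈ Set.ofPred p := by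
        change (3 * K - ((3 * K - v).toNat : ℕ) : ℤ) ∈ SA (AA a b)
        rwa [show (3 * K - ((3 * K - v).toNat : ℕ) : ℤ) = v by omega]
      rw [← Nat.range_nth_of_infinite hinf] at h2
      obtain ⟨i, hi⟩ := h2
      refine ⟨i, ?_⟩
      simp only [s]
      omega
  have hfix : ∀ M : ℕ, K ≤ M → s (3 * M) = -(3 * M) - 1 := by
    intro M hM
    have hp : p (3 * K + 3 * M + 1) := by
      apply hbot
      push_cast
      omega
    have hc : Nat.count p (3 * K + 3 * M + 1) = 3 * M := by
      rw [Nat.count_eq_card_filter_range]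
      rw [← Finset.card_image_of_injective (f := fun k : ℕ => (3 * K - k : ℤ)) _
        (by intro x y hxy; simp only at hxy; omega)]
      have := W_card (AA a b) M (((Finset.range (3 * K + 3 * M + 1)).filter p).image fun k : ℕ => (3 * K - k : ℤ))
        (by
          intro v
          simp only [Finset.mem_image, Finset.mem_filter, Finset.mem_range]
          constructor
          · rintro ⟨k, ⟨hk, hpk⟩, rfl⟩
            exact ⟨by omega, hpk⟩
          · rintro ⟨h1, h2⟩
            have h3 := htop v h2
            have e : (3 * K - ((3 * K - v).toNat : ℕ) : ℤ) = v := by omega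
            refine ⟨(3 * K - v).toNat, ⟨by omega, ?_⟩, e⟩
            change (3 * K - ((3 * K - v).toNat : ℕ) : ℤ) ∈ SA (AA a b)
            rwa [e])
        (by intro r _; have := (hub r).1; omega)
      rw [AA0, AA1, AA2] at this
      refine Int.natCast_inj.1 (Eq.trans ?_ (this.trans ?_))
      · congr!
      · push_cast; ring
    have := Nat.nth_count hp
    rw [hc] at this
    simp only [s]
    rw [this]
    push_cast
    ring
  have hanti : ∀ i j : ℕ, i ≤ j → s j + j ≤ s i + i := by
    intro i j hij
    induction j, hij using Nat.le_induction with
    | base => exact le_rfl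
    | succ n hn ih =>
      have := hs (Nat.lt_succ_self n)
      push_cast
      simp only [Nat.succ_eq_add_one] at this
      omega
  have hzero : ∀ i : ℕ, 3 * K ≤ i → s i + i + 1 = 0 := by
    intro i hi
    have h1 := hfix i (by omega)
    have h2 := hfix K le_rfl
    have h3 := hanti _ _ hi
    have h4 := hanti i (3 * i) (by omega)
    push_cast at h3 h4
    omega
  have hnn : ∀ i : ℕ, 0 ≤ s i + i + 1 := by
    intro i
    have h1 := hzero (3 * K + i) (by omega)
    have h2 := hanti i (3 * K + i) (by omega)
    omega
  let r : ℕ → ℕ := fun i => (s i + i + 1).toNat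
  have hr : ∀ i j, i ≤ j → r j ≤ r i := by
    intro i j hij
    have := hanti i j hij
    simp only [r]
    omega
  let μ : YoungDiagram :=
    { cells := (Finset.range (3 * K) ×ˢ Finset.range (r 0)).filter fun c => c.2 < r c.1
      isLowerSet := by
        rintro ⟨i, j⟩ ⟨i', j'⟩ hle h
        simp only [Finset.coe_filter, Finset.mem_product, Finset.mem_range, Set.mem_ofPred_eq] at h ⊢
        obtain ⟨h1, h2⟩ := hle
        simp only at h1 h2
        have := hr _ _ h1
        omega }
  have hmem : ∀ i j, (i, j) ∈ μ ↔ j < r i := by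
    intro i j
    rw [← YoungDiagram.mem_cells]
    simp only [μ, Finset.mem_filter, Finset.mem_product, Finset.mem_range]
    constructor
    · exact fun h => h.2
    · intro h
      have h1 := hr 0 i (by omega)
      refine ⟨⟨?_, by omega⟩, h⟩
      by_contra hn
      have := hzero i (by omega)
      simp only [r] at h
      omega
  have hrow : ∀ i, μ.rowLen i = r i := by
    intro i
    have h1 := hmem i (μ.rowLen i)
    have h2 := hmem i (r i)
    rw [YoungDiagram.mem_iff_lt_rowLen] at h1 h2
    omega
  refine ⟨μ, ?_⟩
  rw [← hrange]
  congr 1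
  funext i
  have := hnn i
  unfold bet
  rw [hrow]
  simp only [r]
  omega

theorem core_equiv : ∃ e : {μ : YoungDiagram // μ.IsThreeCore} ≃ ℤ × ℤ,
    ∀ μ, (μ.1.card : ℤ) = Qf (e μ).1 (e μ).2 := by
  choose φ h1 h2 using fun μ : {μ : YoungDiagram // μ.IsThreeCore} => core_exists μ.1 μ.2
  refine ⟨Equiv.ofBijective φ ⟨?_, ?_⟩, h2⟩
  · intro μ ν h
    apply Subtype.ext
    apply bet_inj
    rw [h1 μ, h1 ν, h]
  · rintro ⟨a, b⟩
    obtain ⟨μ, hμ⟩ := core_surj a b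
    have hc : μ.IsThreeCore := by
      rw [core_iff, hμ]
      intro v hv
      have h3 : v / 3 < AA a b (v % 3).toNat := hv
      change (v - 3) / 3 < AA a b ((v - 3) % 3).toNat
      rw [show (v - 3) % 3 = v % 3 by omega]
      omega
    refine ⟨⟨μ, hc⟩, ?_⟩
    have h4 := h1 ⟨μ, hc⟩
    simp only at h4
    rw [hμ] at h4
    have e0 := SA_inj h4 0 (by norm_num)
    have e1 := SA_inj h4 1 (by norm_num)
    rw [AA0, AA0] at e0
    rw [AA1, AA1] at e1
    exact (Prod.ext e0 e1).symm

/-- triples of cores, by total size -/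
theorem B3_series {q : ℝ} (h0 : 0 < q) (h1 : q < 1) :
    (Summable fun n => (B3 n : ℝ) * q ^ n) ∧
    ∑' n, (B3 n : ℝ) * q ^ n = (∑' x : ℤ × ℤ, q ^ (Qf x.1 x.2)) ^ 3 := by
  obtain ⟨e, he⟩ := core_equiv
  let T := {μ : YoungDiagram // μ.IsThreeCore}
  let f : T → ℝ := fun μ => q ^ μ.1.card
  have hfe : f = (fun x : ℤ × ℤ => q ^ (Qf x.1 x.2)) ∘ e := by
    funext μ
    simp only [f, Function.comp]
    rw [← he, zpow_natCast]
  have hf : Summable f := by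
    rw [hfe]
    exact (L_summable h0 h1).comp_injective e.injective
  have hft : ∑' μ, f μ = ∑' x : ℤ × ℤ, q ^ (Qf x.1 x.2) := by
    rw [hfe]
    exact e.tsum_eq (fun x : ℤ × ℤ => q ^ (Qf x.1 x.2))
  have hf2 : Summable fun x : T × T => f x.1 * f x.2 := summable_mul_of_summable_norm hf.norm hf.norm
  have hf3 : Summable fun x : T × T × T => f x.1 * (f x.2.1 * f x.2.2) :=
    summable_mul_of_summable_norm (f := f) (g := fun x : T × T => f x.1 * f x.2) hf.norm hf2.norm
  have hcube : (∑' μ, f μ) ^ 3 = ∑' x : T × T × T, f x.1 * (f x.2.1 * f x.2.2) := by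
    rw [pow_succ', pow_two, tsum_mul_tsum_of_summable_norm hf.norm hf.norm,
      tsum_mul_tsum_of_summable_norm (f := f) (g := fun x : T × T => f x.1 * f x.2) hf.norm hf2.norm]
  obtain ⟨g1, g2⟩ := tsum_fiber (fun x : T × T × T => x.1.1.card + x.2.1.1.card + x.2.2.1.card) _ hf3
  have hfib : ∀ n, ∑' x : {x : T × T × T // x.1.1.card + x.2.1.1.card + x.2.2.1.card = n},
      f x.1.1 * (f x.1.2.1 * f x.1.2.2) = (B3 n : ℝ) * q ^ n := by
    intro n
    have hcst : ∀ x : {x : T × T × T // x.1.1.card + x.2.1.1.card + x.2.2.1.card = n},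
        f x.1.1 * (f x.1.2.1 * f x.1.2.2) = q ^ n := by
      rintro ⟨⟨x, y, z⟩, hx⟩
      simp only at hx
      simp only [f]
      rw [← hx, pow_add, pow_add]
      ring
    simp only [hcst]
    rw [tsum_const, nsmul_eq_mul]
    congr 2
    unfold B3
    apply Nat.card_congr
    exact
      { toFun := fun x => ⟨(x.1.1.1, x.1.2.1.1, x.1.2.2.1), x.2, x.1.1.2, x.1.2.1.2, x.1.2.2.2⟩
        invFun := fun p => ⟨(⟨p.1.1, p.2.2.1⟩, ⟨p.1.2.1, p.2.2.2.1⟩, ⟨p.1.2.2, p.2.2.2.2⟩), p.2.1⟩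
        left_inv := fun _ => rfl
        right_inv := fun _ => rfl }
  simp only [hfib] at g1 g2
  exact ⟨g1, by rw [← g2, ← hcube, hft]⟩

theorem B3_eq (n : ℕ) : (B3 n : ℤ) = tt (n + 1) := by
  let d : ℕ → ℝ := fun n => (if n = 0 then 0 else (B3 (n - 1) : ℝ)) - tt n
  have hs : ∀ q : ℝ, 0 < q → q < 1 → (Summable fun n => (if n = 0 then 0 else (B3 (n - 1) : ℝ)) * q ^ n) ∧
      ∑' n, (if n = 0 then 0 else (B3 (n - 1) : ℝ)) * q ^ n = q * ∑' n, (B3 n : ℝ) * q ^ n := by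
    intro q h0 h1
    have h2 := (B3_series h0 h1).1
    have h3 : Summable fun n => (if n = 0 then 0 else (B3 (n - 1) : ℝ)) * q ^ n := by
      rw [← summable_nat_add_iff 1]
      refine (h2.mul_left q).congr ?_
      intro n
      simp [pow_succ]
      ring
    refine ⟨h3, ?_⟩
    rw [h3.tsum_eq_zero_add, ← tsum_mul_left]
    simp only [if_true, zero_mul, zero_add]
    apply tsum_congr
    intro n
    simp [pow_succ]
    ring
  have := coeff_unique d (by
      intro q h0 h1
      refine ((hs q h0 h1).1.sub (lam_div h0 h1).1).congr ?_
      intro n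
      simp only [d]
      ring) (by
      intro q h0 h1
      have : ∀ n, d n * q ^ n = (if n = 0 then 0 else (B3 (n - 1) : ℝ)) * q ^ n - (tt n : ℝ) * q ^ n := by
        intro n; simp only [d]; ring
      simp only [this]
      rw [(hs q h0 h1).1.tsum_sub (lam_div h0 h1).1, (hs q h0 h1).2, (B3_series h0 h1).2, L_eq_c h0 h1,
        lam_cube h0 h1, (lam_div h0 h1).2, sub_self]) (n + 1)
  simp only [d] at this
  rw [if_neg (by omega), Nat.add_sub_cancel, sub_eq_zero] at this
  exact_mod_cast this
end B3P
end

section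
namespace B3P

lemma chi_mul (m n : ℕ) : chi (m * n) = chi m * chi n := by
  unfold chi
  have hm : m % 3 < 3 := Nat.mod_lt _ (by norm_num)
  have hn : n % 3 < 3 := Nat.mod_lt _ (by norm_num)
  rw [Nat.mul_mod]
  generalize m % 3 = a at *
  generalize n % 3 = b at *
  interval_cases a <;> interval_cases b <;> simp

/-- chi as an arithmetic function -/
def chiA : ArithmeticFunction ℤ := ⟨chi, by simp [chi]⟩

/-- square as an arithmetic function -/
def sqA : ArithmeticFunction ℤ := ⟨fun n => (n : ℤ) ^ 2, by simp⟩

lemma tt_eq (n : ℕ) : tt n = (chiA * sqA) n := by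
  rw [ArithmeticFunction.mul_apply]; rfl

lemma tt_mult : (chiA * sqA).IsMultiplicative := by
  apply ArithmeticFunction.IsMultiplicative.mul
  · refine ⟨by simp [chiA, chi], ?_⟩
    intro m n _
    exact chi_mul m n
  · refine ⟨by simp [sqA], ?_⟩
    intro m n _
    simp [sqA, mul_pow]

lemma tt_mul {m n : ℕ} (h : m.Coprime n) : tt (m * n) = tt m * tt n := by
  rw [tt_eq, tt_eq, tt_eq]
  exact tt_mult.map_mul_of_coprime h

lemma tt_prod {s : ℕ} (g : Fin s → ℕ) (h : ∀ i j, i ≠ j → (g i).Coprime (g j)) :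
    tt (∏ i, g i) = ∏ i, tt (g i) := by
  simp only [tt_eq]
  apply tt_mult.map_prod
  intro i _ j _ hij
  exact h i j hij

lemma chi_pow (p k : ℕ) : chi (p ^ k) = chi p ^ k := by
  induction k with
  | zero => simp [chi]
  | succ k ih => rw [pow_succ, chi_mul, ih, pow_succ]

lemma tt_pp {p : ℕ} (hp : p.Prime) (k : ℕ) :
    tt (p ^ k) = ∑ i ∈ Finset.range (k + 1), chi p ^ i * (p : ℤ) ^ (2 * (k - i)) := by
  unfold tt
  rw [Nat.sum_divisorsAntidiagonal (fun x y => chi x * (y : ℤ) ^ 2), Nat.sum_divisors_prime_pow hp]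
  apply Finset.sum_congr rfl
  intro i hi
  rw [Finset.mem_range] at hi
  rw [Nat.pow_div (by omega) hp.pos, chi_pow]
  push_cast
  rw [← pow_mul, mul_comm 2]

lemma tt_pp_succ {p : ℕ} (hp : p.Prime) (k : ℕ) :
    tt (p ^ (k + 1)) = (p : ℤ) ^ 2 * tt (p ^ k) + chi p ^ (k + 1) := by
  rw [tt_pp hp, tt_pp hp, Finset.sum_range_succ, Finset.mul_sum]
  congr 1
  · apply Finset.sum_congr rfl
    intro i hi
    rw [Finset.mem_range] at hi
    rw [show 2 * (k + 1 - i) = 2 * (k - i) + 2 by omega, pow_add]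
    ring
  · simp

lemma tt_one : tt 1 = 1 := by
  rw [tt_eq]; exact tt_mult.map_one

lemma tt_three (a : ℕ) : tt (3 ^ a) = 3 ^ (2 * a) := by
  induction a with
  | zero => simpa using tt_one
  | succ k ih =>
    rw [tt_pp_succ Nat.prime_three, ih]
    have : chi 3 = 0 := by simp [chi]
    rw [this, pow_succ 0]
    push_cast
    ring

lemma tt_p {p : ℕ} (hp : p.Prime) (h3 : p % 3 = 1) (k : ℕ) :
    tt (p ^ k) * ((p : ℤ) ^ 2 - 1) = (p : ℤ) ^ (2 * (k + 1)) - 1 := by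
  induction k with
  | zero => rw [pow_zero, tt_one]; ring
  | succ k ih =>
    rw [tt_pp_succ hp]
    have : chi p = 1 := by simp [chi, h3]
    rw [this, one_pow]
    linear_combination (p : ℤ) ^ 2 * ih

lemma tt_q {p : ℕ} (hp : p.Prime) (h3 : p % 3 = 2) (k : ℕ) :
    tt (p ^ k) * ((p : ℤ) ^ 2 + 1) = (p : ℤ) ^ (2 * k + 2) + (-1) ^ k := by
  induction k with
  | zero => rw [pow_zero, tt_one]; ring
  | succ k ih =>
    rw [tt_pp_succ hp]
    have : chi p = -1 := by simp [chi, h3]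
    rw [this]
    rw [show 2 * (k + 1) + 2 = 2 * k + 2 + 2 by ring, pow_add _ _ 2, pow_succ (-1 : ℤ) k]
    linear_combination (p : ℤ) ^ 2 * ih
end B3P
end

/-- If n+1 = 3^a · ∏ pᵢ^{aᵢ} · ∏ qⱼ^{bⱼ} is the prime factorization of n+1 with
pᵢ ≡ 1 (mod 3) and qⱼ ≡ 2 (mod 3), then
B₃(n)·∏(pᵢ²−1)·∏(qⱼ²+1) = 3^{2a}·∏(pᵢ^{2(aᵢ+1)}−1)·∏(qⱼ^{2bⱼ+2}+(−1)^{bⱼ}). -/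
theorem B3_explicit (n a s t : ℕ) (p : Fin s → ℕ) (pa : Fin s → ℕ)
    (q : Fin t → ℕ) (qb : Fin t → ℕ)
    (hp : ∀ i, (p i).Prime) (hp3 : ∀ i, p i % 3 = 1) (hpinj : Function.Injective p)
    (hpa : ∀ i, 1 ≤ pa i)
    (hq : ∀ j, (q j).Prime) (hq3 : ∀ j, q j % 3 = 2) (hqinj : Function.Injective q)
    (hqb : ∀ j, 1 ≤ qb j)
    (hfac : n + 1 = 3 ^ a * (∏ i, p i ^ pa i) * ∏ j, q j ^ qb j) :
    (B3 n : ℤ) * (∏ i, ((p i : ℤ) ^ 2 - 1)) * (∏ j, ((q j : ℤ) ^ 2 + 1)) =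
      3 ^ (2 * a) * (∏ i, ((p i : ℤ) ^ (2 * (pa i + 1)) - 1)) *
        ∏ j, ((q j : ℤ) ^ (2 * qb j + 2) + (-1) ^ qb j) := by
  have hcop : ∀ i j, (p i).Coprime (q j) := by
    intro i j
    rw [Nat.coprime_primes (hp i) (hq j)]
    intro h
    have h1 := hp3 i
    have h2 := hq3 j
    rw [h] at h1
    omega
  have h3p : ∀ i, Nat.Coprime 3 (p i) := by
    intro i
    rw [Nat.coprime_primes Nat.prime_three (hp i)]
    intro h
    have h1 := hp3 i
    omega
  have h3q : ∀ j, Nat.Coprime 3 (q j) := by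
    intro j
    rw [Nat.coprime_primes Nat.prime_three (hq j)]
    intro h
    have h1 := hq3 j
    omega
  have c1 : Nat.Coprime (3 ^ a) (∏ i, p i ^ pa i) :=
    Nat.Coprime.prod_right fun i _ => Nat.Coprime.pow _ _ (h3p i)
  have c2 : Nat.Coprime (3 ^ a * ∏ i, p i ^ pa i) (∏ j, q j ^ qb j) := by
    apply Nat.Coprime.prod_right
    intro j _
    apply Nat.Coprime.mul_left
    · exact Nat.Coprime.pow _ _ (h3q j)
    · exact Nat.Coprime.prod_left fun i _ => Nat.Coprime.pow _ _ (hcop i j)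
  have key : (B3 n : ℤ) = 3 ^ (2 * a) * (∏ i, B3P.tt (p i ^ pa i)) * ∏ j, B3P.tt (q j ^ qb j) := by
    rw [B3P.B3_eq, hfac, B3P.tt_mul c2, B3P.tt_mul c1, B3P.tt_three, B3P.tt_prod, B3P.tt_prod]
    · intro i j hij
      exact Nat.Coprime.pow _ _ ((Nat.coprime_primes (hq i) (hq j)).2 fun h => hij (hqinj h))
    · intro i j hij
      exact Nat.Coprime.pow _ _ ((Nat.coprime_primes (hp i) (hp j)).2 fun h => hij (hpinj h))
  have e1 : ∏ i, ((p i : ℤ) ^ (2 * (pa i + 1)) - 1) =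
      (∏ i, B3P.tt (p i ^ pa i)) * ∏ i, ((p i : ℤ) ^ 2 - 1) := by
    rw [← Finset.prod_mul_distrib]
    exact Finset.prod_congr rfl fun i _ => (B3P.tt_p (hp i) (hp3 i) (pa i)).symm
  have e2 : ∏ j, ((q j : ℤ) ^ (2 * qb j + 2) + (-1) ^ qb j) =
      (∏ j, B3P.tt (q j ^ qb j)) * ∏ j, ((q j : ℤ) ^ 2 + 1) := by
    rw [← Finset.prod_mul_distrib]
    exact Finset.prod_congr rfl fun j _ => (B3P.tt_q (hq j) (hq3 j) (qb j)).symm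
  rw [key, e1, e2]
  ring
end
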